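/- arXiv:1909.04085 — 2 statements merged into one kernel-verified Lean document; each statement's English description precedes it below -/
import Mathlib

section
/- For every t with √3/2 ≤ t < 1 and every δ > 0, the polynomially convex hull of S_t ∩ B̄(0;δ) contains a one-parameter family of analytic discs with boundary in S_t passing through the origin: there is a continuous map F : (0,1) × 𝔻̄ → ℂ² such that, for each s ∈ (0,1), φ_s := F(s,·) is a nonconstant analytic disc, φ_s(∂𝔻) ⊆ S_t ∩ B̄(0;δ), 0 ∈ φ_s(∂𝔻), φ_s(𝔻̄) is contained in the polynomially convex hull of S_t ∩ B̄(0;δ), and the images φ_s(𝔻̄) for distinct s are distinct. -/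
open Complex ComplexConjugate

/-- The polynomially convex hull of a set `K ⊆ ℂ²`. -/
def polyHull2 (K : Set (ℂ × ℂ)) : Set (ℂ × ℂ) :=
  { z | ∀ p : MvPolynomial (Fin 2) ℂ,
      ‖MvPolynomial.eval (fun i => if i = 0 then z.1 else z.2) p‖ ≤
        sSup ((fun w : ℂ × ℂ =>
          ‖MvPolynomial.eval (fun i => if i = 0 then w.1 else w.2) p‖) '' K) }

/-- A set `K ⊆ ℂ²` is polynomially convex if it equals its polynomially convex hull. -/
def PolyConvex2 (K : Set (ℂ × ℂ)) : Prop := polyHull2 K = K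

/-- The closed Euclidean ball of radius `r` centred at the origin in `ℂ²`. -/
def eClosedBall (r : ℝ) : Set (ℂ × ℂ) := { z | ‖z.1‖ ^ 2 + ‖z.2‖ ^ 2 ≤ r ^ 2 }

/-- The open Euclidean ball of radius `r` centred at the origin in `ℂ²`. -/
def eOpenBall (r : ℝ) : Set (ℂ × ℂ) := { z | ‖z.1‖ ^ 2 + ‖z.2‖ ^ 2 < r ^ 2 }

/-- The surface `S_t = {(z, z²z̄ + t z z̄² + (t²/3) z̄³) : z ∈ ℂ}`. -/
def Sset (t : ℝ) : Set (ℂ × ℂ) :=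
  { zw | ∃ z : ℂ, zw = (z, z ^ 2 * conj z + (t : ℂ) * z * (conj z) ^ 2
      + ((t : ℂ) ^ 2 / 3) * (conj z) ^ 3) }



/-- hypergeometric coefficients -/
noncomputable def hco (a b c : ℝ) (n : ℕ) : ℝ :=
  ∏ k ∈ Finset.range n, ((a + k) * (b + k) / ((c + k) * (1 + k)))

/-- coefficients of `(1-x)^(e-1)` -/
noncomputable def Tco (e : ℝ) (n : ℕ) : ℝ :=
  ∏ k ∈ Finset.range n, (((k : ℝ) + 1 - e) / (k + 1))

/-- coefficients of `(1-x)^e` -/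
noncomputable def qco (e : ℝ) : ℕ → ℝ
  | 0 => 1
  | (n + 1) => - (e * Tco e n / (n + 1))

noncomputable def cco (e a b c : ℝ) (n : ℕ) : ℝ :=
  ∑ kl ∈ Finset.HasAntidiagonal.antidiagonal n, qco e kl.1 * hco a b c kl.2

lemma hco_zero (a b c : ℝ) : hco a b c 0 = 1 := by simp [hco]

lemma hco_succ (a b c : ℝ) (n : ℕ) :
    hco a b c (n + 1) = hco a b c n * ((a + n) * (b + n) / ((c + n) * (1 + n))) := by
  unfold hco; rw [Finset.prod_range_succ]

lemma hco_pos {a b c : ℝ} (ha : 0 < a) (hb : 0 < b) (hc : 0 < c) (n : ℕ) : 0 < hco a b c n := by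
  unfold hco
  apply Finset.prod_pos
  intro k _
  positivity

lemma hco_anti {a b c : ℝ} (ha : 0 < a) (hb : 0 < b) (hc : 0 < c) (h1 : a + b ≤ c)
    (h2 : 2 * (a * b) ≤ c) : Antitone (hco a b c) := by
  apply antitone_nat_of_succ_le
  intro n
  rw [hco_succ]
  apply mul_le_of_le_one_right (hco_pos ha hb hc n).le
  rw [div_le_one (by positivity)]
  have hn : (0 : ℝ) ≤ n := n.cast_nonneg
  nlinarith [mul_pos ha hb, mul_le_mul_of_nonneg_right h1 hn]

lemma hco_le {a b c : ℝ} (ha : 0 < a) (hb : 0 < b) (hc : 0 < c) (h1 : a + b ≤ c)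
    (h2 : 2 * (a * b) ≤ c) (h3 : a * b ≤ 1) (n : ℕ) : hco a b c n ≤ 1 / (n + 1) := by
  induction n with
  | zero => simp [hco_zero]
  | succ n ih =>
    rw [hco_succ]
    have hn : (0 : ℝ) ≤ n := n.cast_nonneg
    have : (a + n) * (b + n) / ((c + n) * (1 + n)) ≤ (n + 1) / (n + 2) := by
      rw [div_le_div_iff₀ (by positivity) (by positivity)]
      nlinarith [mul_pos ha hb, mul_le_mul_of_nonneg_right h1 hn,
        mul_le_mul_of_nonneg_right h1 (mul_nonneg hn hn), mul_le_mul_of_nonneg_right h3 hn]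
    calc _ ≤ 1 / ((n : ℝ) + 1) * ((n + 1) / (n + 2)) := by
            apply mul_le_mul ih this (by positivity) (by positivity)
      _ = _ := by push_cast; field_simp; ring

lemma Tco_succ (e : ℝ) (n : ℕ) : Tco e (n + 1) = Tco e n * (((n : ℝ) + 1 - e) / (n + 1)) := by
  unfold Tco; rw [Finset.prod_range_succ]

lemma Tco_pos {e : ℝ} (he1 : e < 1) (n : ℕ) : 0 < Tco e n := by
  unfold Tco
  apply Finset.prod_pos
  intro k _
  have hn : (0 : ℝ) ≤ k := k.cast_nonneg
  apply div_pos <;> linarith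

lemma qco_succ' (e : ℝ) (n : ℕ) : qco e (n + 1) = Tco e (n + 1) - Tco e n := by
  rw [Tco_succ]
  simp only [qco]
  have : ((n : ℝ) + 1) ≠ 0 := by positivity
  field_simp
  ring

lemma sum_qco (e : ℝ) (n : ℕ) : ∑ k ∈ Finset.range (n + 1), qco e k = Tco e n := by
  induction n with
  | zero => simp [qco, Tco]
  | succ n ih => rw [Finset.sum_range_succ, ih, qco_succ']; ring

lemma sum_T_le {e : ℝ} (he : 0 < e) (he1 : e < 1) (N : ℕ) :
    ∑ m ∈ Finset.range N, Tco e m / (m + 1) ≤ 1 / e := by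
  have h : ∀ N : ℕ, ∑ m ∈ Finset.range N, Tco e m / (m + 1) = (1 - Tco e N) / e := by
    intro N
    induction N with
    | zero => simp [Tco]
    | succ n ih =>
      rw [Finset.sum_range_succ, ih, Tco_succ]
      have : ((n : ℝ) + 1) ≠ 0 := by positivity
      field_simp
      ring
  rw [h]
  have := Tco_pos he1 N
  gcongr
  linarith

/-- `|qco|` bound -/
lemma qco_abs_le {e : ℝ} (he : 0 < e) (he1 : e < 1) (n : ℕ) : |qco e n| ≤ 1 := by
  cases n with
  | zero => simp [qco]
  | succ n =>
    have hT : ∀ n, Tco e n ≤ 1 := by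
      intro n
      have := sum_T_le he he1 0
      unfold Tco
      apply Finset.prod_le_one
      · intro k _
        have hn : (0 : ℝ) ≤ k := k.cast_nonneg
        apply div_nonneg <;> linarith
      · intro k _
        rw [div_le_one (by positivity)]
        linarith
    rw [qco_succ', abs_le]
    constructor <;> linarith [hT n, hT (n+1), Tco_pos he1 n, Tco_pos he1 (n+1)]

lemma cco_eq (e a b c : ℝ) (n : ℕ) :
    cco e a b c n = hco a b c n * Tco e n
      - ∑ k ∈ Finset.range n, (Tco e k - Tco e (k + 1)) * (hco a b c (n - (k + 1)) - hco a b c n) := by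
  unfold cco
  rw [Finset.Nat.sum_antidiagonal_eq_sum_range_succ (fun i j => qco e i * hco a b c j) n,
    Finset.sum_range_succ']
  rw [← sum_qco, Finset.sum_range_succ', mul_add, Finset.mul_sum, add_sub_right_comm,
    ← Finset.sum_sub_distrib]
  congr 1
  · apply Finset.sum_congr rfl
    intro k _
    rw [qco_succ']; ring
  · simp [qco]

lemma cco_bound {e : ℝ} (he : 0 < e) (he1 : e < 1) {h : ℕ → ℝ} (hanti : Antitone h)
    (hpos : ∀ n, 0 ≤ h n) (hle : ∀ n : ℕ, h n ≤ 1 / (n + 1)) (N : ℕ) :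
    ∑ n ∈ Finset.range N, ∑ k ∈ Finset.range n,
      (Tco e k - Tco e (k + 1)) * (h (n - (k + 1)) - h n) ≤ 1 / e := by
  have hp : ∀ k, 0 ≤ Tco e k - Tco e (k + 1) := by
    intro k
    rw [← neg_sub, ← qco_succ']
    simp only [qco, neg_neg]
    have := Tco_pos he1 k
    positivity
  have hTanti : Antitone (Tco e) := antitone_nat_of_succ_le fun k => by linarith [hp k]
  -- swap sums
  have hswap : ∑ n ∈ Finset.range N, ∑ k ∈ Finset.range n,
      (Tco e k - Tco e (k + 1)) * (h (n - (k + 1)) - h n)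
      = ∑ k ∈ Finset.range N, (Tco e k - Tco e (k + 1)) *
          ∑ n ∈ Finset.Ico (k + 1) N, (h (n - (k + 1)) - h n) := by
    simp_rw [Finset.mul_sum]
    apply Finset.sum_comm'
    intro x y
    simp only [Finset.mem_range, Finset.mem_Ico]
    omega
  rw [hswap]
  have hin : ∀ k ∈ Finset.range N, ∑ n ∈ Finset.Ico (k + 1) N, (h (n - (k + 1)) - h n)
      ≤ ∑ m ∈ Finset.range (k + 1), h m := by
    intro k hk
    rw [Finset.mem_range] at hk
    rw [Finset.sum_sub_distrib]
    have e1 : ∑ n ∈ Finset.Ico (k + 1) N, h (n - (k + 1)) = ∑ m ∈ Finset.range (N - (k + 1)), h m := by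
      rw [Finset.sum_Ico_eq_sum_range]
      apply Finset.sum_congr rfl
      intro i _
      congr 1
      omega
    have e2 : ∑ m ∈ Finset.range (k + 1), h m + ∑ n ∈ Finset.Ico (k + 1) N, h n
        = ∑ m ∈ Finset.range N, h m := Finset.sum_range_add_sum_Ico _ hk
    have e3 : ∑ m ∈ Finset.range (N - (k + 1)), h m ≤ ∑ m ∈ Finset.range N, h m :=
      Finset.sum_le_sum_of_subset_of_nonneg (Finset.range_mono (by omega)) (fun i _ _ => hpos i)
    rw [e1]
    linarith
  calc _ ≤ ∑ k ∈ Finset.range N, (Tco e k - Tco e (k + 1)) * ∑ m ∈ Finset.range (k + 1), h m :=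
        Finset.sum_le_sum fun k hk => mul_le_mul_of_nonneg_left (hin k hk) (hp k)
    _ = ∑ m ∈ Finset.range N, h m * ∑ k ∈ Finset.Ico m N, (Tco e k - Tco e (k + 1)) := by
        simp_rw [Finset.mul_sum]
        rw [Finset.sum_comm' (t' := Finset.range N) (s' := fun m => Finset.Ico m N)]
        · apply Finset.sum_congr rfl
          intro m _
          apply Finset.sum_congr rfl
          intro k _
          ring
        · intro x y
          simp only [Finset.mem_range, Finset.mem_Ico]
          omega
    _ ≤ ∑ m ∈ Finset.range N, Tco e m / (m + 1) := by
        apply Finset.sum_le_sum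
        intro m hm
        rw [Finset.mem_range] at hm
        have : ∑ k ∈ Finset.Ico m N, (Tco e k - Tco e (k + 1)) = Tco e m - Tco e N := by
          have := Finset.sum_Ico_sub (fun k => - Tco e k) hm.le
          rw [show Tco e m - Tco e N = -Tco e N - -Tco e m by ring, ← this]
          apply Finset.sum_congr rfl
          intro k _
          ring
        rw [this, div_eq_mul_one_div, mul_comm]
        have := Tco_pos he1 N
        have h2 := hTanti hm.le
        exact mul_le_mul (by linarith) (hle m) (hpos m) (Tco_pos he1 m).le
    _ ≤ 1 / e := sum_T_le he he1 N

lemma cco_summable {e a b c : ℝ} (he : 0 < e) (he1 : e < 1)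
    (ha : 0 < a) (hb : 0 < b) (hc : 0 < c) (h1 : a + b ≤ c)
    (h2 : 2 * (a * b) ≤ c) (h3 : a * b ≤ 1) : Summable fun n => |cco e a b c n| := by
  have hanti := hco_anti ha hb hc h1 h2
  have hpos := fun n => (hco_pos ha hb hc n).le
  have hle := hco_le ha hb hc h1 h2 h3
  have hp : ∀ k, 0 ≤ Tco e k - Tco e (k + 1) := by
    intro k
    rw [← neg_sub, ← qco_succ']
    simp only [qco, neg_neg]
    have := Tco_pos he1 k
    positivity
  apply summable_of_sum_range_le (c := 1 / e + 1 / e) (fun _ => abs_nonneg _)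
  intro N
  calc _ ≤ ∑ n ∈ Finset.range N, (Tco e n / (n + 1) + ∑ k ∈ Finset.range n,
      (Tco e k - Tco e (k + 1)) * (hco a b c (n - (k + 1)) - hco a b c n)) := by
        apply Finset.sum_le_sum
        intro n _
        rw [cco_eq]
        refine (abs_sub _ _).trans (add_le_add ?_ ?_)
        · rw [abs_of_nonneg (mul_nonneg (hpos n) (Tco_pos he1 n).le), div_eq_mul_one_div, mul_comm]
          exact mul_le_mul_of_nonneg_left (hle n) (Tco_pos he1 n).le
        · rw [abs_of_nonneg]
          apply Finset.sum_nonneg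
          intro k hk
          exact mul_nonneg (hp k) (sub_nonneg.2 (hanti (Nat.sub_le _ _)))
    _ ≤ _ := by
        rw [Finset.sum_add_distrib]
        exact add_le_add (sum_T_le he he1 N) (cco_bound he he1 hanti hpos hle N)


noncomputable def ps (α : ℕ → ℝ) (x : ℂ) : ℂ := ∑' n, (α n : ℂ) * x ^ n

lemma ps_summable {α : ℕ → ℝ} {C : ℝ} (hα : ∀ n, |α n| ≤ C) {x : ℂ} (hx : ‖x‖ < 1) :
    Summable fun n => ‖(α n : ℂ) * x ^ n‖ := by
  have hg : Summable fun n : ℕ => C * ‖x‖ ^ n :=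
    (summable_geometric_of_lt_one (norm_nonneg x) hx).mul_left C
  refine Summable.of_nonneg_of_le (fun _ => norm_nonneg _) (fun n => ?_) hg
  rw [norm_mul, norm_pow, Complex.norm_real, Real.norm_eq_abs]
  exact mul_le_mul_of_nonneg_right (hα n) (by positivity)

lemma ps_hasSum {α : ℕ → ℝ} {C : ℝ} (hα : ∀ n, |α n| ≤ C) {x : ℂ} (hx : ‖x‖ < 1) :
    HasSum (fun n => (α n : ℂ) * x ^ n) (ps α x) :=
  (ps_summable hα hx).of_norm.hasSum

lemma ps_deriv {α : ℕ → ℝ} {C : ℝ} (hα : ∀ n, |α n| ≤ C) {x : ℂ} (hx : ‖x‖ < 1) :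
    ∃ d : ℂ, HasDerivAt (ps α) d x ∧ HasSum (fun n : ℕ => (n : ℂ) * α n * x ^ n) (x * d) ∧
      HasSum (fun n : ℕ => ((n : ℂ) + 1) * α (n + 1) * x ^ n) d := by
  have hC : 0 ≤ C := (abs_nonneg _).trans (hα 0)
  obtain ⟨r, hxr, hr⟩ := exists_between hx
  have hr0 : 0 ≤ r := (norm_nonneg x).trans hxr.le
  have hu : Summable fun n : ℕ => (n : ℝ) * r ^ (n - 1) := by
    rw [← summable_nat_add_iff 1]
    have h1 := summable_pow_mul_geometric_of_norm_lt_one 1 (r := r) (by rwa [Real.norm_of_nonneg hr0])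
    have h2 := summable_geometric_of_lt_one hr0 hr
    refine (h1.add h2).congr fun n => ?_
    simp
    ring
  have hsum : ∀ y : ℂ, ‖y‖ < r → Summable fun n : ℕ => (α n : ℂ) * ((n : ℂ) * y ^ (n - 1)) := by
    intro y hy
    refine Summable.of_norm_bounded (hu.mul_left C) fun n => ?_
    rw [norm_mul, norm_mul, norm_pow, Complex.norm_real, Real.norm_eq_abs, Complex.norm_natCast]
    gcongr
    exact hα n
  have hd := hasDerivAt_tsum_of_isPreconnected (hu.mul_left C) (Metric.isOpen_ball (x := (0 : ℂ)) (ε := r))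
    (convex_ball _ _).isPreconnected
    (g := fun n (y : ℂ) => (α n : ℂ) * y ^ n) (g' := fun n (y : ℂ) => (α n : ℂ) * ((n : ℂ) * y ^ (n - 1)))
    (y := x) (y₀ := x)
    (fun n y _ => (hasDerivAt_pow n y).const_mul _)
    (fun n y hy => by
      rw [mem_ball_zero_iff] at hy
      rw [norm_mul, norm_mul, norm_pow, Complex.norm_real, Real.norm_eq_abs, Complex.norm_natCast]
      gcongr
      exact hα n)
    (by simpa using hxr) (ps_summable hα hx).of_norm (by simpa using hxr)
  refine ⟨_, hd, ?_, ?_⟩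
  · have := (hsum x hxr).hasSum.mul_left x
    refine this.congr_fun ?_
    intro n
    cases n with
    | zero => simp
    | succ n => push_cast; ring
  · have := (hasSum_nat_add_iff' 1).2 (hsum x hxr).hasSum
    simp only [Finset.sum_range_one, Nat.cast_zero, zero_mul, mul_zero, sub_zero] at this
    refine this.congr_fun ?_
    intro n
    push_cast; ring

lemma ps_cont {α : ℕ → ℝ} (hα : Summable fun n => |α n|) :
    ContinuousOn (ps α) (Metric.closedBall 0 1) := by
  refine continuousOn_tsum (fun n => by fun_prop) hα ?_
  intro n x hx
  rw [mem_closedBall_zero_iff] at hx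
  rw [norm_mul, norm_pow, Complex.norm_real, Real.norm_eq_abs]
  exact mul_le_of_le_one_right (abs_nonneg _) (pow_le_one₀ (norm_nonneg _) hx)

lemma ps_conj (α : ℕ → ℝ) (x : ℝ) : (ps α (x : ℂ)).im = 0 := by
  have : ps α (x : ℂ) = ((∑' n, α n * x ^ n : ℝ) : ℂ) := by
    unfold ps; push_cast; rfl
  rw [this, Complex.ofReal_im]

noncomputable def PP (e : ℝ) (x : ℂ) : ℂ := (1 - x) ^ (e : ℂ)

lemma one_sub_slit {x : ℂ} (hx : ‖x‖ ≤ 1) (h1 : x ≠ 1) : 1 - x ∈ Complex.slitPlane := by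
  rw [Complex.mem_slitPlane_iff]
  by_contra! h
  obtain ⟨h2, h3⟩ := h
  simp at h2 h3
  have h4 := (Complex.re_le_norm x).trans hx
  apply h1
  apply Complex.ext
  · simp; linarith
  · simp [h3]

lemma PP_cont {e : ℝ} (he : 0 < e) : ContinuousOn (PP e) (Metric.closedBall 0 1) := by
  intro x hx
  apply ContinuousAt.continuousWithinAt
  rw [mem_closedBall_zero_iff] at hx
  by_cases h1 : x = 1
  · subst h1
    have h := Complex.continuousAt_cpow_zero_of_re_pos (z := (e : ℂ)) (by simpa using he)
    have h2 : ContinuousAt (fun x : ℂ => ((1 - x, (e : ℂ)) : ℂ × ℂ)) 1 := by fun_prop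
    have h3 : ContinuousAt (fun x : ℂ × ℂ => x.1 ^ x.2) ((fun x : ℂ => ((1 - x, (e : ℂ)) : ℂ × ℂ)) 1) := by
      simpa using h
    exact ContinuousAt.comp (f := fun x : ℂ => ((1 - x, (e : ℂ)) : ℂ × ℂ)) h3 h2
  · have h2 : ContinuousAt (fun x : ℂ => 1 - x) x := by fun_prop
    exact h2.cpow continuousAt_const (one_sub_slit hx h1)

lemma ne_one_of_norm {x : ℂ} (hx : ‖x‖ < 1) : x ≠ 1 := by
  rintro rfl
  simp at hx

lemma PP_deriv (e : ℝ) {x : ℂ} (hx : ‖x‖ < 1) :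
    HasDerivAt (PP e) (-(e * PP e x / (1 - x))) x := by
  have hs := one_sub_slit hx.le (ne_one_of_norm hx)
  have h0 : (1 : ℂ) - x ≠ 0 := Complex.slitPlane_ne_zero hs
  have h := ((hasDerivAt_id x).const_sub 1).cpow_const (c := (e : ℂ)) hs
  refine h.congr_deriv ?_
  simp only [id, PP]
  rw [Complex.cpow_sub _ _ h0, Complex.cpow_one]
  ring

lemma PP_ne {e : ℝ} {x : ℂ} (hx : ‖x‖ ≤ 1) (h1 : x ≠ 1) : PP e x ≠ 0 := by
  unfold PP
  rw [Complex.cpow_def_of_ne_zero (Complex.slitPlane_ne_zero (one_sub_slit hx h1))]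
  exact Complex.exp_ne_zero _

lemma qco_ps {e : ℝ} (he : 0 < e) (he1 : e < 1) {x : ℂ} (hx : ‖x‖ < 1) :
    ps (qco e) x = PP e x := by
  have hder : ∀ y ∈ Metric.ball (0 : ℂ) 1, HasDerivAt (fun y => ps (qco e) y / PP e y) 0 y := by
    intro y hy
    rw [mem_ball_zero_iff] at hy
    obtain ⟨d, h1, h2, h3⟩ := ps_deriv (qco_abs_le he he1) hy
    have h4 := ps_hasSum (qco_abs_le he he1) hy
    have hne : (1 : ℂ) - y ≠ 0 := sub_ne_zero.2 (ne_one_of_norm hy).symm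
    have hd : (1 - y) * d = -e * ps (qco e) y := by
      have h5 := h3.sub h2
      have h6 := h4.mul_left (-(e : ℂ))
      rw [show (1 - y) * d = d - y * d by ring]
      refine h5.unique (h6.congr_fun ?_)
      intro n
      cases n with
      | zero => simp [qco, Tco]
      | succ n =>
        have e1 : ((n : ℝ) + 1 + 1) * qco e (n + 1 + 1) = - e * Tco e (n + 1) := by
          simp only [qco]; push_cast; field_simp
        have e2 : ((n : ℝ) + 1) * qco e (n + 1) = - e * Tco e n := by
          simp only [qco]; field_simp
        have e3 := qco_succ' e n
        have e4 : ((n : ℝ) + 1 + 1) * qco e (n + 1 + 1) - ((n : ℝ) + 1) * qco e (n + 1)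
          = - e * qco e (n + 1) := by rw [e1, e2, e3]; ring
        have e5 : ((n : ℂ) + 1 + 1) * qco e (n + 1 + 1) - ((n : ℂ) + 1) * qco e (n + 1)
          = - e * qco e (n + 1) := by exact_mod_cast e4
        push_cast
        linear_combination y ^ (n + 1) * e5
    have hP := PP_deriv e hy
    have hP0 := PP_ne (e := e) hy.le (ne_one_of_norm hy)
    refine (h1.div hP hP0).congr_deriv ?_
    have hd' : d = -e * ps (qco e) y / (1 - y) := by
      rw [eq_div_iff hne, ← hd]; ring
    rw [hd']
    field_simp
    ring
  have hc := IsOpen.is_const_of_deriv_eq_zero Metric.isOpen_ball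
    (convex_ball (0 : ℂ) 1).isPreconnected
    (fun y hy => (hder y hy).differentiableAt.differentiableWithinAt)
    (fun y hy => (hder y hy).deriv) (by simpa using hx : x ∈ Metric.ball (0 : ℂ) 1)
    (by simp : (0 : ℂ) ∈ Metric.ball (0 : ℂ) 1)
  have h0 : ps (qco e) 0 = 1 := by
    unfold ps
    rw [tsum_eq_single 0]
    · simp [qco]
    · intro n hn; simp [hn]
  simp only [h0, PP, sub_zero, Complex.one_cpow, div_one] at hc
  have hP1 : PP e x ≠ 0 := PP_ne hx.le (ne_one_of_norm hx)
  unfold PP at hP1 ⊢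
  rw [div_eq_iff hP1, one_mul] at hc
  exact hc

structure Good (e μ : ℝ) : Prop where
  he : 0 < e
  he6 : e ≤ 1 / 6
  hμ : μ = 0 ∨ μ = 1 / 3

noncomputable def hh (e μ : ℝ) (n : ℕ) : ℝ := hco (e + μ) (e + 1 / 3 + μ) (2 / 3 + 2 * μ) n
noncomputable def ff (e μ : ℝ) (x : ℂ) : ℂ :=
  ps (cco e (e + μ) (e + 1 / 3 + μ) (2 / 3 + 2 * μ)) x
noncomputable def mm (e μ : ℝ) (x : ℂ) : ℂ :=
  ps (fun n => hh e μ n / (2 / 3 + 2 * μ + n)) x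
noncomputable def NN (e μ : ℝ) (x : ℂ) : ℂ := PP e x * mm e μ x
noncomputable def kap (e μ : ℝ) : ℝ := (1 / 6 - e / 2 + μ) * (4 / 3 - 2 * e)

lemma Good.hμ0 {e μ : ℝ} (g : Good e μ) : 0 ≤ μ := by
  rcases g.hμ with h | h <;> rw [h]; norm_num

lemma Good.conds {e μ : ℝ} (g : Good e μ) : 0 < e + μ ∧ 0 < e + 1 / 3 + μ ∧ 0 < 2 / 3 + 2 * μ ∧
    (e + μ) + (e + 1 / 3 + μ) ≤ 2 / 3 + 2 * μ ∧ 2 * ((e + μ) * (e + 1 / 3 + μ)) ≤ 2 / 3 + 2 * μ ∧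
    (e + μ) * (e + 1 / 3 + μ) ≤ 1 := by
  obtain ⟨he, he6, hμ⟩ := g
  rcases hμ with h | h <;> subst h <;> refine ⟨?_, ?_, ?_, ?_, ?_, ?_⟩ <;> nlinarith

lemma kap_pos {e μ : ℝ} (g : Good e μ) : 0 < kap e μ := by
  have := g.hμ0
  have := g.he6
  unfold kap
  apply mul_pos <;> linarith

lemma hh_pos {e μ : ℝ} (g : Good e μ) (n : ℕ) : 0 < hh e μ n := by
  obtain ⟨h1, h2, h3, h4, h5, h6⟩ := g.conds
  exact hco_pos h1 h2 h3 n

lemma hh_le {e μ : ℝ} (g : Good e μ) (n : ℕ) : hh e μ n ≤ 1 / (n + 1) := by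
  obtain ⟨h1, h2, h3, h4, h5, h6⟩ := g.conds
  exact hco_le h1 h2 h3 h4 h5 h6 n

lemma hh_abs {e μ : ℝ} (g : Good e μ) (n : ℕ) : |hh e μ n| ≤ 1 := by
  rw [abs_of_pos (hh_pos g n)]
  refine (hh_le g n).trans ?_
  rw [div_le_one (by positivity)]
  have : (0 : ℝ) ≤ n := n.cast_nonneg
  linarith

lemma mco_pos {e μ : ℝ} (g : Good e μ) (n : ℕ) : 0 < hh e μ n / (2 / 3 + 2 * μ + n) := by
  have := g.hμ0
  have := hh_pos g n
  positivity

lemma mco_summable {e μ : ℝ} (g : Good e μ) :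
    Summable fun n : ℕ => |hh e μ n / (2 / 3 + 2 * μ + n)| := by
  have hs : Summable fun n : ℕ => 2 * (1 / ((n : ℝ) + 1) ^ 2) := by
    have := (summable_nat_add_iff 1).2 (Real.summable_one_div_nat_pow.2 (by norm_num : 1 < 2))
    refine (this.mul_left 2).congr fun n => ?_
    push_cast; rfl
  refine Summable.of_nonneg_of_le (fun _ => abs_nonneg _) (fun n => ?_) hs
  rw [abs_of_pos (mco_pos g n)]
  have h0 := g.hμ0
  have hn : (0 : ℝ) ≤ n := n.cast_nonneg
  have h1 := hh_le g n
  rw [div_le_iff₀ (by positivity)]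
  refine h1.trans ?_
  rw [div_le_iff₀ (by positivity)]
  have : 2 * (1 / ((n : ℝ) + 1) ^ 2) * (2 / 3 + 2 * μ + n) * (n + 1)
    = 2 * (2 / 3 + 2 * μ + n) / (n + 1) := by field_simp
  rw [this, le_div_iff₀ (by positivity)]
  linarith

lemma mco_abs {e μ : ℝ} (g : Good e μ) (n : ℕ) : |hh e μ n / (2 / 3 + 2 * μ + n)| ≤ 2 := by
  rw [abs_of_pos (mco_pos g n)]
  have h0 := g.hμ0
  have hn : (0 : ℝ) ≤ n := n.cast_nonneg
  have h1 := (le_abs_self _).trans (hh_abs g n)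
  rw [div_le_iff₀ (by positivity)]
  linarith

lemma ff_cont {e μ : ℝ} (g : Good e μ) : ContinuousOn (ff e μ) (Metric.closedBall 0 1) := by
  obtain ⟨h1, h2, h3, h4, h5, h6⟩ := g.conds
  exact ps_cont (cco_summable g.he (by linarith [g.he6]) h1 h2 h3 h4 h5 h6)

lemma mm_cont {e μ : ℝ} (g : Good e μ) : ContinuousOn (mm e μ) (Metric.closedBall 0 1) :=
  ps_cont (mco_summable g)

lemma NN_cont {e μ : ℝ} (g : Good e μ) : ContinuousOn (NN e μ) (Metric.closedBall 0 1) :=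
  (PP_cont g.he).mul (mm_cont g)

lemma mm_one {e μ : ℝ} (g : Good e μ) : ∃ r : ℝ, 0 < r ∧ mm e μ 1 = r := by
  refine ⟨∑' n : ℕ, hh e μ n / (2 / 3 + 2 * μ + n), ?_, ?_⟩
  · exact (mco_summable g).of_abs.tsum_pos (fun n => (mco_pos g n).le) 0 (mco_pos g 0)
  · unfold mm ps
    push_cast
    simp

lemma ff_eq {e μ : ℝ} (g : Good e μ) {x : ℂ} (hx : ‖x‖ < 1) :
    ff e μ x = PP e x * ps (hh e μ) x := by
  have he1 : e < 1 := by linarith [g.he6]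
  rw [← qco_ps g.he he1 hx]
  unfold ff ps
  rw [tsum_mul_tsum_eq_tsum_sum_antidiagonal_of_summable_norm
    (ps_summable (qco_abs_le g.he he1) hx) (ps_summable (hh_abs g) hx)]
  apply tsum_congr
  intro n
  unfold cco
  push_cast
  rw [Finset.sum_mul]
  apply Finset.sum_congr rfl
  intro kl hkl
  rw [Finset.HasAntidiagonal.mem_antidiagonal] at hkl
  rw [← hkl, pow_add]
  unfold hh
  ring

lemma ps_hh_deriv {e μ : ℝ} (g : Good e μ) {x : ℂ} (hx : ‖x‖ < 1) :
    HasDerivAt (ps (hh e μ)) ((-(1 / 3 - 2 * e) * ps (hh e μ) x + kap e μ * mm e μ x) / (1 - x)) x := by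
  obtain ⟨d, h1, h2, h3⟩ := ps_deriv (hh_abs g) hx
  have h4 := ps_hasSum (hh_abs g) hx
  have h5 := ps_hasSum (mco_abs g) hx
  have hne : (1 : ℂ) - x ≠ 0 := sub_ne_zero.2 (ne_one_of_norm hx).symm
  refine h1.congr_deriv ?_
  rw [eq_div_iff hne, show d * (1 - x) = d - x * d by ring]
  refine (h3.sub h2).unique (((h4.mul_left (-(1 / 3 - 2 * e) : ℂ)).add
    (h5.mul_left (kap e μ : ℂ))).congr_fun ?_)
  intro n
  have hμ0 := g.hμ0
  have e1 : ((n : ℝ) + 1) * hh e μ (n + 1) - n * hh e μ n =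
      -(1 / 3 - 2 * e) * hh e μ n + kap e μ * (hh e μ n / (2 / 3 + 2 * μ + n)) := by
    unfold hh
    rw [hco_succ]
    have hk : kap e μ = (2 / 3 + μ - e) * (1 / 3 + μ - e) := by
      unfold kap
      rcases g.hμ with h | h <;> rw [h] <;> ring
    rw [hk]
    have hc : (2 / 3 + 2 * μ + n : ℝ) ≠ 0 := by positivity
    have hn : (1 + n : ℝ) ≠ 0 := by positivity
    field_simp
    ring
  have e2 := congrArg (fun r : ℝ => (r : ℂ)) e1
  push_cast at e2 ⊢
  linear_combination x ^ n * e2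

lemma mm_deriv {e μ : ℝ} (g : Good e μ) {x : ℂ} (hx : ‖x‖ < 1) :
    ∃ d, HasDerivAt (mm e μ) d x ∧ x * d = ps (hh e μ) x - (2 / 3 + 2 * μ) * mm e μ x := by
  obtain ⟨d, h1, h2, h3⟩ := ps_deriv (mco_abs g) hx
  have h4 := ps_hasSum (hh_abs g) hx
  have h5 := ps_hasSum (mco_abs g) hx
  refine ⟨d, h1, ?_⟩
  refine h2.unique ((h4.sub (h5.mul_left (2 / 3 + 2 * μ : ℂ))).congr_fun ?_)
  intro n
  have hμ0 := g.hμ0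
  have e1 : n * (hh e μ n / (2 / 3 + 2 * μ + n)) = hh e μ n -
      (2 / 3 + 2 * μ) * (hh e μ n / (2 / 3 + 2 * μ + n)) := by
    have hc : (2 / 3 + 2 * μ + n : ℝ) ≠ 0 := by positivity
    field_simp
    ring
  have e2 := congrArg (fun r : ℝ => (r : ℂ)) e1
  push_cast at e2 ⊢
  linear_combination x ^ n * e2

lemma ff_deriv {e μ : ℝ} (g : Good e μ) {x : ℂ} (hx : ‖x‖ < 1) :
    HasDerivAt (ff e μ) ((-(1 / 3 - e) * ff e μ x + kap e μ * NN e μ x) / (1 - x)) x := by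
  have hne : (1 : ℂ) - x ≠ 0 := sub_ne_zero.2 (ne_one_of_norm hx).symm
  have h := (PP_deriv e hx).mul (ps_hh_deriv g hx)
  have hev : ff e μ =ᶠ[nhds x] (PP e * ps (hh e μ)) := by
    filter_upwards [Metric.isOpen_ball.mem_nhds (by simpa using hx : x ∈ Metric.ball (0 : ℂ) 1)] with y hy
    exact ff_eq g (by simpa using hy)
  refine (h.congr_of_eventuallyEq hev).congr_deriv ?_
  rw [ff_eq g hx]
  unfold NN
  field_simp
  ring

lemma NN_deriv {e μ : ℝ} (g : Good e μ) {x : ℂ} (hx : ‖x‖ < 1) :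
    ∃ d, HasDerivAt (NN e μ) d x ∧
      (x ≠ 0 → d = -(e * NN e μ x / (1 - x)) + (ff e μ x - (2 / 3 + 2 * μ) * NN e μ x) / x) := by
  have hne : (1 : ℂ) - x ≠ 0 := sub_ne_zero.2 (ne_one_of_norm hx).symm
  obtain ⟨d, h1, h2⟩ := mm_deriv g hx
  refine ⟨_, (PP_deriv e hx).mul h1, ?_⟩
  intro h0
  have hd : d = (ps (hh e μ) x - (2 / 3 + 2 * μ) * mm e μ x) / x := by
    rw [eq_div_iff h0, ← h2]; ring
  rw [hd, ff_eq g hx]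
  unfold NN
  field_simp

/-- extension of derivatives to the boundary circle -/
lemma bdry_deriv {f d : ℂ → ℂ} (hf : ContinuousOn f (Metric.closedBall 0 1))
    (hd : ∀ x : ℂ, ‖x‖ < 1 → DifferentiableAt ℂ f x)
    (hd' : ∀ x : ℂ, ‖x‖ < 1 → x ≠ 0 → HasDerivAt f (d x) x)
    {x : ℂ} (hx : ‖x‖ = 1) (hdc : ContinuousWithinAt d (Metric.closedBall 0 1) x)
    {γ : ℝ → ℂ} {θ : ℝ} {γ' : ℂ} (hγ : HasDerivAt γ γ' θ) (hγx : γ θ = x) (hγn : ∀ s, ‖γ s‖ = 1) :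
    HasDerivAt (fun s => f (γ s)) (γ' * d x) θ := by
  have key : HasFDerivWithinAt f
      ((ContinuousLinearMap.toSpanSingleton ℂ (d x)).restrictScalars ℝ)
      (closure (Metric.ball (0 : ℂ) 1)) x := by
    apply hasFDerivWithinAt_closure_of_tendsto_fderiv
    · intro y hy
      exact ((hd y (by simpa using hy)).restrictScalars ℝ).differentiableWithinAt
    · exact convex_ball _ _
    · exact Metric.isOpen_ball
    · intro y hy
      rw [closure_ball _ one_ne_zero] at hy
      exact (hf y hy).mono Metric.ball_subset_closedBall
    · have h1 : Filter.Tendsto d (nhdsWithin x (Metric.ball 0 1)) (nhds (d x)) :=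
        hdc.mono Metric.ball_subset_closedBall
      have h2 : Continuous fun w : ℂ =>
        ((ContinuousLinearMap.toSpanSingleton ℂ w).restrictScalars ℝ : ℂ →L[ℝ] ℂ) := by
        have h3 : Continuous fun w : ℂ => (ContinuousLinearMap.toSpanSingleton ℂ w : ℂ →L[ℂ] ℂ) := by
          exact (ContinuousLinearMap.toSpanSingletonCLE (𝕜 := ℂ) (E := ℂ)).continuous
        exact (ContinuousLinearMap.continuous_restrictScalars (𝕜 := ℂ) (𝕜' := ℝ)).comp h3
      refine ((h2.tendsto (d x)).comp h1).congr' ?_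
      have hx0 : x ≠ 0 := by rintro rfl; simp at hx
      filter_upwards [self_mem_nhdsWithin, mem_nhdsWithin_of_mem_nhds (isOpen_ne.mem_nhds hx0)]
        with y hy hy0
      have := (hd' y (by simpa using hy) hy0).hasFDerivAt.restrictScalars ℝ
      rw [this.fderiv]
      rfl
  rw [closure_ball _ one_ne_zero] at key
  subst hγx
  have h5 := key.comp_hasDerivWithinAt θ (hγ.hasDerivWithinAt (s := Set.univ))
    (fun s _ => by simp [hγn])
  rw [hasDerivWithinAt_univ] at h5
  refine h5.congr_deriv ?_
  simp

noncomputable def gam (θ : ℝ) : ℂ := -Complex.exp (I * θ)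

lemma gam_norm (θ : ℝ) : ‖gam θ‖ = 1 := by
  unfold gam
  rw [norm_neg, mul_comm, Complex.norm_exp_ofReal_mul_I]

lemma gam_ne (θ : ℝ) : gam θ ≠ 0 := by
  intro h
  have := gam_norm θ
  rw [h] at this
  simp at this

lemma gam_mem (θ : ℝ) : gam θ ∈ Metric.closedBall (0 : ℂ) 1 := by simp [gam_norm]

lemma cos_half_pos {θ : ℝ} (h : θ ∈ Set.Ioo (-Real.pi) Real.pi) : 0 < Real.cos (θ / 2) :=
  Real.cos_pos_of_mem_Ioo ⟨by linarith [h.1], by linarith [h.2]⟩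

lemma gam_deriv (θ : ℝ) : HasDerivAt gam (I * gam θ) θ := by
  have h1 : HasDerivAt (fun θ : ℝ => I * (θ : ℂ)) (I * 1) θ :=
    (Complex.ofRealCLM.hasDerivAt (x := θ)).const_mul I
  refine (HasDerivAt.fun_neg h1.cexp).congr_deriv ?_
  unfold gam
  ring

lemma one_sub_gam (θ : ℝ) :
    1 - gam θ = ((2 * Real.cos (θ / 2) : ℝ) : ℂ) * Complex.exp (((θ / 2 : ℝ) : ℂ) * I) := by
  unfold gam
  have h1 : Complex.exp (I * θ) = Complex.exp (((θ / 2 : ℝ) : ℂ) * I) ^ 2 := by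
    rw [← Complex.exp_nat_mul]; congr 1; push_cast; ring
  rw [h1, Complex.exp_mul_I, ← Complex.ofReal_cos, ← Complex.ofReal_sin]
  have h2 : ((Real.cos (θ / 2) : ℝ) : ℂ) ^ 2 + ((Real.sin (θ / 2) : ℝ) : ℂ) ^ 2 = 1 := by
    exact_mod_cast Real.cos_sq_add_sin_sq (θ / 2)
  push_cast at h2 ⊢
  linear_combination (-1) * h2 + (Complex.sin (θ / 2)) ^ 2 * I_sq

lemma one_sub_gam_ne {θ : ℝ} (h : θ ∈ Set.Ioo (-Real.pi) Real.pi) : 1 - gam θ ≠ 0 := by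
  rw [one_sub_gam]
  have := cos_half_pos h
  refine mul_ne_zero ?_ (Complex.exp_ne_zero _)
  exact_mod_cast (by positivity : (2 * Real.cos (θ / 2)) ≠ 0)

lemma gam_div {θ : ℝ} (h : θ ∈ Set.Ioo (-Real.pi) Real.pi) :
    gam θ / (1 - gam θ) = -(1 + I * (Real.tan (θ / 2) : ℝ)) / 2 := by
  rw [div_eq_iff (one_sub_gam_ne h)]
  have h2 : ((Real.cos (θ / 2) : ℝ) : ℂ) ^ 2 + ((Real.sin (θ / 2) : ℝ) : ℂ) ^ 2 = 1 := by
    exact_mod_cast Real.cos_sq_add_sin_sq (θ / 2)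
  have hc : ((Real.cos (θ / 2) : ℝ) : ℂ) ≠ 0 := by exact_mod_cast (cos_half_pos h).ne'
  have h3 := one_sub_gam θ
  rw [Complex.exp_mul_I, ← Complex.ofReal_cos, ← Complex.ofReal_sin, Complex.ofReal_mul] at h3
  rw [h3, Real.tan_eq_sin_div_cos, Complex.ofReal_div]
  rw [show gam θ = 1 - (1 - gam θ) by ring, h3]
  generalize ((Real.cos (θ / 2) : ℝ) : ℂ) = C at *
  generalize ((Real.sin (θ / 2) : ℝ) : ℂ) = S at *
  push_cast
  field_simp
  linear_combination (-1) * h2 + S ^ 2 * I_sq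

noncomputable def Psi (e μ θ : ℝ) : ℂ := Complex.exp (I * ((μ * θ : ℝ) : ℂ)) * ff e μ (gam θ)
noncomputable def Nth (e μ θ : ℝ) : ℂ := Complex.exp (I * ((μ * θ : ℝ) : ℂ)) * NN e μ (gam θ)
noncomputable def Kth (e μ θ : ℝ) : ℂ :=
  I * ((μ + (1 / 3 - e) / 2 : ℝ) : ℂ) * Psi e μ θ
    + (((Real.tan (θ / 2) : ℝ) : ℂ) - I) * ((kap e μ / 2 : ℝ) : ℂ) * Nth e μ θ

lemma phase_deriv (μ θ : ℝ) : HasDerivAt (fun θ : ℝ => Complex.exp (I * ((μ * θ : ℝ) : ℂ)))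
    (I * μ * Complex.exp (I * ((μ * θ : ℝ) : ℂ))) θ := by
  have h1 : HasDerivAt (fun θ : ℝ => I * ((μ * θ : ℝ) : ℂ)) (I * μ) θ := by
    have := ((hasDerivAt_id θ).const_mul μ).ofReal_comp.const_mul I
    simpa using this
  refine h1.cexp.congr_deriv ?_
  ring

lemma gam_ne_one {θ : ℝ} (h : θ ∈ Set.Ioo (-Real.pi) Real.pi) : gam θ ≠ 1 := by
  have := one_sub_gam_ne h
  intro h1
  rw [h1] at this
  simp at this

lemma Psi_deriv {e μ : ℝ} (g : Good e μ) {θ : ℝ} (h : θ ∈ Set.Ioo (-Real.pi) Real.pi) :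
    HasDerivAt (Psi e μ)
      (-((((1 / 3 - e) / 2 * Real.tan (θ / 2) : ℝ)) : ℂ) * Psi e μ θ + Kth e μ θ) θ := by
  have hb := bdry_deriv (f := ff e μ)
    (d := fun x => (-(1 / 3 - e) * ff e μ x + kap e μ * NN e μ x) / (1 - x)) (ff_cont g)
    (fun x hx => (ff_deriv g hx).differentiableAt) (fun x hx _ => ff_deriv g hx) (gam_norm θ)
    (by
      have h1 := ff_cont g _ (gam_mem θ)
      have h2 := NN_cont g _ (gam_mem θ)
      exact ((h1.const_mul _).add (h2.const_mul _)).div (by fun_prop) (one_sub_gam_ne h))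
    (gam_deriv θ) rfl gam_norm
  refine ((phase_deriv μ θ).mul hb).congr_deriv ?_
  have hg := gam_div h
  simp only [Kth, Psi, Nth]
  rw [show ∀ A B : ℂ, I * gam θ * (A / B) = I * (gam θ / B) * A by intros; ring, hg]
  push_cast
  linear_combination (-(1 / 3 - (e : ℂ)) * ff e μ (gam θ) + kap e μ * NN e μ (gam θ)) *
    Complex.exp (I * (μ * θ)) * (-(Complex.tan (θ / 2)) / 2) * I_sq

lemma Nth_deriv {e μ : ℝ} (g : Good e μ) {θ : ℝ} (h : θ ∈ Set.Ioo (-Real.pi) Real.pi) :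
    HasDerivAt (Nth e μ)
      (I * μ * Nth e μ θ + e * I * ((1 + I * (Real.tan (θ / 2) : ℝ)) / 2) * Nth e μ θ
        + I * (Psi e μ θ - (2 / 3 + 2 * μ) * Nth e μ θ)) θ := by
  have hb := bdry_deriv (f := NN e μ)
    (d := fun x => -(e * NN e μ x / (1 - x)) + (ff e μ x - (2 / 3 + 2 * μ) * NN e μ x) / x) (NN_cont g)
    (fun x hx => (NN_deriv g hx).choose_spec.1.differentiableAt)
    (fun x hx h0 => by
      obtain ⟨d, h1, h2⟩ := NN_deriv g hx
      rw [← h2 h0]; exact h1) (gam_norm θ)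
    (by
      have h1 := ff_cont g _ (gam_mem θ)
      have h2 := NN_cont g _ (gam_mem θ)
      exact (((h2.const_mul _).div (by fun_prop) (one_sub_gam_ne h)).neg).add
        ((h1.sub (h2.const_mul _)).div continuousWithinAt_id (gam_ne θ)))
    (gam_deriv θ) rfl gam_norm
  refine ((phase_deriv μ θ).mul hb).congr_deriv ?_
  have hg := gam_div h
  have h0 := gam_ne θ
  simp only [Psi, Nth]
  rw [show ∀ A B D : ℂ, I * gam θ * (-(A / B) + D / gam θ) = -I * (gam θ / B) * A + I * (gam θ / gam θ) * D by intros; ring, hg,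
    div_self h0]
  ring

lemma Kth_deriv {e μ : ℝ} (g : Good e μ) {θ : ℝ} (h : θ ∈ Set.Ioo (-Real.pi) Real.pi) :
    HasDerivAt (Kth e μ)
      ((((1 / 3 + (1 / 3 - e) / 2) * Real.tan (θ / 2) : ℝ) : ℂ) * Kth e μ θ
        + (((1 / 3 + (1 / 3 - e) / 2) * ((1 / 3 - e) / 2) : ℝ) : ℂ) * Psi e μ θ) θ := by
  have hT : HasDerivAt (fun θ : ℝ => ((Real.tan (θ / 2) : ℝ) : ℂ))
      (((1 + Real.tan (θ / 2) ^ 2) / 2 : ℝ) : ℂ) θ := by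
    have hc := (cos_half_pos h).ne'
    have h1 := (Real.hasDerivAt_tan hc).comp θ ((hasDerivAt_id θ).div_const 2)
    refine (h1.congr_deriv ?_).ofReal_comp
    rw [Real.tan_eq_sin_div_cos]
    have := Real.cos_sq_add_sin_sq (θ / 2)
    field_simp
    linarith
  have h1 := (Psi_deriv g h).const_mul (I * ((μ + (1 / 3 - e) / 2 : ℝ) : ℂ))
  have h2 := ((hT.sub_const I).mul_const ((kap e μ / 2 : ℝ) : ℂ)).mul (Nth_deriv g h)
  refine (h1.add h2).congr_deriv ?_
  simp only [Kth, kap]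
  generalize Psi e μ θ = A
  generalize Nth e μ θ = B
  generalize Real.tan (θ / 2) = T
  have hI := I_sq
  rcases g.hμ with h | h <;> rw [h] <;> push_cast
  · linear_combination ((0 + (1 / 3 - (e : ℂ)) / 2) ^ 2 * A - (0 + (1 / 3 - (e : ℂ)) / 2) * ((1 / 6 - (e : ℂ) / 2 + 0) * (4 / 3 - 2 * e) / 2) * B
      + ((1 / 6 - (e : ℂ) / 2 + 0) * (4 / 3 - 2 * e) / 2) * (T * e * T * B / 2 - (0 + e / 2 - (2 / 3 + 2 * 0)) * B - A) - ((1 / 6 - (e : ℂ) / 2 + 0) * (4 / 3 - 2 * e) / 2) * e * T * B / 2 * I) * hI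
  · linear_combination ((1 / 3 + (1 / 3 - (e : ℂ)) / 2) ^ 2 * A - (1 / 3 + (1 / 3 - (e : ℂ)) / 2) * ((1 / 6 - (e : ℂ) / 2 + 1 / 3) * (4 / 3 - 2 * e) / 2) * B
      + ((1 / 6 - (e : ℂ) / 2 + 1 / 3) * (4 / 3 - 2 * e) / 2) * (T * e * T * B / 2 - (1 / 3 + e / 2 - (2 / 3 + 2 * 1 / 3)) * B - A) - ((1 / 6 - (e : ℂ) / 2 + 1 / 3) * (4 / 3 - 2 * e) / 2) * e * T * B / 2 * I) * hI

lemma ode_unique {α β γ : ℝ} {y k : ℝ → ℝ}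
    (hy : ∀ θ ∈ Set.Ioo (-Real.pi) Real.pi, HasDerivAt y (α * Real.tan (θ / 2) * y θ + k θ) θ)
    (hk : ∀ θ ∈ Set.Ioo (-Real.pi) Real.pi,
      HasDerivAt k (β * Real.tan (θ / 2) * k θ + γ * y θ) θ)
    (hy0 : y 0 = 0) (hk0 : k 0 = 0) :
    ∀ θ ∈ Set.Ioo (-Real.pi) Real.pi, y θ = 0 ∧ k θ = 0 := by
  intro θ hθ
  obtain ⟨r, hr1, hr2⟩ := exists_between (abs_lt.2 hθ)
  have hr0 : 0 < r := lt_of_le_of_lt (abs_nonneg _) hr1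
  have hsub : ∀ s ∈ Set.Icc (-r) r, s ∈ Set.Ioo (-Real.pi) Real.pi :=
    fun s hs => ⟨by linarith [hs.1], by linarith [hs.2]⟩
  have hcont : ContinuousOn (fun s : ℝ => Real.tan (s / 2)) (Set.Icc (-r) r) := by
    intro s hs
    apply ContinuousAt.continuousWithinAt
    exact ContinuousAt.comp (f := fun s : ℝ => s / 2) (Real.continuousAt_tan.2 (cos_half_pos (hsub s hs)).ne') (by fun_prop)
  obtain ⟨τ, hτ⟩ := isCompact_Icc.exists_bound_of_continuousOn hcont
  have hτ0 : 0 ≤ τ := (norm_nonneg _).trans (hτ 0 ⟨by linarith, hr0.le⟩)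
  set L : ℝ := |α| * τ + 1 + |β| * τ + |γ| with hL
  have hL0 : 0 ≤ L := by positivity
  have := ODE_solution_unique_of_mem_Ioo (a := -r) (b := r) (t₀ := 0) (K := ⟨L, hL0⟩)
    (v := fun s (p : ℝ × ℝ) => (α * Real.tan (s / 2) * p.1 + p.2, β * Real.tan (s / 2) * p.2 + γ * p.1))
    (s := fun _ => Set.univ) (f := fun s => (y s, k s)) (g := fun _ => (0, 0))
    (by
      intro s hs
      apply LipschitzOnWith.of_dist_le_mul
      intro p _ q _
      have hT := hτ s ⟨hs.1.le, hs.2.le⟩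
      rw [Real.norm_eq_abs] at hT
      have hp1 : |p.1 - q.1| ≤ dist p q := by
        rw [Prod.dist_eq]; exact le_max_left _ _
      have hp2 : |p.2 - q.2| ≤ dist p q := by
        rw [Prod.dist_eq]; exact le_max_right _ _
      have hd0 : 0 ≤ dist p q := dist_nonneg
      rw [Prod.dist_eq (x := (_, _))]
      show _ ≤ L * dist p q
      apply max_le
      · rw [Real.dist_eq, show α * Real.tan (s / 2) * p.1 + p.2 - (α * Real.tan (s / 2) * q.1 + q.2)
          = α * Real.tan (s / 2) * (p.1 - q.1) + (p.2 - q.2) by ring]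
        calc _ ≤ |α| * |Real.tan (s / 2)| * |p.1 - q.1| + |p.2 - q.2| := by
                rw [← abs_mul, ← abs_mul]; exact abs_add_le _ _
          _ ≤ |α| * τ * dist p q + dist p q := by gcongr
          _ ≤ L * dist p q := by
                have : 0 ≤ (|β| * τ + |γ|) * dist p q := by positivity
                rw [hL]; linarith
      · rw [Real.dist_eq, show β * Real.tan (s / 2) * p.2 + γ * p.1 - (β * Real.tan (s / 2) * q.2 + γ * q.1)
          = β * Real.tan (s / 2) * (p.2 - q.2) + γ * (p.1 - q.1) by ring]
        calc _ ≤ |β| * |Real.tan (s / 2)| * |p.2 - q.2| + |γ| * |p.1 - q.1| := by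
                rw [← abs_mul, ← abs_mul, ← abs_mul]; exact abs_add_le _ _
          _ ≤ |β| * τ * dist p q + |γ| * dist p q := by gcongr
          _ ≤ L * dist p q := by
                have : 0 ≤ (|α| * τ + 1) * dist p q := by positivity
                rw [hL]; linarith)
    ⟨by linarith, hr0⟩
    (fun s hs => ⟨(hy s (hsub s ⟨hs.1.le, hs.2.le⟩)).prodMk (hk s (hsub s ⟨hs.1.le, hs.2.le⟩)), trivial⟩)
    (fun s _ => ⟨(hasDerivAt_const s ((0 : ℝ), (0 : ℝ))).congr_deriv (by ext <;> simp), trivial⟩)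
    (by simp [hy0, hk0])
  have h2 := this (abs_lt.1 hr1)
  simpa using h2

lemma PP_gam (e : ℝ) {θ : ℝ} (h : θ ∈ Set.Ioo (-Real.pi) Real.pi) :
    PP e (gam θ) = (((2 * Real.cos (θ / 2)) ^ e : ℝ) : ℂ) * Complex.exp (I * ((e / 2 * θ : ℝ) : ℂ)) := by
  have hc : 0 < 2 * Real.cos (θ / 2) := by linarith [cos_half_pos h]
  unfold PP
  rw [one_sub_gam, Complex.cpow_def_of_ne_zero (by
      rw [← one_sub_gam]; exact one_sub_gam_ne h),
    Complex.log_ofReal_mul hc (Complex.exp_ne_zero _), Complex.log_exp, Real.rpow_def_of_pos hc,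
    Complex.ofReal_exp, ← Complex.exp_add]
  · congr 1
    push_cast
    ring
  · simp; linarith [h.1, Real.pi_pos]
  · simp; linarith [h.2, Real.pi_pos]

lemma gam_cont : Continuous gam := by unfold gam; fun_prop

lemma comp_gam_cont {f : ℂ → ℂ} (hf : ContinuousOn f (Metric.closedBall 0 1)) :
    Continuous (fun θ : ℝ => f (gam θ)) := by
  exact hf.comp_continuous gam_cont gam_mem

lemma gam_pi : gam Real.pi = 1 := by
  unfold gam
  rw [mul_comm, Complex.exp_pi_mul_I]; simp

lemma gam_zero : gam 0 = ((-1 : ℝ) : ℂ) := by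
  unfold gam
  simp

lemma Psi_cont {e μ : ℝ} (g : Good e μ) : Continuous (Psi e μ) := by
  unfold Psi
  exact Continuous.mul (by fun_prop) (comp_gam_cont (ff_cont g))

lemma Kth_lim {e μ : ℝ} (g : Good e μ) : ∃ C : ℝ, 0 < C ∧
    Filter.Tendsto (fun θ : ℝ => ((Real.cos (θ / 2) ^ (1 - e) : ℝ) : ℂ) * Kth e μ θ)
      (nhdsWithin Real.pi (Set.Iio Real.pi))
      (nhds ((C : ℂ) * Complex.exp (I * (((e / 2 + μ) * Real.pi : ℝ) : ℂ)))) := by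
  obtain ⟨r, hr, hmm⟩ := mm_one g
  have hk := kap_pos g
  refine ⟨kap e μ / 2 * 2 ^ e * r, by positivity, ?_⟩
  have he : 0 < 1 - e := by linarith [g.he6]
  have hcont : Continuous (fun θ : ℝ => ((Real.cos (θ / 2) ^ (1 - e) : ℝ) : ℂ) *
      (I * ((μ + (1 / 3 - e) / 2 : ℝ) : ℂ) * Psi e μ θ) +
      (((Real.sin (θ / 2) : ℝ) : ℂ) - I * ((Real.cos (θ / 2) : ℝ) : ℂ)) * ((kap e μ / 2 * 2 ^ e : ℝ) : ℂ)
        * Complex.exp (I * (((e / 2 + μ) * θ : ℝ) : ℂ)) * mm e μ (gam θ)) := by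
    refine Continuous.add (Continuous.mul ?_ (continuous_const.mul (Psi_cont g)))
      (Continuous.mul (by fun_prop) (comp_gam_cont (mm_cont g)))
    exact Complex.continuous_ofReal.comp
      (Continuous.rpow_const (by fun_prop) (fun _ => Or.inr he.le))
  have hl := (hcont.tendsto Real.pi).mono_left (nhdsWithin_le_nhds (s := Set.Iio Real.pi))
  refine Filter.Tendsto.congr' ?_ (le_trans hl (le_of_eq ?_))
  · have hmem : Set.Ioo (-Real.pi) Real.pi ∈ nhdsWithin Real.pi (Set.Iio Real.pi) :=
      Ioo_mem_nhdsLT (by linarith [Real.pi_pos])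
    filter_upwards [hmem] with θ h
    have hc := cos_half_pos h
    simp only [Kth, Nth, NN]
    rw [PP_gam e h, Real.mul_rpow (by norm_num) hc.le, Real.tan_eq_sin_div_cos,
      Real.rpow_sub hc, Real.rpow_one]
    have h1 : Complex.exp (I * (((e / 2 + μ) * θ : ℝ) : ℂ)) =
        Complex.exp (I * ((μ * θ : ℝ) : ℂ)) * Complex.exp (I * ((e / 2 * θ : ℝ) : ℂ)) := by
      rw [← Complex.exp_add]; congr 1; push_cast; ring
    rw [h1]
    have hce : ((Real.cos (θ / 2) ^ e : ℝ) : ℂ) ≠ 0 := by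
      exact_mod_cast (Real.rpow_pos_of_pos hc e).ne'
    have hc0 : ((Real.cos (θ / 2) : ℝ) : ℂ) ≠ 0 := by exact_mod_cast hc.ne'
    simp only [Complex.ofReal_mul, Complex.ofReal_div]
    generalize ((Real.cos (θ / 2) ^ e : ℝ) : ℂ) = X at *
    generalize ((Real.cos (θ / 2) : ℝ) : ℂ) = Y at *
    field_simp
  · congr 1
    simp only [gam_pi, hmm, Real.cos_pi_div_two, Real.sin_pi_div_two, Real.zero_rpow he.ne']
    push_cast
    ring

lemma Psi_zero_im (e μ : ℝ) : (Psi e μ 0).im = 0 := by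
  unfold Psi
  rw [gam_zero]
  simp only [mul_zero, Complex.ofReal_zero, Complex.exp_zero, one_mul]
  exact ps_conj _ _

lemma Kth_zero_re (e μ : ℝ) : (Kth e μ 0).re = 0 := by
  unfold Kth
  have h1 := Psi_zero_im e μ
  have h2 : (Nth e μ 0).im = 0 := by
    unfold Nth NN
    rw [PP_gam e ⟨by linarith [Real.pi_pos], Real.pi_pos⟩, gam_zero]
    have := ps_conj (fun n => hh e μ n / (2 / 3 + 2 * μ + n)) (-1)
    simp only [mul_zero, Complex.ofReal_zero, Complex.exp_zero, one_mul, mul_one, mm]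
    rw [Complex.im_ofReal_mul, this, mul_zero]
  simp only [zero_div, Real.tan_zero, Complex.add_re, Complex.mul_re, Complex.mul_im, Complex.I_re,
    Complex.I_im, Complex.ofReal_re, Complex.ofReal_im, Complex.sub_re, Complex.sub_im, h1, h2]
  ring

lemma prop_real {α β γ : ℝ} {y₁ k₁ y₂ k₂ w : ℝ → ℝ} {L₁ L₂ : ℝ}
    (hy₁ : ∀ θ ∈ Set.Ioo (-Real.pi) Real.pi, HasDerivAt y₁ (α * Real.tan (θ / 2) * y₁ θ + k₁ θ) θ)
    (hk₁ : ∀ θ ∈ Set.Ioo (-Real.pi) Real.pi,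
      HasDerivAt k₁ (β * Real.tan (θ / 2) * k₁ θ + γ * y₁ θ) θ)
    (hy₂ : ∀ θ ∈ Set.Ioo (-Real.pi) Real.pi, HasDerivAt y₂ (α * Real.tan (θ / 2) * y₂ θ + k₂ θ) θ)
    (hk₂ : ∀ θ ∈ Set.Ioo (-Real.pi) Real.pi,
      HasDerivAt k₂ (β * Real.tan (θ / 2) * k₂ θ + γ * y₂ θ) θ)
    (hl₁ : Filter.Tendsto (fun θ => w θ * k₁ θ) (nhdsWithin Real.pi (Set.Iio Real.pi)) (nhds L₁))
    (hl₂ : Filter.Tendsto (fun θ => w θ * k₂ θ) (nhdsWithin Real.pi (Set.Iio Real.pi)) (nhds L₂))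
    (hL₂ : L₂ ≠ 0)
    (a b : ℝ) (h0 : a * y₁ 0 = b * y₂ 0) (h0' : a * k₁ 0 = b * k₂ 0)
    (ha : a = 0 → y₂ 0 = 0 ∧ k₂ 0 = 0) :
    ∀ θ ∈ Set.Ioo (-Real.pi) Real.pi, L₂ * y₁ θ = L₁ * y₂ θ := by
  have hmem : Set.Ioo (-Real.pi) Real.pi ∈ nhdsWithin Real.pi (Set.Iio Real.pi) :=
    Ioo_mem_nhdsLT (by linarith [Real.pi_pos])
  have hane : a ≠ 0 := by
    intro h
    obtain ⟨h1, h2⟩ := ha h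
    have := ode_unique hy₂ hk₂ h1 h2
    apply hL₂
    refine tendsto_nhds_unique hl₂ ((tendsto_const_nhds (x := (0 : ℝ))).congr' ?_)
    filter_upwards [hmem] with θ hθ
    rw [(this θ hθ).2, mul_zero]
  have key := ode_unique (α := α) (β := β) (γ := γ) (y := fun θ => a * y₁ θ - b * y₂ θ)
    (k := fun θ => a * k₁ θ - b * k₂ θ)
    (fun θ h => (((hy₁ θ h).const_mul a).sub ((hy₂ θ h).const_mul b)).congr_deriv (by ring))
    (fun θ h => (((hk₁ θ h).const_mul a).sub ((hk₂ θ h).const_mul b)).congr_deriv (by ring))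
    (by linarith) (by linarith)
  have hL : a * L₁ - b * L₂ = 0 := by
    refine tendsto_nhds_unique ((hl₁.const_mul a).sub (hl₂.const_mul b))
      ((tendsto_const_nhds (x := (0 : ℝ))).congr' ?_)
    filter_upwards [hmem] with θ hθ
    have := (key θ hθ).2
    linear_combination (- w θ) * this
  intro θ hθ
  have h3 := (key θ hθ).1
  apply mul_left_cancel₀ hane
  linear_combination L₂ * h3 - y₂ θ * hL

lemma re_deriv {f : ℝ → ℂ} {d : ℂ} {θ : ℝ} (h : HasDerivAt f d θ) :
    HasDerivAt (fun s => (f s).re) d.re θ :=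
  (Complex.reCLM.hasFDerivAt.comp_hasDerivAt θ h)

lemma im_deriv {f : ℝ → ℂ} {d : ℂ} {θ : ℝ} (h : HasDerivAt f d θ) :
    HasDerivAt (fun s => (f s).im) d.im θ :=
  (Complex.imCLM.hasFDerivAt.comp_hasDerivAt θ h)

lemma main_rel {e : ℝ} (he : 0 < e) (he6 : e ≤ 1 / 6) : ∃ C₁ C₂ : ℝ, 0 < C₁ ∧ 0 < C₂ ∧
    ∀ θ ∈ Set.Ioo (-Real.pi) Real.pi,
      C₂ * Real.cos ((e / 2 + 1 / 3) * Real.pi) * (Psi e 0 θ).re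
        = C₁ * Real.cos ((e / 2) * Real.pi) * (Psi e (1 / 3) θ).re ∧
      C₂ * Real.sin ((e / 2 + 1 / 3) * Real.pi) * (Psi e 0 θ).im
        = C₁ * Real.sin ((e / 2) * Real.pi) * (Psi e (1 / 3) θ).im := by
  have g1 : Good e 0 := ⟨he, he6, Or.inl rfl⟩
  have g2 : Good e (1 / 3) := ⟨he, he6, Or.inr rfl⟩
  obtain ⟨C₁, hC1, hl1⟩ := Kth_lim g1
  obtain ⟨C₂, hC2, hl2⟩ := Kth_lim g2
  refine ⟨C₁, C₂, hC1, hC2, ?_⟩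
  have hpi := Real.pi_pos
  have hc2 : 0 < Real.cos ((e / 2 + 1 / 3) * Real.pi) :=
    Real.cos_pos_of_mem_Ioo ⟨by nlinarith, by nlinarith⟩
  have hs2 : 0 < Real.sin ((e / 2 + 1 / 3) * Real.pi) :=
    Real.sin_pos_of_pos_of_lt_pi (by positivity) (by nlinarith)
  have hre : ∀ {C μ : ℝ}, Filter.Tendsto (fun θ : ℝ => ((Real.cos (θ / 2) ^ (1 - e) : ℝ) : ℂ) * Kth e μ θ)
      (nhdsWithin Real.pi (Set.Iio Real.pi))
      (nhds ((C : ℂ) * Complex.exp (I * (((e / 2 + μ) * Real.pi : ℝ) : ℂ)))) →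
      Filter.Tendsto (fun θ : ℝ => Real.cos (θ / 2) ^ (1 - e) * (Kth e μ θ).re)
      (nhdsWithin Real.pi (Set.Iio Real.pi)) (nhds (C * Real.cos ((e / 2 + μ) * Real.pi))) := by
    intro C μ h
    have := (Complex.continuous_re.tendsto _).comp h
    rw [Complex.re_ofReal_mul, mul_comm I, Complex.exp_ofReal_mul_I_re] at this
    refine this.congr fun θ => ?_
    simp only [Function.comp, Complex.re_ofReal_mul]
  have him : ∀ {C μ : ℝ}, Filter.Tendsto (fun θ : ℝ => ((Real.cos (θ / 2) ^ (1 - e) : ℝ) : ℂ) * Kth e μ θ)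
      (nhdsWithin Real.pi (Set.Iio Real.pi))
      (nhds ((C : ℂ) * Complex.exp (I * (((e / 2 + μ) * Real.pi : ℝ) : ℂ)))) →
      Filter.Tendsto (fun θ : ℝ => Real.cos (θ / 2) ^ (1 - e) * (Kth e μ θ).im)
      (nhdsWithin Real.pi (Set.Iio Real.pi)) (nhds (C * Real.sin ((e / 2 + μ) * Real.pi))) := by
    intro C μ h
    have := (Complex.continuous_im.tendsto _).comp h
    rw [Complex.im_ofReal_mul, mul_comm I, Complex.exp_ofReal_mul_I_im] at this
    refine this.congr fun θ => ?_
    simp only [Function.comp, Complex.im_ofReal_mul]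
  have dy : ∀ {μ : ℝ}, Good e μ → ∀ θ ∈ Set.Ioo (-Real.pi) Real.pi,
      HasDerivAt (fun s => (Psi e μ s).re)
        (-((1 / 3 - e) / 2) * Real.tan (θ / 2) * (Psi e μ θ).re + (Kth e μ θ).re) θ ∧
      HasDerivAt (fun s => (Psi e μ s).im)
        (-((1 / 3 - e) / 2) * Real.tan (θ / 2) * (Psi e μ θ).im + (Kth e μ θ).im) θ := by
    intro μ g θ h
    have := Psi_deriv g h
    rw [← Complex.ofReal_neg] at this
    refine ⟨(re_deriv this).congr_deriv ?_, (im_deriv this).congr_deriv ?_⟩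
    · rw [Complex.add_re, Complex.re_ofReal_mul]; ring
    · rw [Complex.add_im, Complex.im_ofReal_mul]; ring
  have dk : ∀ {μ : ℝ}, Good e μ → ∀ θ ∈ Set.Ioo (-Real.pi) Real.pi,
      HasDerivAt (fun s => (Kth e μ s).re)
        ((1 / 3 + (1 / 3 - e) / 2) * Real.tan (θ / 2) * (Kth e μ θ).re +
          (1 / 3 + (1 / 3 - e) / 2) * ((1 / 3 - e) / 2) * (Psi e μ θ).re) θ ∧
      HasDerivAt (fun s => (Kth e μ s).im)
        ((1 / 3 + (1 / 3 - e) / 2) * Real.tan (θ / 2) * (Kth e μ θ).im +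
          (1 / 3 + (1 / 3 - e) / 2) * ((1 / 3 - e) / 2) * (Psi e μ θ).im) θ := by
    intro μ g θ h
    have := Kth_deriv g h
    refine ⟨(re_deriv this).congr_deriv ?_, (im_deriv this).congr_deriv ?_⟩
    · rw [Complex.add_re, Complex.re_ofReal_mul, Complex.re_ofReal_mul]
    · rw [Complex.add_im, Complex.im_ofReal_mul, Complex.im_ofReal_mul]
  have R := prop_real (fun θ h => (dy g1 θ h).1) (fun θ h => (dk g1 θ h).1)
    (fun θ h => (dy g2 θ h).1) (fun θ h => (dk g2 θ h).1) (hre hl1) (hre hl2)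
    (mul_pos hC2 hc2).ne' (Psi e (1 / 3) 0).re (Psi e 0 0).re (by ring)
    (by simp [Kth_zero_re]) (fun h => ⟨h, Kth_zero_re _ _⟩)
  have J := prop_real (fun θ h => (dy g1 θ h).2) (fun θ h => (dk g1 θ h).2)
    (fun θ h => (dy g2 θ h).2) (fun θ h => (dk g2 θ h).2) (him hl1) (him hl2)
    (mul_pos hC2 hs2).ne' (Kth e (1 / 3) 0).im (Kth e 0 0).im (by simp [Psi_zero_im])
    (by ring) (fun h => ⟨Psi_zero_im _ _, h⟩)
  intro θ hθ
  have h1 := R θ hθ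
  have h2 := J θ hθ
  rw [add_zero] at h1 h2
  exact ⟨h1, h2⟩

lemma exists_gam {x : ℂ} (hx : ‖x‖ = 1) : ∃ θ ∈ Set.Icc (-Real.pi) Real.pi, x = gam θ := by
  refine ⟨Complex.arg (-x), ⟨(Complex.neg_pi_lt_arg _).le, Complex.arg_le_pi _⟩, ?_⟩
  have := Complex.norm_mul_exp_arg_mul_I (-x)
  rw [norm_neg, hx, Complex.ofReal_one, one_mul] at this
  unfold gam
  rw [mul_comm, this, neg_neg]

lemma exists_e {t : ℝ} (ht0 : Real.sqrt 3 / 2 ≤ t) (ht1 : t < 1) :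
    ∃ e : ℝ, 0 < e ∧ e ≤ 1 / 6 ∧ t * Real.sin (e * Real.pi + Real.pi / 3) = Real.sqrt 3 / 2 := by
  have h3 : 0 < Real.sqrt 3 := by positivity
  have ht : 0 < t := by linarith
  have hpi := Real.pi_pos
  set a := Real.arcsin (Real.sqrt 3 / 2 / t) with ha
  have h1 : Real.sin a = Real.sqrt 3 / 2 / t :=
    Real.sin_arcsin (by have : 0 < Real.sqrt 3 / 2 / t := by positivity
                        linarith) (by rw [div_le_one ht]; exact ht0)
  have h2 : Real.pi / 3 < a := by
    rw [ha, Real.lt_arcsin_iff_sin_lt' ⟨by linarith, by linarith⟩, Real.sin_pi_div_three,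
      lt_div_iff₀ ht]
    nlinarith
  have h4 : a ≤ Real.pi / 2 := Real.arcsin_le_pi_div_two _
  refine ⟨(a - Real.pi / 3) / Real.pi, div_pos (by linarith) hpi, ?_, ?_⟩
  · rw [div_le_iff₀ hpi]; linarith
  · rw [div_mul_cancel₀ _ hpi.ne', sub_add_cancel, h1]
    field_simp

lemma disc_rel {t : ℝ} (ht0 : Real.sqrt 3 / 2 ≤ t) (ht1 : t < 1) :
    ∃ e : ℝ, Good e 0 ∧ Good e (1 / 3) ∧ ff e 0 1 = 0 ∧ ff e (1 / 3) 1 = 0 ∧ ∃ l : ℝ,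
      ∀ x : ℂ, ‖x‖ = 1 → ∃ U : ℂ, ff e 0 x = U + t * conj U ∧
        U ^ 3 = -(l : ℂ) ^ 3 * x * ff e (1 / 3) x ^ 3 := by
  obtain ⟨e, he, he6, hte⟩ := exists_e ht0 ht1
  have g1 : Good e 0 := ⟨he, he6, Or.inl rfl⟩
  have g2 : Good e (1 / 3) := ⟨he, he6, Or.inr rfl⟩
  obtain ⟨C₁, C₂, hC1, hC2, hrel⟩ := main_rel he he6
  have hpi := Real.pi_pos
  have h3 : 0 < Real.sqrt 3 := by positivity
  have ht : 0 < t := by linarith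
  set ca := Real.cos (e / 2 * Real.pi) with hca
  set sa := Real.sin (e / 2 * Real.pi) with hsa
  set cb := Real.cos ((e / 2 + 1 / 3) * Real.pi) with hcb
  set sb := Real.sin ((e / 2 + 1 / 3) * Real.pi) with hsb
  have pca : 0 < ca := Real.cos_pos_of_mem_Ioo ⟨by nlinarith, by nlinarith⟩
  have psa : 0 < sa := Real.sin_pos_of_pos_of_lt_pi (by positivity) (by nlinarith)
  have pcb : 0 < cb := Real.cos_pos_of_mem_Ioo ⟨by nlinarith, by nlinarith⟩
  have psb : 0 < sb := Real.sin_pos_of_pos_of_lt_pi (by positivity) (by nlinarith)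
  have e1 : ca * sb - sa * cb = Real.sqrt 3 / 2 := by
    rw [← Real.sin_pi_div_three, show Real.pi / 3 = (e / 2 + 1 / 3) * Real.pi - e / 2 * Real.pi by ring,
      Real.sin_sub]; ring
  have e2 : t * (ca * sb + sa * cb) = Real.sqrt 3 / 2 := by
    rw [← hte, show e * Real.pi + Real.pi / 3 = (e / 2 + 1 / 3) * Real.pi + e / 2 * Real.pi by ring,
      Real.sin_add]; ring
  -- extend the relations to the closed interval
  have hcl : ∀ θ ∈ Set.Icc (-Real.pi) Real.pi,
      C₂ * cb * (Psi e 0 θ).re = C₁ * ca * (Psi e (1 / 3) θ).re ∧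
      C₂ * sb * (Psi e 0 θ).im = C₁ * sa * (Psi e (1 / 3) θ).im := by
    have c1 := Psi_cont g1
    have c2 := Psi_cont g2
    have E1 : Set.EqOn (fun θ => C₂ * cb * (Psi e 0 θ).re) (fun θ => C₁ * ca * (Psi e (1 / 3) θ).re)
        (Set.Ioo (-Real.pi) Real.pi) := fun θ h => (hrel θ h).1
    have E2 : Set.EqOn (fun θ => C₂ * sb * (Psi e 0 θ).im) (fun θ => C₁ * sa * (Psi e (1 / 3) θ).im)
        (Set.Ioo (-Real.pi) Real.pi) := fun θ h => (hrel θ h).2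
    have F1 := E1.closure (continuous_const.mul (Complex.continuous_re.comp c1))
      (continuous_const.mul (Complex.continuous_re.comp c2))
    have F2 := E2.closure (continuous_const.mul (Complex.continuous_im.comp c1))
      (continuous_const.mul (Complex.continuous_im.comp c2))
    rw [closure_Ioo (by linarith)] at F1 F2
    exact fun θ h => ⟨F1 h, F2 h⟩
  have i1 : (ff e 0 1).im = 0 := by
    have := ps_conj (cco e (e + 0) (e + 1 / 3 + 0) (2 / 3 + 2 * 0)) 1
    rwa [Complex.ofReal_one] at this
  have i2 : (ff e (1 / 3) 1).im = 0 := by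
    have := ps_conj (cco e (e + 1 / 3) (e + 1 / 3 + 1 / 3) (2 / 3 + 2 * (1 / 3))) 1
    rwa [Complex.ofReal_one] at this
  have hpiend := hcl Real.pi ⟨by linarith, le_rfl⟩
  have P1 : Psi e 0 Real.pi = ff e 0 1 := by unfold Psi; rw [gam_pi]; simp
  have P2 : (Psi e (1 / 3) Real.pi).im = Real.sin (1 / 3 * Real.pi) * (ff e (1 / 3) 1).re := by
    unfold Psi
    rw [gam_pi, Complex.mul_im, i2, mul_comm I, Complex.exp_ofReal_mul_I_im]; ring
  have s3 : 0 < Real.sin (1 / 3 * Real.pi) :=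
    Real.sin_pos_of_pos_of_lt_pi (by positivity) (by nlinarith)
  have z2 : ff e (1 / 3) 1 = 0 := by
    have h := hpiend.2
    rw [P1, P2, i1, mul_zero] at h
    apply Complex.ext
    · have h2 : C₁ * sa * Real.sin (1 / 3 * Real.pi) ≠ 0 := by positivity
      apply mul_left_cancel₀ h2
      simp only [Complex.zero_re]
      linarith
    · exact i2
  have z1 : ff e 0 1 = 0 := by
    have h := hpiend.1
    have P3 : Psi e (1 / 3) Real.pi = 0 := by unfold Psi; rw [gam_pi, z2, mul_zero]
    rw [P1, P3, Complex.zero_re, mul_zero] at h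
    apply Complex.ext
    · have h2 : C₂ * cb ≠ 0 := by positivity
      apply mul_left_cancel₀ h2
      simp only [Complex.zero_re]
      linarith
    · exact i1
  refine ⟨e, g1, g2, z1, z2, C₁ * ca / (C₂ * cb) / (1 + t), ?_⟩
  set l := C₁ * ca / (C₂ * cb) / (1 + t) with hl
  have l1 : (1 + t) * l * (C₂ * cb) = C₁ * ca := by
    rw [hl]; field_simp
  have l2 : (1 - t) * l * (C₂ * sb) = C₁ * sa := by
    have : (1 - t) * (ca * sb) = (1 + t) * (sa * cb) := by linarith
    rw [hl]; field_simp; linarith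
  intro x hx
  obtain ⟨θ, hθ, rfl⟩ := exists_gam hx
  obtain ⟨r1, r2⟩ := hcl θ hθ
  refine ⟨l * Psi e (1 / 3) θ, ?_, ?_⟩
  · have P1 : Psi e 0 θ = ff e 0 (gam θ) := by unfold Psi; simp
    rw [← P1]
    apply Complex.ext
    · simp only [Complex.add_re, map_mul, Complex.conj_ofReal, Complex.re_ofReal_mul, Complex.conj_re]
      have h2 : C₂ * cb ≠ 0 := by positivity
      apply mul_left_cancel₀ h2
      rw [r1, ← l1]; ring
    · simp only [Complex.add_im, map_mul, Complex.conj_ofReal, Complex.im_ofReal_mul, Complex.conj_im]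
      have h2 : C₂ * sb ≠ 0 := by positivity
      apply mul_left_cancel₀ h2
      rw [r2, ← l2]; ring
  · unfold Psi gam
    have : Complex.exp (I * θ) = Complex.exp (I * ((1 / 3 * θ : ℝ) : ℂ)) ^ 3 := by
      rw [← Complex.exp_nat_mul]; congr 1; push_cast; ring
    rw [this]
    ring

lemma ff_zero_zero (e : ℝ) : ff e 0 0 = 1 := by
  unfold ff ps
  rw [tsum_eq_single 0 (by intro n hn; simp [hn])]
  simp [cco, qco, hco]

theorem hull_lemma {K : Set (ℂ × ℂ)} {R : ℝ} (hK : ∀ w ∈ K, ‖w.1‖ ≤ R ∧ ‖w.2‖ ≤ R)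
    {f g : ℂ → ℂ} (hf : ContinuousOn f (Metric.closedBall 0 1)) (hg : ContinuousOn g (Metric.closedBall 0 1))
    (df : DifferentiableOn ℂ f (Metric.ball 0 1)) (dg : DifferentiableOn ℂ g (Metric.ball 0 1))
    (hb : ∀ x : ℂ, ‖x‖ = 1 → (f x, g x) ∈ K) {x : ℂ} (hx : x ∈ Metric.closedBall (0 : ℂ) 1) :
    (f x, g x) ∈ polyHull2 K := by
  intro p
  have hev : Differentiable ℂ (fun w : ℂ × ℂ => MvPolynomial.eval (fun i : Fin 2 => if i = 0 then w.1 else w.2) p) := by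
    induction p using MvPolynomial.induction_on with
    | C a => simp
    | add p q hp hq => simp only [map_add]; exact hp.add hq
    | mul_X p i hp =>
      simp only [map_mul, MvPolynomial.eval_X]
      refine hp.mul ?_
      fin_cases i
      · simp
      · simp
  set G := (fun w : ℂ × ℂ => MvPolynomial.eval (fun i : Fin 2 => if i = 0 then w.1 else w.2) p) with hG
  have hbdd : BddAbove ((fun w : ℂ × ℂ => ‖G w‖) '' K) := by
    obtain ⟨M, hM⟩ := (isCompact_closedBall (0 : ℂ × ℂ) R).exists_bound_of_continuousOn
      hev.continuous.continuousOn
    refine ⟨M, ?_⟩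
    rintro _ ⟨w, hw, rfl⟩
    apply hM
    rw [mem_closedBall_zero_iff, Prod.norm_def]
    exact max_le (hK w hw).1 (hK w hw).2
  have hcl : closure (Metric.ball (0 : ℂ) 1) = Metric.closedBall 0 1 := closure_ball _ one_ne_zero
  have hd : DiffContOnCl ℂ (fun x => G (f x, g x)) (Metric.ball (0 : ℂ) 1) := by
    constructor
    · exact hev.comp_differentiableOn (df.prodMk dg)
    · rw [hcl]
      exact hev.continuous.comp_continuousOn (hf.prodMk hg)
  refine Complex.norm_le_of_forall_mem_frontier_norm_le Metric.isBounded_ball hd ?_ (hcl ▸ hx)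
  intro y hy
  rw [frontier_ball _ one_ne_zero, mem_sphere_zero_iff_norm] at hy
  exact le_csSup hbdd ⟨_, hb y hy, rfl⟩

/-- for `√3/2 ≤ t < 1` and every `δ > 0`, the polynomially convex hull of
`S_t ∩ B̄(0;δ)` contains a one-parameter family of analytic discs with boundary in `S_t`
passing through the origin. -/
theorem stmt_9 (t : ℝ) (ht0 : Real.sqrt 3 / 2 ≤ t) (ht1 : t < 1) (δ : ℝ) (hδ : 0 < δ) :
    ∃ F : ℝ × ℂ → ℂ × ℂ,
      ContinuousOn F (Set.Ioo (0 : ℝ) 1 ×ˢ Metric.closedBall (0 : ℂ) 1) ∧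
      (∀ s ∈ Set.Ioo (0 : ℝ) 1,
        -- `φ_s` is holomorphic on the open unit disc
        DifferentiableOn ℂ (fun ζ => F (s, ζ)) (Metric.ball (0 : ℂ) 1) ∧
        -- `φ_s` is nonconstant
        (¬ ∀ ζ₁ ∈ Metric.closedBall (0 : ℂ) 1, ∀ ζ₂ ∈ Metric.closedBall (0 : ℂ) 1,
            F (s, ζ₁) = F (s, ζ₂)) ∧
        -- `φ_s(∂𝔻) ⊆ S_t ∩ B̄(0;δ)`
        (∀ ζ : ℂ, ‖ζ‖ = 1 → F (s, ζ) ∈ Sset t ∩ eClosedBall δ) ∧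
        -- `0 ∈ φ_s(∂𝔻)`
        (∃ ζ : ℂ, ‖ζ‖ = 1 ∧ F (s, ζ) = 0) ∧
        -- `φ_s(𝔻̄)` lies in the polynomially convex hull of `S_t ∩ B̄(0;δ)`
        (∀ ζ ∈ Metric.closedBall (0 : ℂ) 1, F (s, ζ) ∈ polyHull2 (Sset t ∩ eClosedBall δ))) ∧
      -- the images for distinct parameters are distinct
      (∀ s₁ ∈ Set.Ioo (0 : ℝ) 1, ∀ s₂ ∈ Set.Ioo (0 : ℝ) 1, s₁ ≠ s₂ →
        (fun ζ => F (s₁, ζ)) '' Metric.closedBall (0 : ℂ) 1 ≠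
          (fun ζ => F (s₂, ζ)) '' Metric.closedBall (0 : ℂ) 1) := by
  obtain ⟨e, g1, g2, z1, z2, l, hU⟩ := disc_rel ht0 ht1
  have h3 : 0 < Real.sqrt 3 := by positivity
  have ht : 0 < t := by linarith
  have htC : (t : ℂ) ≠ 0 := by exact_mod_cast ht.ne'
  set a : ℂ → ℂ := fun x => I * ff e 0 x with ha
  set b : ℂ → ℂ := fun x => 1 / (3 * t) * (I * ((1 - (t : ℂ) ^ 2) ^ 3 * (l : ℂ) ^ 3 * x * ff e (1 / 3) x ^ 3
    + ff e 0 x ^ 3)) with hb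
  have ca : ContinuousOn a (Metric.closedBall 0 1) := continuousOn_const.mul (ff_cont g1)
  have cb : ContinuousOn b (Metric.closedBall 0 1) :=
    continuousOn_const.mul (continuousOn_const.mul
      (((continuousOn_const.mul continuousOn_id).mul ((ff_cont g2).pow 3)).add ((ff_cont g1).pow 3)))
  have d1 : DifferentiableOn ℂ (ff e 0) (Metric.ball 0 1) := fun x hx =>
    (ff_deriv g1 (by simpa using hx)).differentiableAt.differentiableWithinAt
  have d2 : DifferentiableOn ℂ (ff e (1 / 3)) (Metric.ball 0 1) := fun x hx =>
    (ff_deriv g2 (by simpa using hx)).differentiableAt.differentiableWithinAt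
  have da : DifferentiableOn ℂ a (Metric.ball 0 1) := d1.const_mul _
  have db : DifferentiableOn ℂ b (Metric.ball 0 1) :=
    ((((differentiableOn_id.const_mul _).mul (d2.pow 3)).add (d1.pow 3)).const_mul _).const_mul _
  have hcp := isCompact_closedBall (0 : ℂ) 1
  obtain ⟨M₁, hM₁⟩ := hcp.exists_bound_of_continuousOn ca
  obtain ⟨M₂, hM₂⟩ := hcp.exists_bound_of_continuousOn cb
  set M := max 1 (max M₁ M₂) with hM
  have hM1 : 1 ≤ M := le_max_left _ _
  have hMa : ∀ x ∈ Metric.closedBall (0 : ℂ) 1, ‖a x‖ ≤ M := fun x hx =>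
    (hM₁ x hx).trans ((le_max_left _ _).trans (le_max_right _ _))
  have hMb : ∀ x ∈ Metric.closedBall (0 : ℂ) 1, ‖b x‖ ≤ M := fun x hx =>
    (hM₂ x hx).trans ((le_max_right _ _).trans (le_max_right _ _))
  set ε := min 1 (δ / (2 * M)) with hε
  have hε0 : 0 < ε := lt_min one_pos (by positivity)
  have hε1 : ε ≤ 1 := min_le_left _ _
  have hεM : ε * M ≤ δ / 2 := by
    have : ε ≤ δ / (2 * M) := min_le_right _ _
    calc ε * M ≤ δ / (2 * M) * M := by gcongr
      _ = δ / 2 := by field_simp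
  set F : ℝ × ℂ → ℂ × ℂ := fun p => (((p.1 * ε : ℝ) : ℂ) * a p.2, ((p.1 * ε : ℝ) : ℂ) ^ 3 * b p.2) with hF
  have hsurf : ∀ (σ : ℝ) (x : ℂ), ‖x‖ = 1 → ((σ : ℂ) * a x, (σ : ℂ) ^ 3 * b x) ∈ Sset t := by
    intro σ x hx
    obtain ⟨U, u1, u2⟩ := hU x hx
    refine ⟨(σ : ℂ) * a x, ?_⟩
    ext1
    · rfl
    · simp only [ha, hb, map_mul, Complex.conj_ofReal, Complex.conj_I, u1, map_add, Complex.conj_conj]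
      rw [show (1 - (t : ℂ) ^ 2) ^ 3 * (l : ℂ) ^ 3 * x * ff e (1 / 3) x ^ 3 =
        -(1 - (t : ℂ) ^ 2) ^ 3 * U ^ 3 by rw [u2]; ring]
      generalize conj U = V
      field_simp
      rw [I_sq]
      ring
  have hball : ∀ s ∈ Set.Ioo (0 : ℝ) 1, ∀ x ∈ Metric.closedBall (0 : ℂ) 1, F (s, x) ∈ eClosedBall δ := by
    intro s hs x hx
    have p0 : 0 ≤ s * ε := mul_nonneg hs.1.le hε0.le
    have p1 : s * ε ≤ ε := by nlinarith [hs.2]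
    have p2 : (s * ε) ^ 3 ≤ ε := by
      have : (s * ε) ^ 3 ≤ (s * ε) ^ 1 := pow_le_pow_of_le_one p0 (p1.trans hε1) (by norm_num)
      rw [pow_one] at this
      exact this.trans p1
    have n1 : ‖((s * ε : ℝ) : ℂ)‖ = s * ε := by rw [Complex.norm_real, Real.norm_of_nonneg p0]
    have q1 : ‖((s * ε : ℝ) : ℂ) * a x‖ ≤ δ / 2 := by
      rw [norm_mul, n1]
      refine le_trans ?_ hεM
      exact mul_le_mul p1 (hMa x hx) (norm_nonneg _) hε0.le
    have q2 : ‖((s * ε : ℝ) : ℂ) ^ 3 * b x‖ ≤ δ / 2 := by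
      rw [norm_mul, norm_pow, n1]
      refine le_trans ?_ hεM
      exact mul_le_mul p2 (hMb x hx) (norm_nonneg _) hε0.le
    show ‖((s * ε : ℝ) : ℂ) * a x‖ ^ 2 + ‖((s * ε : ℝ) : ℂ) ^ 3 * b x‖ ^ 2 ≤ δ ^ 2
    nlinarith [norm_nonneg (((s * ε : ℝ) : ℂ) * a x), norm_nonneg (((s * ε : ℝ) : ℂ) ^ 3 * b x)]
  have hcirc : ∀ s ∈ Set.Ioo (0 : ℝ) 1, ∀ x : ℂ, ‖x‖ = 1 → F (s, x) ∈ Sset t ∩ eClosedBall δ :=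
    fun s hs x hx => ⟨hsurf _ x hx, hball s hs x (by simp [hx])⟩
  have a0 : a 0 = I := by simp only [ha, ff_zero_zero, mul_one]
  have a1 : a 1 = 0 := by simp only [ha, z1, mul_zero]
  have b1 : b 1 = 0 := by simp only [hb, z1, z2]; ring
  refine ⟨F, ?_, ?_, ?_⟩
  · have m2 : Set.MapsTo (Prod.snd : ℝ × ℂ → ℂ) (Set.Ioo (0 : ℝ) 1 ×ˢ Metric.closedBall (0 : ℂ) 1)
        (Metric.closedBall (0 : ℂ) 1) := fun p hp => hp.2
    have k : Continuous (fun p : ℝ × ℂ => ((p.1 * ε : ℝ) : ℂ)) := by fun_prop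
    exact (k.continuousOn.mul (ca.comp continuousOn_snd m2)).prodMk
      ((k.continuousOn.pow 3).mul (cb.comp continuousOn_snd m2))
  · intro s hs
    have sne : ((s * ε : ℝ) : ℂ) ≠ 0 := by exact_mod_cast (mul_pos hs.1 hε0).ne'
    refine ⟨(da.const_mul ((s * ε : ℝ) : ℂ)).prodMk (db.const_mul (((s * ε : ℝ) : ℂ) ^ 3)), ?_, hcirc s hs, ⟨1, by simp, ?_⟩, ?_⟩
    · intro h
      have := congrArg Prod.fst (h 0 (by simp) 1 (by simp))
      simp only [hF, a0, a1, mul_zero] at this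
      exact mul_ne_zero sne I_ne_zero this
    · simp [hF, a1, b1]
    · intro x hx
      refine hull_lemma (K := Sset t ∩ eClosedBall δ) (R := δ) ?_ (continuousOn_const.mul ca)
        (continuousOn_const.mul cb) (da.const_mul _) (db.const_mul _) (hcirc s hs) hx
      rintro w ⟨_, hw⟩
      have hw' : ‖w.1‖ ^ 2 + ‖w.2‖ ^ 2 ≤ δ ^ 2 := hw
      constructor <;> refine le_of_sq_le_sq ?_ hδ.le <;> nlinarith [sq_nonneg ‖w.1‖, sq_nonneg ‖w.2‖]
  · obtain ⟨x₀, hx₀, hmax⟩ := hcp.exists_isMaxOn ⟨0, by simp⟩ ca.norm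
    have hR : 0 < ‖a x₀‖ := by
      have h : ‖a 0‖ ≤ ‖a x₀‖ := hmax (by simp : (0 : ℂ) ∈ Metric.closedBall (0 : ℂ) 1)
      rw [a0, Complex.norm_I] at h
      linarith
    have key : ∀ s₁ ∈ Set.Ioo (0 : ℝ) 1, ∀ s₂ ∈ Set.Ioo (0 : ℝ) 1,
        (fun ζ => F (s₁, ζ)) '' Metric.closedBall (0 : ℂ) 1 =
          (fun ζ => F (s₂, ζ)) '' Metric.closedBall (0 : ℂ) 1 → s₁ ≤ s₂ := by
      intro s₁ h₁ s₂ h₂ h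
      have : F (s₁, x₀) ∈ (fun ζ => F (s₂, ζ)) '' Metric.closedBall (0 : ℂ) 1 := h ▸ ⟨x₀, hx₀, rfl⟩
      obtain ⟨y, hy, hyx⟩ := this
      have h5 := congrArg (fun p : ℂ × ℂ => ‖p.1‖) hyx
      simp only [hF, norm_mul, Complex.norm_real, Real.norm_of_nonneg h₁.1.le,
        Real.norm_of_nonneg h₂.1.le, Real.norm_of_nonneg hε0.le] at h5
      have h6 : ‖a y‖ ≤ ‖a x₀‖ := hmax hy
      have h7 : s₁ * (ε * ‖a x₀‖) ≤ s₂ * (ε * ‖a x₀‖) := by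
        rw [← mul_assoc, ← h5, ← mul_assoc]
        exact mul_le_mul_of_nonneg_left h6 (mul_pos h₂.1 hε0).le
      exact le_of_mul_le_mul_right h7 (mul_pos hε0 hR)
    intro s₁ h₁ s₂ h₂ hne h
    exact hne (le_antisymm (key s₁ h₁ s₂ h₂ h) (key s₂ h₂ s₁ h₁ h.symm))
end

section
/- Let t > √(15 − √33)/(2√2), let F be a C^∞-smooth complex-valued function on an open neighbourhood U of 0 in ℂ whose partial derivatives of all orders ≤ 3 vanish at 0 (so F(z) = o(|z|³) as z → 0), and let M_t = {(z, p_t(z,z̄) + F(z)) : z ∈ U} with p_t(z,z̄) = z²z̄ + t z z̄² + (t²/3) z̄³. Then M_t is locally polynomially convex at the origin: there exists r > 0 such that M_t ∩ B̄(0;r) is polynomially convex. -/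
open Complex ComplexConjugate

/-- The surface `M_t = {(z, z²z̄ + t z z̄² + (t²/3) z̄³ + F(z)) : z ∈ U}`. -/
def Mset (t : ℝ) (U : Set ℂ) (F : ℂ → ℂ) : Set (ℂ × ℂ) :=
  { zw | ∃ z ∈ U, zw = (z, z ^ 2 * conj z + (t : ℂ) * z * (conj z) ^ 2
      + ((t : ℂ) ^ 2 / 3) * (conj z) ^ 3 + F z) }


lemma s10_inv {X : Type*} [TopologicalSpace X] [CompactSpace X] (A : Subalgebra ℂ C(X, ℂ))
    (hA : IsClosed (A : Set C(X, ℂ))) (f : C(X, ℂ)) (hf : f ∈ A)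
    (h : ∀ p, f p ∈ Complex.slitPlane) : ∃ g ∈ A, ∀ p, g p = (f p)⁻¹ := by
  have := hA
  have h0 : (0 : ℂ) ∉ spectrum ℂ (⟨f, hf⟩ : A) := by
    intro hz
    have hb := Subalgebra.spectrum_isBounded_connectedComponentIn A (⟨f, hf⟩ : A) hz
    have hsub : (fun x : ℝ => (x : ℂ)) '' Set.Iic 0 ⊆
        connectedComponentIn (spectrum ℂ (f : C(X, ℂ)))ᶜ 0 := by
      apply IsPreconnected.subset_connectedComponentIn
      · exact isPreconnected_Iic.image _ Complex.continuous_ofReal.continuousOn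
      · exact ⟨0, by simp, by simp⟩
      · rintro _ ⟨x, hx, rfl⟩
        rw [ContinuousMap.spectrum_eq_range]
        rintro ⟨p, hp⟩
        have := h p
        rw [hp, Complex.ofReal_mem_slitPlane] at this
        exact absurd hx (by simpa using this)
    have hb2 := hb.subset hsub
    obtain ⟨C, hC⟩ := hb2.exists_norm_le
    have := hC ((-(|C| + 1) : ℝ) : ℂ) ⟨-(|C|+1), Set.mem_Iic.2 (by linarith [abs_nonneg C]), rfl⟩
    rw [Complex.norm_real, norm_neg, Real.norm_eq_abs, abs_of_pos (by positivity)] at this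
    linarith [le_abs_self C]
  rw [spectrum.zero_notMem_iff] at h0
  obtain ⟨g, hg⟩ := h0.exists_right_inv
  refine ⟨g, g.2, fun p => ?_⟩
  have : (f * (g : C(X, ℂ))) p = 1 := by
    have := congrArg (fun u : A => (u : C(X, ℂ)) p) hg
    simpa using this
  rw [ContinuousMap.mul_apply] at this
  exact eq_inv_of_mul_eq_one_right this


lemma s10_mul_slit {a b : ℂ} (ha : 0 < a.re) (hb : 0 < b.re) : a * b ∈ Complex.slitPlane := by
  rw [Complex.mem_slitPlane_iff]
  by_contra! h
  obtain ⟨h1, h2⟩ := h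
  simp only [Complex.mul_re, Complex.mul_im] at h1 h2
  have : a.re * (a.re * b.re - a.im * b.im) ≤ 0 := by nlinarith
  have e : a.re * (a.re * b.re - a.im * b.im) = b.re * (a.re^2 + a.im^2) := by
    linear_combination (-a.im) * h2
  rw [e] at this
  have : 0 < b.re * (a.re^2 + a.im^2) := by positivity
  linarith

lemma s10_cayley_re {e : ℂ} (he : ‖e‖ < 1) : 0 < ((1 + e) / (1 - e)).re := by
  have hne : (1 - e) ≠ 0 := by
    intro h
    have : e = 1 := by linear_combination -h
    rw [this] at he; simp at he
  have hN : 0 < Complex.normSq (1 - e) := Complex.normSq_pos.2 hne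
  rw [Complex.div_re, ← add_div]
  apply div_pos _ hN
  have : e.re * e.re + e.im * e.im < 1 := by
    have := Complex.sq_norm e
    rw [Complex.normSq_apply] at this
    nlinarith [norm_nonneg e]
  simp
  nlinarith

lemma s10_cayley_norm {r : ℂ} (hr : 0 < r.re) : ‖(1 - r) / (1 + r)‖ < 1 := by
  have h1 : 0 < ‖1 + r‖ := by
    rw [norm_pos_iff]; intro h
    have := congrArg Complex.re h; simp at this; linarith
  rw [norm_div, div_lt_one h1]
  apply lt_of_pow_lt_pow_left₀ 2 h1.le
  rw [Complex.sq_norm, Complex.sq_norm, Complex.normSq_apply, Complex.normSq_apply]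
  simp
  nlinarith

lemma s10_sqrt_pos {X : Type*} [TopologicalSpace X] [CompactSpace X] (A : Subalgebra ℂ C(X, ℂ))
    (hA : IsClosed (A : Set C(X, ℂ))) (r : C(X, ℂ)) (hr : r * r ∈ A)
    (h : ∀ p, 0 < (r p).re) : r ∈ A := by
  have hden : ∀ p, 1 + r p ≠ 0 := by
    intro p h'
    have := congrArg Complex.re h'; simp at this; linarith [h p]
  have hr0 : ∀ p, r p ≠ 0 := by
    intro p h'
    have := h p; rw [h'] at this; simp at this
  let c : C(X, ℂ) := ⟨fun p => (1 - r p) / (1 + r p), by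
    apply Continuous.div _ _ hden <;> fun_prop⟩
  have hcp : ∀ p, ‖c p‖ < 1 := fun p => s10_cayley_norm (h p)
  have hc : ‖c‖ < 1 := by
    rw [ContinuousMap.norm_lt_iff _ one_pos]; exact hcp
  have h1c : ∀ p n, (1 - c p ^ (2^n)) ≠ 0 := by
    intro p n h'
    have h2 : c p ^ (2^n) = 1 := by linear_combination -h'
    have h3 : ‖c p‖ ^ (2^n) < 1 := pow_lt_one₀ (norm_nonneg _) (hcp p) (by positivity)
    rw [← norm_pow, h2] at h3; simp at h3
  have key : ∀ n : ℕ, ∃ s ∈ A, ∀ p, s p = r p * ((1 + c p ^ (2^n)) / (1 - c p ^ (2^n))) := by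
    intro n
    induction n with
    | zero =>
      refine ⟨1, A.one_mem, fun p => ?_⟩
      have e1 : 1 + c p = 2 / (1 + r p) := by
        change 1 + (1 - r p) / (1 + r p) = _
        field_simp [hden p]; ring
      have e2 : 1 - c p = 2 * r p / (1 + r p) := by
        change 1 - (1 - r p) / (1 + r p) = _
        field_simp [hden p]; ring
      have := hden p
      have := hr0 p
      simp only [pow_zero, pow_one, e1, e2, ContinuousMap.one_apply]
      field_simp
    | succ n ih =>
      obtain ⟨s, hs, hsp⟩ := ih
      have hlt : ∀ p, ‖c p ^ (2^n)‖ < 1 := fun p => by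
        rw [norm_pow]; exact pow_lt_one₀ (norm_nonneg _) (hcp p) (by positivity)
      have hslit : ∀ p, s p ∈ Complex.slitPlane := fun p => by
        rw [hsp p]; exact s10_mul_slit (h p) (s10_cayley_re (hlt p))
      obtain ⟨g, hg, hgp⟩ := s10_inv A hA s hs hslit
      refine ⟨(1/2 : ℂ) • (s + (r * r) * g), A.smul_mem (A.add_mem hs (A.mul_mem hr hg)) _, ?_⟩
      intro p
      have hs0 : s p ≠ 0 := Complex.slitPlane_ne_zero (hslit p)
      simp only [ContinuousMap.smul_apply, ContinuousMap.add_apply, ContinuousMap.mul_apply,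
        hgp, smul_eq_mul]
      have h1 := h1c p n
      have h2 := h1c p (n+1)
      have e3 : c p ^ (2^(n+1)) = (c p ^ (2^n))^2 := by rw [← pow_mul, pow_succ]
      rw [hsp p] at hs0
      rw [e3] at h2
      rw [hsp p, e3]
      generalize c p ^ (2^n) = e at *
      have h3 : 1 + e ≠ 0 := by
        intro h'; rw [h'] at hs0; simp at hs0
      have := hr0 p
      field_simp
      ring
  choose s hsA hsp using key
  have hlim : Filter.Tendsto s Filter.atTop (nhds r) := by
    rw [tendsto_iff_norm_sub_tendsto_zero]
    have hb : ∀ n, ‖s n - r‖ ≤ 2 * ‖r‖ / (1 - ‖c‖) * ‖c‖ ^ n := by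
      intro n
      have h1 : 0 < 1 - ‖c‖ := by linarith
      rw [ContinuousMap.norm_le _ (by positivity)]
      intro p
      have h2 := h1c p n
      have : s n p - r p = 2 * r p * (c p ^ (2^n)) / (1 - c p ^ (2^n)) := by
        rw [hsp]; field_simp; ring
      rw [ContinuousMap.sub_apply, this, norm_div, norm_mul, norm_mul, norm_pow]
      have h3 : ‖c p‖ ≤ ‖c‖ := c.norm_coe_le_norm p
      have h4 : ‖r p‖ ≤ ‖r‖ := r.norm_coe_le_norm p
      have h5 : ‖c p‖ ^ (2^n) ≤ ‖c‖ ^ n :=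
        (pow_le_pow_left₀ (norm_nonneg _) h3 _).trans
          (pow_le_pow_of_le_one (norm_nonneg _) hc.le (Nat.lt_two_pow_self).le)
      have h6 : 1 - ‖c‖ ≤ ‖1 - c p ^ (2^n)‖ := by
        have := norm_sub_norm_le (1:ℂ) (c p ^ (2^n))
        rw [norm_one, norm_pow] at this
        have h7 : ‖c p‖ ^ (2^n) ≤ ‖c‖ :=
          (pow_le_pow_left₀ (norm_nonneg _) h3 _).trans
            (pow_le_of_le_one (norm_nonneg _) hc.le (by positivity))
        linarith
      calc _ ≤ ‖(2:ℂ)‖ * ‖r‖ * ‖c‖ ^ n / (1 - ‖c‖) := by gcongr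
        _ = _ := by simp; ring
    refine squeeze_zero (fun _ => norm_nonneg _) hb ?_
    have := (tendsto_pow_atTop_nhds_zero_of_lt_one (norm_nonneg c) hc).const_mul (2 * ‖r‖ / (1 - ‖c‖))
    simpa using this
  exact hA.mem_of_tendsto hlim (Filter.Eventually.of_forall hsA)

lemma s10_cpow_half_re {x : ℂ} (hx : x ∈ Complex.slitPlane) : 0 < (x ^ (1/2 : ℂ)).re := by
  rw [Complex.cpow_def_of_ne_zero (Complex.slitPlane_ne_zero hx), Complex.exp_re]
  apply mul_pos (Real.exp_pos _)
  apply Real.cos_pos_of_mem_Ioo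
  have h1 := Complex.neg_pi_lt_arg x
  have h2 := Complex.arg_le_pi x
  have h3 := (Complex.mem_slitPlane_iff_arg.1 hx).1
  have h4 : x.arg < Real.pi := lt_of_le_of_ne h2 h3
  have : (Complex.log x * (1/2)).im = x.arg / 2 := by
    rw [show (1/2 : ℂ) = ((1/2 : ℝ) : ℂ) by norm_num, Complex.im_mul_ofReal, Complex.log_im]; ring
  rw [this]
  constructor <;> linarith

lemma s10_sqrt {X : Type*} [TopologicalSpace X] [CompactSpace X] (A : Subalgebra ℂ C(X, ℂ))
    (hA : IsClosed (A : Set C(X, ℂ))) (x : C(X, ℂ)) (hx : x ∈ A)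
    (h : ∀ p, x p = 0 ∨ x p ∈ Complex.slitPlane) :
    ∃ r ∈ A, ∀ p, r p ^ 2 = x p ∧ (x p ≠ 0 → 0 < (r p).re) := by
  have hsl : ∀ p (ε : ℝ), 0 < ε → x p + ε ∈ Complex.slitPlane := by
    intro p ε hε
    rcases h p with h | h
    · rw [h, zero_add, Complex.ofReal_mem_slitPlane]; exact hε
    · rw [Complex.mem_slitPlane_iff] at h ⊢
      rcases h with h | h
      · left; simp; linarith
      · right; simpa using h
  have hcont : Continuous (fun q : unitInterval × X => (x q.2 + ((q.1 : ℝ) : ℂ)) ^ (1/2 : ℂ)) := by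
    rw [continuous_iff_continuousAt]
    rintro ⟨ε, p⟩
    have : ContinuousAt (fun y : ℂ => y ^ (1/2 : ℂ)) (x p + ((ε : ℝ) : ℂ)) := by
      apply Complex.continuousAt_cpow_const_of_re_pos _ (by norm_num)
      rcases h p with h | h
      · left; rw [h]; simpa using ε.2.1
      · rw [Complex.mem_slitPlane_iff] at h
        rcases h with h | h
        · left; simp; linarith [ε.2.1]
        · right; simpa using h
    exact ContinuousAt.comp (f := fun q : unitInterval × X => x q.2 + ((q.1 : ℝ) : ℂ)) (x := (ε, p))
      this (by fun_prop)
  let Φ : C(unitInterval × X, ℂ) := ⟨_, hcont⟩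
  let Ψ := Φ.curry
  have hsq : ∀ ε p, Ψ ε p ^ 2 = x p + ((ε : ℝ) : ℂ) := by
    intro ε p
    change ((x p + ((ε : ℝ) : ℂ)) ^ (1/2 : ℂ))^2 = _
    rw [one_div]
    exact Complex.cpow_nat_inv_pow _ two_ne_zero
  have hpos : ∀ ε : unitInterval, 0 < (ε : ℝ) → Ψ ε ∈ A := by
    intro ε hε
    apply s10_sqrt_pos A hA
    · have : Ψ ε * Ψ ε = x + algebraMap ℂ _ (((ε : ℝ) : ℂ)) := by
        ext p
        have := hsq ε p
        rw [pow_two] at this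
        simpa using this
      rw [this]
      exact A.add_mem hx (A.algebraMap_mem _)
    · intro p
      exact s10_cpow_half_re (hsl p ε hε)
  refine ⟨Ψ 0, ?_, fun p => ⟨by simpa using hsq 0 p, fun hne => ?_⟩⟩
  · have hcl : IsClosed (Ψ ⁻¹' (A : Set C(X, ℂ))) := hA.preimage Ψ.continuous
    let u : ℕ → unitInterval := fun n => ⟨1 / ((n:ℝ) + 1), by positivity, by
      rw [div_le_one (by positivity)]; linarith [n.cast_nonneg (α := ℝ)]⟩
    have hu : Filter.Tendsto u Filter.atTop (nhds 0) := by
      rw [tendsto_subtype_rng]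
      exact tendsto_one_div_add_atTop_nhds_zero_nat
    exact hcl.mem_of_tendsto hu (Filter.Eventually.of_forall fun n => hpos _ (by
      change (0:ℝ) < 1 / ((n:ℝ) + 1); positivity))
  · have := (h p).resolve_left hne
    have h2 := s10_cpow_half_re this
    have h3 : Ψ 0 p = (x p) ^ (1/2 : ℂ) := by
      change ((x p + (((0 : unitInterval) : ℝ) : ℂ)) ^ (1/2 : ℂ)) = _
      simp
    rw [h3]; exact h2


lemma s10_slit_of_im {u : ℂ} (h : u.im ≠ 0) : u ∈ Complex.slitPlane := by
  rw [Complex.mem_slitPlane_iff]; exact Or.inr h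

lemma s10_rot_slit {g u : ℂ} (hg1 : 0 < g.re) (hg2 : 0 < g.im) (hu : u.im < 0) :
    g ^ 2 * u ∈ Complex.slitPlane := by
  have hs : u ∈ Complex.slitPlane := s10_slit_of_im hu.ne
  have h1 := s10_cpow_half_re hs
  have h2 : (u ^ (1/2 : ℂ)) ^ 2 = u := by
    rw [one_div]; exact Complex.cpow_nat_inv_pow _ two_ne_zero
  generalize u ^ (1/2 : ℂ) = y at *
  have h3 : y.im < 0 := by
    rw [← h2, pow_two, Complex.mul_im] at hu
    by_contra! h; nlinarith [mul_nonneg h1.le h]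
  have h4 : 0 < (g * y).re := by
    rw [Complex.mul_re]; nlinarith [mul_pos hg1 h1, mul_pos hg2 (neg_pos.2 h3)]
  have := s10_mul_slit h4 h4
  rw [← h2]
  convert this using 1; ring

lemma s10_rot_slit' {g u : ℂ} (hg1 : 0 < g.re) (hg2 : 0 < g.im) (hu : 0 < u.im) :
    (conj g) ^ 2 * u ∈ Complex.slitPlane := by
  have := s10_rot_slit (g := g) (u := conj u) hg1 hg2 (by simpa using hu)
  have e : (conj g) ^ 2 * u = conj (g ^ 2 * conj u) := by simp
  rw [e]
  rw [Complex.mem_slitPlane_iff] at this ⊢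
  rw [Complex.conj_re, Complex.conj_im, neg_ne_zero]
  exact this

lemma s10_norm_add_le {v : ℂ} {ε : ℝ} (h : 0 ≤ v.re) (hε : 0 ≤ ε) : ‖v‖ ≤ ‖v + (ε : ℂ)‖ := by
  apply (sq_le_sq₀ (norm_nonneg _) (norm_nonneg _)).1
  rw [Complex.sq_norm, Complex.sq_norm, Complex.normSq_apply, Complex.normSq_apply]
  simp
  nlinarith [mul_nonneg h hε]

lemma s10_sep {X : Type*} [TopologicalSpace X] [CompactSpace X] (A : Subalgebra ℂ C(X, ℂ))
    (hA : IsClosed (A : Set C(X, ℂ))) (x W V : C(X, ℂ)) (hx : x ∈ A) (hW : W ∈ A)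
    (h : ℂ) (hh : ‖h‖ = 1) (hre : 0 < h.re) (him : 0 < h.im) (hg1 : 0 < (h^2).re)
    (S : Set X) (C : ℝ)
    (hS : ∀ p ∈ S, x p = 0 ∨ ((conj (h^2) * x p).im < 0 ∧ 0 < (h^2 * x p).im))
    (hT : ∀ p ∉ S, x p = 0 ∨ 0 < (conj (h^2) * x p).im ∨ (h^2 * x p).im < 0)
    (hWx : ∀ p ∈ S, ‖W p‖ ^ 2 ≤ C ^ 2 * ‖x p‖) (hC : 0 ≤ C)
    (hVS : ∀ p ∈ S, V p = W p) (hVT : ∀ p ∉ S, V p = 0) : V ∈ A := by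
  set g := h^2 with hg
  have hg2 : 0 < g.im := by rw [hg, pow_two, Complex.mul_im]; nlinarith [mul_pos hre him]
  have hhc : h * conj h = 1 := by
    rw [Complex.mul_conj, Complex.normSq_eq_norm_sq, hh]; norm_num
  have hgc : g * conj g = 1 := by
    rw [hg, map_pow, ← mul_pow, hhc, one_pow]
  have hgn : ‖g‖ = 1 := by rw [hg, norm_pow, hh, one_pow]
  have hgcn : ‖conj g‖ = 1 := by rw [Complex.norm_conj, hgn]
  have hg0 : g ≠ 0 := by intro h'; rw [h'] at hgn; simp at hgn
  have hgc0 : conj g ≠ 0 := by intro h'; rw [h'] at hgcn; simp at hgcn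
  have hh0 : h ≠ 0 := by intro h'; rw [h'] at hh; simp at hh
  have e1 : ∀ y : ℂ, -g * y = g^2 * (-conj g * y) := fun y => by
    linear_combination (g * y) * hgc
  have e2 : ∀ y : ℂ, -conj g * y = (conj g)^2 * (-g * y) := fun y => by
    linear_combination (conj g * y) * hgc
  obtain ⟨y1, hy1A, hy1⟩ := s10_sqrt A hA ((-conj g) • x) (A.smul_mem hx _) (by
    intro p
    simp only [ContinuousMap.smul_apply, smul_eq_mul]
    by_cases hp : p ∈ S
    · rcases hS p hp with h0 | ⟨h1, h2⟩
      · left; simp [h0]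
      · right; apply s10_slit_of_im; rw [neg_mul, Complex.neg_im]; linarith
    · rcases hT p hp with h0 | h1 | h2
      · left; simp [h0]
      · right; apply s10_slit_of_im; rw [neg_mul, Complex.neg_im]; linarith
      · right; rw [e2]; apply s10_rot_slit' hg1 hg2; rw [neg_mul, Complex.neg_im]; linarith)
  obtain ⟨y2, hy2A, hy2⟩ := s10_sqrt A hA ((-g) • x) (A.smul_mem hx _) (by
    intro p
    simp only [ContinuousMap.smul_apply, smul_eq_mul]
    by_cases hp : p ∈ S
    · rcases hS p hp with h0 | ⟨h1, h2⟩
      · left; simp [h0]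
      · right; apply s10_slit_of_im; rw [neg_mul, Complex.neg_im]; linarith
    · rcases hT p hp with h0 | h1 | h2
      · left; simp [h0]
      · right; rw [e1]; apply s10_rot_slit hg1 hg2; rw [neg_mul, Complex.neg_im]; linarith
      · right; apply s10_slit_of_im; rw [neg_mul, Complex.neg_im]; linarith)
  simp only [ContinuousMap.smul_apply, smul_eq_mul] at hy1 hy2
  have him_neg : ∀ y : ℂ, 0 < y.re → (y^2).im < 0 → y.im < 0 := by
    intro y h1 h2
    rw [pow_two, Complex.mul_im] at h2
    by_contra! h; nlinarith [mul_nonneg h1.le h]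
  have him_pos : ∀ y : ℂ, 0 < y.re → 0 < (y^2).im → 0 < y.im := by
    intro y h1 h2
    rw [pow_two, Complex.mul_im] at h2
    by_contra! h; nlinarith [mul_nonneg h1.le (neg_nonneg.2 h)]
  have hpm : ∀ p, y2 p = g * y1 p ∨ y2 p = -(g * y1 p) := by
    intro p
    apply sq_eq_sq_iff_eq_or_eq_neg.1
    rw [mul_pow, (hy1 p).1, (hy2 p).1, e1]
  have hzero : ∀ p, x p = 0 → y1 p = 0 := by
    intro p hp
    have := (hy1 p).1
    rw [hp, mul_zero] at this
    exact pow_eq_zero_iff two_ne_zero |>.1 this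
  have hvT : ∀ p ∉ S, y2 p = g * y1 p := by
    intro p hp
    by_cases h0 : x p = 0
    · rcases hpm p with h' | h'
      · exact h'
      · rw [h', hzero p h0]; simp
    have hp1 := (hy1 p).2 (mul_ne_zero (neg_ne_zero.2 hgc0) h0)
    have hp2 := (hy2 p).2 (mul_ne_zero (neg_ne_zero.2 hg0) h0)
    rcases hpm p with h' | h'
    · exact h'
    exfalso
    rcases hT p hp with h1 | h1 | h1
    · exact h0 h1
    · have h2 := him_neg _ hp1 (by rw [(hy1 p).1, neg_mul, Complex.neg_im]; linarith)
      rw [h', Complex.neg_re, Complex.mul_re] at hp2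
      nlinarith [mul_pos hg1 hp1, mul_pos hg2 (neg_pos.2 h2)]
    · have h2 := him_pos _ hp2 (by rw [(hy2 p).1, neg_mul, Complex.neg_im]; linarith)
      have h3 : y1 p = - (conj g * y2 p) := by rw [h']; linear_combination (-y1 p) * hgc
      rw [h3, Complex.neg_re, Complex.mul_re, Complex.conj_re, Complex.conj_im] at hp1
      nlinarith [mul_pos hg1 hp2, mul_pos hg2 h2]
  have hvS : ∀ p ∈ S, y2 p = - (g * y1 p) ∧ 0 ≤ (h * y1 p).im := by
    intro p hp
    rcases hS p hp with h0 | ⟨h1, h2⟩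
    · have := hzero p h0
      rcases hpm p with h' | h' <;> rw [h', this] <;> simp
    have h0 : x p ≠ 0 := by intro h'; rw [h'] at h1; simp at h1
    have hp1 := (hy1 p).2 (mul_ne_zero (neg_ne_zero.2 hgc0) h0)
    have hp2 := (hy2 p).2 (mul_ne_zero (neg_ne_zero.2 hg0) h0)
    have h3 := him_pos _ hp1 (by rw [(hy1 p).1, neg_mul, Complex.neg_im]; linarith)
    have h4 := him_neg _ hp2 (by rw [(hy2 p).1, neg_mul, Complex.neg_im]; linarith)
    constructor
    · rcases hpm p with h' | h'
      · exfalso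
        rw [h', Complex.mul_im] at h4
        nlinarith [mul_pos hg1 h3, mul_pos hg2 hp1]
      · exact h'
    · rw [Complex.mul_im]; positivity
  let v : C(X, ℂ) := (-Complex.I) • (h • y1 - (conj h) • y2)
  have hvA : v ∈ A := A.smul_mem (A.sub_mem (A.smul_mem hy1A _) (A.smul_mem hy2A _)) _
  have hv : ∀ p, v p = -Complex.I * (h * y1 p - conj h * y2 p) := fun p => by simp [v]
  have hvT' : ∀ p ∉ S, v p = 0 := by
    intro p hp
    rw [hv, hvT p hp, hg]
    linear_combination (Complex.I * y1 p * h) * hhc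
  have hvS' : ∀ p ∈ S, v p = -Complex.I * (2 * (h * y1 p)) := by
    intro p hp
    rw [hv, (hvS p hp).1, hg]
    linear_combination (-Complex.I * y1 p * h) * hhc
  have hvre : ∀ p, 0 ≤ (v p).re := by
    intro p
    by_cases hp : p ∈ S
    · rw [hvS' p hp]
      have := (hvS p hp).2
      have e : (-Complex.I * (2 * (h * y1 p))).re = 2 * (h * y1 p).im := by
        simp
      rw [e]; linarith
    · rw [hvT' p hp]; simp
  have hvn : ∀ p ∈ S, ‖W p‖ ≤ C * ‖v p‖ := by
    intro p hp
    have e : ‖v p‖ = 2 * ‖y1 p‖ := by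
      rw [hvS' p hp, norm_mul, norm_mul, norm_mul, hh]; simp
    have e3 : ‖y1 p‖ ^ 2 = ‖x p‖ := by
      rw [← norm_pow, (hy1 p).1, norm_mul, norm_neg, hgcn, one_mul]

    have h1 := hWx p hp
    rw [← e3, ← mul_pow] at h1
    have := (abs_le_of_sq_le_sq h1 (by positivity))
    rw [e]
    nlinarith [le_abs_self ‖W p‖, norm_nonneg (y1 p), mul_nonneg hC (norm_nonneg (y1 p))]
  have key : ∀ ε : ℝ, 0 < ε → ∃ u ∈ A, ‖u - V‖ ≤ C * ε := by
    intro ε hε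
    have hpos : ∀ p, 0 < (v p + (ε : ℂ)).re := fun p => by
      simp; linarith [hvre p]
    obtain ⟨q, hq, hqp⟩ := s10_inv A hA (v + algebraMap ℂ _ (ε : ℂ))
      (A.add_mem hvA (A.algebraMap_mem _)) (fun p => by
        rw [Complex.mem_slitPlane_iff]; left; simpa using hpos p)
    refine ⟨W * v * q, A.mul_mem (A.mul_mem hW hvA) hq, ?_⟩
    rw [ContinuousMap.norm_le _ (by positivity)]
    intro p
    have hqp' : q p = (v p + (ε : ℂ))⁻¹ := by rw [hqp]; simp
    have hne : v p + (ε : ℂ) ≠ 0 := by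
      intro h'; have := hpos p; rw [h'] at this; simp at this
    simp only [ContinuousMap.sub_apply, ContinuousMap.mul_apply, hqp']
    by_cases hp : p ∈ S
    · rw [hVS p hp]
      have e : W p * v p * (v p + (ε : ℂ))⁻¹ - W p = -(W p * ε) / (v p + (ε : ℂ)) := by
        field_simp; ring
      rw [e, norm_div, norm_neg, norm_mul, Complex.norm_real, Real.norm_eq_abs, abs_of_pos hε,
        div_le_iff₀ (norm_pos_iff.2 hne)]
      have h1 : ‖v p‖ ≤ ‖v p + (ε : ℂ)‖ := by
        apply s10_norm_add_le (hvre p) hε.le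
      calc ‖W p‖ * ε ≤ C * ‖v p‖ * ε := by gcongr; exact hvn p hp
        _ ≤ C * ‖v p + (ε : ℂ)‖ * ε := by gcongr
        _ = _ := by ring
    · rw [hVT p hp, hvT' p hp]; simp; positivity
  have : V ∈ closure (A : Set C(X, ℂ)) := by
    rw [Metric.mem_closure_iff]
    intro δ hδ
    obtain ⟨u, hu, hun⟩ := key (δ / (C + 1)) (by positivity)
    refine ⟨u, hu, ?_⟩
    rw [dist_comm, dist_eq_norm]
    refine hun.trans_lt ?_
    rw [mul_div_assoc', div_lt_iff₀ (by positivity)]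
    nlinarith
  rwa [hA.closure_eq] at this


lemma s10_trace {Z : Type*} [TopologicalSpace Z] [CompactSpace Z] (A : Subalgebra ℂ C(Z, ℂ))
    (hA : IsClosed (A : Set C(Z, ℂ))) (z w ζ : C(Z, ℂ)) (hz : z ∈ A) (hw : w ∈ A)
    (hζ : ζ ^ 3 = w) (ω : ℂ) (hω : 1 + ω + ω ^ 2 = 0)
    (zX W V : C(Z × Fin 3, ℂ)) (hzX : ∀ p k, zX (p, k) = z p)
    (hWX : ∀ p k, W (p, k) = ω ^ (k : ℕ) * ζ p)
    (hV0 : ∀ p, V (p, 0) = ζ p) (hV1 : ∀ p, V (p, 1) = 0) (hV2 : ∀ p, V (p, 2) = 0)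
    (hV : V ∈ (Algebra.adjoin ℂ {zX, W}).topologicalClosure) : ζ ∈ A := by
  let ι : Fin 3 → C(Z, Z × Fin 3) := fun k => ⟨fun p => (p, k), by fun_prop⟩
  let Tr : C(Z × Fin 3, ℂ) → C(Z, ℂ) := fun f => ∑ k, f.comp (ι k)
  have hTr : ∀ f p, Tr f p = f (p, 0) + f (p, 1) + f (p, 2) := by
    intro f p
    simp [Tr, Fin.sum_univ_three, ι]
  have hcont : Continuous Tr :=
    continuous_finsetSum _ fun k _ => ContinuousMap.continuous_precomp (ι k)
  have hω3 : ω ^ 3 = 1 := by linear_combination (ω - 1) * hω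
  have hadj : ∀ f ∈ Algebra.adjoin ℂ {zX, W}, Tr f ∈ A := by
    intro f hf
    rw [← Subalgebra.mem_toSubmodule, Algebra.adjoin_eq_span] at hf
    induction hf using Submodule.span_induction with
    | zero =>
      have : Tr 0 = 0 := by ext p; rw [hTr]; simp
      rw [this]; exact A.zero_mem
    | add f g _ _ hf hg =>
      have : Tr (f + g) = Tr f + Tr g := by
        ext p; simp only [hTr, ContinuousMap.add_apply]; ring
      rw [this]; exact A.add_mem hf hg
    | smul c f _ hf =>
      have : Tr (c • f) = c • Tr f := by
        ext p; simp only [hTr, ContinuousMap.smul_apply, smul_eq_mul]; ring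
      rw [this]; exact A.smul_mem hf c
    | mem f hf =>
      obtain ⟨i, j, rfl⟩ := (Submonoid.mem_closure_pair _ _ _).1 hf
      obtain ⟨q, s, hs, hj⟩ : ∃ q s : ℕ, s < 3 ∧ j = 3 * q + s :=
        ⟨j / 3, j % 3, Nat.mod_lt _ (by norm_num), (Nat.div_add_mod j 3).symm⟩
      have e : Tr (zX ^ i * W ^ j) = (1 + ω ^ s + ω ^ (2 * s)) • (z ^ i * w ^ q * ζ ^ s) := by
        ext p
        rw [hTr, ← hζ]
        simp only [ContinuousMap.mul_apply, ContinuousMap.pow_apply, hzX, hWX,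
          ContinuousMap.smul_apply, smul_eq_mul, mul_pow, hj, ← pow_mul]
        have h1 : ω ^ (3 * q) = 1 := by rw [pow_mul, hω3, one_pow]
        have h2 : ω ^ (2 * (3 * q)) = 1 := by rw [mul_comm, pow_mul, h1, one_pow]
        simp only [Fin.val_zero, Fin.val_one, Fin.val_two, zero_mul, one_mul, mul_add, pow_add, h1, h2]
        ring
      rw [e]
      have hs' : s = 0 ∨ s = 1 ∨ s = 2 := by omega
      rcases hs' with rfl | rfl | rfl
      · apply A.smul_mem
        rw [pow_zero, mul_one]
        exact A.mul_mem (A.pow_mem hz _) (A.pow_mem hw _)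
      · have : (1 + ω ^ 1 + ω ^ (2 * 1)) = 0 := by linear_combination hω
        rw [this, zero_smul]; exact A.zero_mem
      · have : (1 + ω ^ 2 + ω ^ (2 * 2)) = 0 := by linear_combination (1 - ω + ω^2) * hω
        rw [this, zero_smul]; exact A.zero_mem
  have hcl : closure (Algebra.adjoin ℂ {zX, W} : Set C(Z × Fin 3, ℂ)) ⊆ Tr ⁻¹' (A : Set C(Z, ℂ)) :=
    closure_minimal hadj (hA.preimage hcont)
  have h1 : Tr V ∈ A := hcl hV
  have h2 : Tr V = ζ := by
    ext p; rw [hTr, hV0, hV1, hV2]; simp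
  rwa [h2] at h1

open MeasureTheory in
lemma s10_polar (f : ℂ → ℂ) (hm : Measurable f) (hf : Integrable f) :
    ∫ b, f b = ∫ s in Set.Ioi (0:ℝ), (s : ℂ) * (2 * Real.pi * Real.circleAverage f 0 s) := by
  rw [← Complex.integral_comp_polarCoord_symm, polarCoord_target, Measure.volume_eq_prod,
    setIntegral_prod]
  · apply setIntegral_congr_fun measurableSet_Ioi
    intro s hs
    simp only
    rw [integral_smul, ← integral_Ioc_eq_integral_Ioo, ← intervalIntegral.integral_of_le (by linarith [Real.pi_pos]),
      Real.circleAverage_eq_integral_add (-Real.pi)]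
    rw [intervalIntegral.integral_comp_add_right (fun θ => f (circleMap 0 s θ))]
    have e1 : (0 : ℝ) + -Real.pi = -Real.pi := by ring
    have e2 : 2 * Real.pi + -Real.pi = Real.pi := by ring
    rw [e1, e2]
    have : ∀ θ, f (Complex.polarCoord.symm (s, θ)) = f (circleMap 0 s θ) := by
      intro θ
      rw [Complex.polarCoord_symm_apply, circleMap, Complex.exp_mul_I]; simp
    simp only [this]
    rw [Complex.real_smul, Complex.real_smul]
    push_cast
    have := Real.pi_ne_zero
    have : (Real.pi : ℂ) ≠ 0 := by exact_mod_cast this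
    field_simp
  · have hmeas : Measurable (fun p : ℝ × ℝ => p.1 • f (Complex.polarCoord.symm p)) := by
      apply Measurable.smul measurable_fst
      apply hm.comp
      have : (fun p : ℝ × ℝ => Complex.polarCoord.symm p) = fun p : ℝ × ℝ =>
        (p.1 : ℂ) * (Real.cos p.2 + Real.sin p.2 * Complex.I) := by
        ext p; exact Complex.polarCoord_symm_apply p
      change Measurable (fun p : ℝ × ℝ => Complex.polarCoord.symm p)
      rw [this]
      apply Continuous.measurable
      fun_prop
    refine ⟨hmeas.aestronglyMeasurable, ?_⟩
    have h := Complex.lintegral_comp_polarCoord_symm (fun b => ‖f b‖ₑ)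
    rw [HasFiniteIntegral]
    have h2 := hf.2
    rw [HasFiniteIntegral, ← h] at h2
    refine lt_of_le_of_lt (le_of_eq ?_) h2
    rw [← Measure.volume_eq_prod]
    apply setLIntegral_congr_fun (measurableSet_Ioi.prod measurableSet_Ioo)
    rintro ⟨s, θ⟩ ⟨hs, hθ⟩
    simp only
    rw [enorm_smul, smul_eq_mul]
    congr 1
    rw [Real.enorm_eq_ofReal (le_of_lt hs)]

lemma s10_avg_out (z : ℂ) (s : ℝ) (hs : 0 < s) (h : s < ‖z‖) :
    Real.circleAverage (fun b => (z - b)⁻¹) 0 s = z⁻¹ := by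
  have hd : DiffContOnCl ℂ (fun b => (z - b)⁻¹) (Metric.ball 0 |s|) := by
    apply DifferentiableOn.diffContOnCl
    intro b hb
    have hb' : b ∈ Metric.closedBall (0:ℂ) |s| := Metric.closure_ball_subset_closedBall hb
    rw [mem_closedBall_zero_iff, abs_of_pos hs] at hb'
    have : z - b ≠ 0 := by
      intro h'; rw [sub_eq_zero.1 h'] at h; linarith
    apply DifferentiableAt.differentiableWithinAt
    fun_prop (disch := assumption)
  have := hd.circleAverage
  simpa using this

lemma s10_avg_in (z : ℂ) (s : ℝ) (hs : 0 < s) (h : ‖z‖ < s) :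
    Real.circleAverage (fun b => (z - b)⁻¹) 0 s = 0 := by
  have hne : ∀ b ∈ Metric.closedBall (0:ℂ) s, conj z * b - (s:ℂ)^2 ≠ 0 := by
    intro b hb h'
    rw [mem_closedBall_zero_iff] at hb
    have h2 : conj z * b = (s:ℂ)^2 := by linear_combination h'
    have h3 := congrArg norm h2
    rw [norm_mul, Complex.norm_conj, norm_pow, Complex.norm_real, Real.norm_eq_abs, abs_of_pos hs] at h3
    nlinarith [norm_nonneg b, norm_nonneg z]
  have hd : DiffContOnCl ℂ (fun b => b / (conj z * b - (s:ℂ)^2)) (Metric.ball 0 |s|) := by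
    apply DifferentiableOn.diffContOnCl
    intro b hb
    have hb' : b ∈ Metric.closedBall (0:ℂ) |s| := Metric.closure_ball_subset_closedBall hb
    rw [abs_of_pos hs] at hb'
    have := hne b hb'
    apply DifferentiableAt.differentiableWithinAt
    fun_prop (disch := assumption)
  have h1 := hd.circleAverage
  simp only [zero_div] at h1
  rw [Real.circleAverage] at h1 ⊢
  have h2 := congrArg conj h1
  rw [map_zero, Complex.real_smul, map_mul, Complex.conj_ofReal,
    intervalIntegral.integral_of_le Real.two_pi_pos.le, ← integral_conj,
    ← intervalIntegral.integral_of_le Real.two_pi_pos.le] at h2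
  rw [Complex.real_smul]
  convert h2 using 2
  congr 1
  funext θ
  set b := circleMap 0 s θ with hb
  have hbn : b * conj b = (s:ℂ)^2 := by
    rw [Complex.mul_conj, Complex.normSq_eq_norm_sq, hb, norm_circleMap_zero]
    push_cast
    rw [← Complex.ofReal_pow, sq_abs, Complex.ofReal_pow]
  have hb0 : conj b ≠ 0 := by
    intro h'
    rw [h', mul_zero] at hbn
    have := pow_eq_zero_iff two_ne_zero |>.1 hbn.symm
    exact hs.ne' (by exact_mod_cast this)
  simp only [map_div₀, map_sub, map_mul, Complex.conj_conj, map_pow, Complex.conj_ofReal]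
  rw [← hbn, show z * conj b - b * conj b = (z - b) * conj b by ring, div_mul_cancel_right₀ hb0]

open MeasureTheory in
lemma s10_inv_integrableOn (z : ℂ) (ρ : ℝ) : IntegrableOn (fun b : ℂ => (z - b)⁻¹) (Metric.ball 0 ρ) := by
  have h : LocallyIntegrable (fun b : ℂ => b⁻¹) := by
    apply locallyIntegrable_of_norm_le_rpow (C := 1) (α := 1)
    · simp
    · refine Filter.Eventually.of_forall fun b => ?_
      rw [norm_inv, one_mul, Real.rpow_neg_one]
    · exact measurable_inv.aestronglyMeasurable
    · simp
  have h2 : IntegrableOn (fun b : ℂ => b⁻¹) (Metric.ball z ρ) :=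
    (h.integrableOn_isCompact (isCompact_closedBall z ρ)).mono_set Metric.ball_subset_closedBall
  have h3 := (Measure.measurePreserving_sub_left volume z).integrableOn_comp_preimage
    (MeasurableEquiv.subLeft z).measurableEmbedding (f := fun b : ℂ => b⁻¹) (s := Metric.ball z ρ) |>.2 h2
  have e : (fun t => z - t) ⁻¹' Metric.ball z ρ = Metric.ball 0 ρ := by
    ext b; simp [dist_eq_norm]
  rw [e] at h3
  exact h3

open MeasureTheory in
lemma s10_cauchy (z : ℂ) (ρ : ℝ) (hz : ‖z‖ < ρ) :
    ∫ b in Metric.ball (0:ℂ) ρ, (z - b)⁻¹ = Real.pi * conj z := by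
  rw [← integral_indicator measurableSet_ball, s10_polar]
  · have h1 : ∀ s : ℝ, 0 < s → s ≠ ‖z‖ → (s : ℂ) * (2 * Real.pi * Real.circleAverage
        ((Metric.ball (0:ℂ) ρ).indicator fun b => (z - b)⁻¹) 0 s) =
        (Set.Ioc 0 ‖z‖).indicator (fun s : ℝ => (s:ℂ) * (2 * Real.pi * z⁻¹)) s := by
      intro s hs hne
      by_cases hsρ : s < ρ
      · have : Real.circleAverage ((Metric.ball (0:ℂ) ρ).indicator fun b => (z - b)⁻¹) 0 s =
          Real.circleAverage (fun b => (z - b)⁻¹) 0 s := by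
          apply Real.circleAverage_congr_sphere
          intro b hb
          rw [Set.indicator_of_mem]
          rw [mem_sphere_zero_iff_norm, abs_of_pos hs] at hb
          rw [mem_ball_zero_iff, hb]; exact hsρ
        rw [this]
        rcases lt_or_gt_of_ne hne with h | h
        · rw [s10_avg_out z s hs h, Set.indicator_of_mem (Set.mem_Ioc.2 ⟨hs, h.le⟩)]
        · rw [s10_avg_in z s hs h, Set.indicator_of_notMem (fun h' => absurd h'.2 (not_le.2 h))]; simp
      · have : Real.circleAverage ((Metric.ball (0:ℂ) ρ).indicator fun b => (z - b)⁻¹) 0 s = 0 := by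
          apply Real.circleAverage_const_on_circle
          intro b hb
          rw [Set.indicator_of_notMem]
          rw [mem_sphere_zero_iff_norm, abs_of_pos hs] at hb
          rw [mem_ball_zero_iff, hb]; exact hsρ
        rw [this, Set.indicator_of_notMem]
        · simp
        · intro h'; exact hsρ (h'.2.trans_lt hz)
    have h2 : ∫ s in Set.Ioi (0:ℝ), (s : ℂ) * (2 * Real.pi * Real.circleAverage
        ((Metric.ball (0:ℂ) ρ).indicator fun b => (z - b)⁻¹) 0 s) =
        ∫ s in Set.Ioi (0:ℝ), (Set.Ioc 0 ‖z‖).indicator (fun s : ℝ => (s:ℂ) * (2 * Real.pi * z⁻¹)) s := by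
      apply setIntegral_congr_ae measurableSet_Ioi
      have : ∀ᵐ s : ℝ, s ≠ ‖z‖ := by
        rw [ae_iff]; simp
      filter_upwards [this] with s hs h0
      exact h1 s h0 hs
    rw [h2, setIntegral_indicator measurableSet_Ioc, Set.inter_eq_right.2 Set.Ioc_subset_Ioi_self,
      ← intervalIntegral.integral_of_le (norm_nonneg z), intervalIntegral.integral_mul_const,
      intervalIntegral.integral_ofReal, integral_id]
    by_cases hz0 : z = 0
    · simp [hz0]
    have := Complex.mul_conj z
    rw [Complex.normSq_eq_norm_sq] at this
    push_cast at this ⊢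
    rw [← this]
    field_simp; ring
  · apply Measurable.indicator _ measurableSet_ball
    fun_prop
  · rw [integrable_indicator_iff measurableSet_ball]
    exact s10_inv_integrableOn z ρ


open MeasureTheory in
lemma s10_kern (c ρ : ℝ) (hc : 0 < c) :
    (∀ ε : ℝ, 0 ≤ ε → IntegrableOn (fun u : ℂ => ‖u‖⁻¹ * (ε / (c * ‖u‖^2 + ε))) (Metric.ball 0 ρ)) ∧
    Filter.Tendsto (fun n : ℕ => ∫ u in Metric.ball (0:ℂ) ρ,
      ‖u‖⁻¹ * ((1/((n:ℝ)+1)) / (c * ‖u‖^2 + (1/((n:ℝ)+1))))) Filter.atTop (nhds 0) := by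
  have hi : IntegrableOn (fun u : ℂ => ‖u‖⁻¹) (Metric.ball 0 ρ) := by
    have := (s10_inv_integrableOn 0 ρ).norm
    simp only [zero_sub, norm_inv, norm_neg] at this
    exact this
  have hb : ∀ ε : ℝ, 0 ≤ ε → ∀ u : ℂ, ‖‖u‖⁻¹ * (ε / (c * ‖u‖^2 + ε))‖ ≤ ‖u‖⁻¹ := by
    intro ε hε u
    rw [Real.norm_eq_abs, abs_of_nonneg (by positivity)]
    apply mul_le_of_le_one_right (by positivity)
    apply div_le_one_of_le₀ _ (by positivity)
    have : 0 ≤ c * ‖u‖^2 := by positivity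
    linarith
  have hm : ∀ ε : ℝ, Measurable (fun u : ℂ => ‖u‖⁻¹ * (ε / (c * ‖u‖^2 + ε))) := by
    intro ε; fun_prop
  constructor
  · intro ε hε
    exact Integrable.mono' hi (hm ε).aestronglyMeasurable (Filter.Eventually.of_forall (hb ε hε))
  · have h0 : (0:ℝ) = ∫ u in Metric.ball (0:ℂ) ρ, (0:ℝ) := by simp
    rw [h0]
    apply tendsto_integral_of_dominated_convergence (fun u : ℂ => ‖u‖⁻¹)
    · intro n; exact (hm _).aestronglyMeasurable
    · exact hi
    · intro n
      exact Filter.Eventually.of_forall (hb _ (by positivity))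
    · refine Filter.Eventually.of_forall fun u => ?_
      by_cases hu : u = 0
      · simp [hu]
      have h1 : Filter.Tendsto (fun n : ℕ => 1/((n:ℝ)+1)) Filter.atTop (nhds 0) :=
        tendsto_one_div_add_atTop_nhds_zero_nat
      have hu' : 0 < ‖u‖ := norm_pos_iff.2 hu
      have hne : c * ‖u‖^2 + 0 ≠ 0 := by positivity
      have := (h1.div (h1.const_add (c * ‖u‖^2)) hne).const_mul ‖u‖⁻¹
      simpa using this

open MeasureTheory in
lemma s10_wermer {Z : Type*} [TopologicalSpace Z] [CompactSpace Z] (A : Subalgebra ℂ C(Z, ℂ))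
    (hA : IsClosed (A : Set C(Z, ℂ))) (z Gz zbar : C(Z, ℂ)) (hz : z ∈ A) (hG : Gz ∈ A)
    (ρ c : ℝ) (hc : 0 < c) (hzρ : ∀ p, ‖z p‖ < ρ) (G : ℂ → ℂ)
    (hGc : ContinuousOn G (Metric.closedBall 0 ρ)) (hGz : ∀ p, Gz p = G (z p))
    (hmon : ∀ a ∈ Metric.closedBall (0:ℂ) ρ, ∀ b ∈ Metric.closedBall (0:ℂ) ρ,
      c * ‖a - b‖^2 ≤ ((a - b) * (G a - G b)).re) (hzb : ∀ p, zbar p = conj (z p)) :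
    zbar ∈ A := by
  have hA' := hA
  have hcompl : CompleteSpace A := hA'.completeSpace_coe
  let B := Metric.closedBall (0:ℂ) ρ
  have hBc : CompactSpace B := isCompact_iff_compactSpace.1 (isCompact_closedBall 0 ρ)
  have hzB : ∀ p, z p ∈ Metric.closedBall (0:ℂ) ρ := fun p => by
    rw [mem_closedBall_zero_iff]; exact (hzρ p).le
  have hre : ∀ ε : ℝ, 0 < ε → ∀ a ∈ Metric.closedBall (0:ℂ) ρ, ∀ b ∈ Metric.closedBall (0:ℂ) ρ,
      c * ‖a - b‖^2 + ε ≤ ((a - b) * (G a - G b) + (ε:ℂ)).re := by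
    intro ε hε a ha b hb
    rw [Complex.add_re, Complex.ofReal_re]
    linarith [hmon a ha b hb]
  have hne : ∀ ε : ℝ, 0 < ε → ∀ a ∈ Metric.closedBall (0:ℂ) ρ, ∀ b ∈ Metric.closedBall (0:ℂ) ρ,
      (a - b) * (G a - G b) + (ε:ℂ) ≠ 0 := by
    intro ε hε a ha b hb h'
    have := hre ε hε a ha b hb
    rw [h', Complex.zero_re] at this
    have : 0 ≤ c * ‖a - b‖^2 := by positivity
    linarith
  have hGB : Continuous (fun b : B => G b) := continuousOn_iff_continuous_domRestrict.1 hGc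
  let φ : ℝ → ℂ → ℂ → ℂ := fun ε a b => (G a - G b) / ((a - b) * (G a - G b) + (ε:ℂ))
  have key : ∀ ε : ℝ, 0 < ε → ∃ u ∈ A, ∀ p, u p = ∫ b in B, φ ε (z p) b := by
    intro ε hε
    let Φ : C(B × Z, ℂ) := ⟨fun q => (Gz q.2 - G q.1) / ((z q.2 - q.1) * (Gz q.2 - G q.1) + (ε:ℂ)), by
      have h1 : Continuous (fun q : B × Z => G q.1) := hGB.comp continuous_fst
      apply Continuous.div
      · exact (Gz.continuous.comp continuous_snd).sub h1
      · exact (((z.continuous.comp continuous_snd).sub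
          (continuous_subtype_val.comp continuous_fst)).mul
          ((Gz.continuous.comp continuous_snd).sub h1)).add continuous_const
      · intro q; rw [hGz]; exact hne ε hε _ (hzB _) _ q.1.2⟩
    have hΦA : ∀ b : B, Φ.curry b ∈ A := by
      intro b
      have h1 : Gz - algebraMap ℂ _ (G b) ∈ A := A.sub_mem hG (A.algebraMap_mem _)
      have h2 : (z - algebraMap ℂ _ (b : ℂ)) * (Gz - algebraMap ℂ _ (G b)) + algebraMap ℂ _ (ε:ℂ) ∈ A :=
        A.add_mem (A.mul_mem (A.sub_mem hz (A.algebraMap_mem _)) h1) (A.algebraMap_mem _)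
      obtain ⟨g, hg, hgp⟩ := s10_inv A hA _ h2 (by
        intro p
        rw [Complex.mem_slitPlane_iff]; left
        have := hre ε hε _ (hzB p) _ b.2
        have h3 : 0 ≤ c * ‖z p - b‖^2 := by positivity
        rw [← hGz] at this
        refine lt_of_lt_of_le ?_ this
        linarith)
      have : Φ.curry b = (Gz - algebraMap ℂ _ (G b)) * g := by
        ext p
        rw [ContinuousMap.mul_apply, hgp]
        change (Gz p - G b) / ((z p - b) * (Gz p - G b) + (ε:ℂ)) = _
        rw [div_eq_mul_inv]; rfl
      rw [this]; exact A.mul_mem h1 hg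
    let Ψ : B → A := fun b => ⟨Φ.curry b, hΦA b⟩
    have hΨ : Continuous Ψ := Φ.curry.continuous.subtype_mk _
    let μ : Measure B := volume.comap Subtype.val
    have hfin : IsFiniteMeasure μ := by
      constructor
      rw [Measure.comap_apply _ Subtype.val_injective
        (fun s hs => (measurableSet_closedBall.subtype_image hs)) _ MeasurableSet.univ]
      rw [Set.image_univ, Subtype.range_coe]
      exact measure_closedBall_lt_top
    have hΨi : Integrable Ψ μ := by
      apply hΨ.integrable_of_hasCompactSupport
      exact HasCompactSupport.of_compactSpace _
    refine ⟨(∫ b, Ψ b ∂μ : A), (∫ b, Ψ b ∂μ : A).2, fun p => ?_⟩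
    let L : A →L[ℂ] ℂ := (ContinuousMap.evalCLM ℂ p).comp (Subalgebra.toSubmodule A).subtypeL
    have h1 : L (∫ b, Ψ b ∂μ) = ∫ b, L (Ψ b) ∂μ := (L.integral_comp_comm hΨi).symm
    have h2 : ∀ b : B, L (Ψ b) = φ ε (z p) b := by
      intro b
      change (Gz p - G b) / ((z p - b) * (Gz p - G b) + (ε:ℂ)) = _
      rw [hGz]
    change L (∫ b, Ψ b ∂μ) = _
    rw [h1]
    simp only [h2]
    exact integral_subtype_comap measurableSet_closedBall (φ ε (z p))
  have hsph : ∀ p, ∫ b in B, (z p - b)⁻¹ = Real.pi * conj (z p) := by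
    intro p
    rw [← s10_cauchy (z p) ρ (hzρ p)]
    apply setIntegral_congr_set
    rw [show B = Metric.ball 0 ρ ∪ Metric.sphere 0 ρ from Metric.ball_union_sphere.symm]
    apply union_ae_eq_left_of_ae_eq_empty
    rw [ae_eq_empty]
    exact Measure.addHaar_sphere volume 0 ρ
  have hest : ∀ ε : ℝ, 0 < ε → ∀ p, ‖(∫ b in B, φ ε (z p) b) - Real.pi * conj (z p)‖ ≤
      ∫ u in Metric.ball (0:ℂ) (3 * ρ), ‖u‖⁻¹ * (ε / (c * ‖u‖^2 + ε)) := by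
    intro ε hε p
    have hρ : 0 < ρ := (norm_nonneg _).trans_lt (hzρ p)
    have i1 : IntegrableOn (fun b => φ ε (z p) b) B := by
      apply ContinuousOn.integrableOn_compact (isCompact_closedBall 0 ρ)
      apply ContinuousOn.div
      · exact continuousOn_const.sub hGc
      · exact ((continuousOn_const.sub continuousOn_id).mul (continuousOn_const.sub hGc)).add continuousOn_const
      · intro b hb; exact hne ε hε _ (hzB p) b hb
    have i2 : IntegrableOn (fun b => (z p - b)⁻¹) B :=
      (s10_inv_integrableOn (z p) (ρ+1)).mono_set (Metric.closedBall_subset_ball (by linarith))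
    rw [← hsph p, ← integral_sub i1 i2]
    have hk := (s10_kern c (3*ρ) hc).1 ε hε.le
    let k : ℂ → ℝ := fun u => ‖u‖⁻¹ * (ε / (c * ‖u‖^2 + ε))
    have hpre : (fun t => z p - t) ⁻¹' ((fun t => z p - t) '' B) = B :=
      Set.preimage_image_eq _ (fun a b h => by simpa using h)
    have himg : (fun t => z p - t) '' B = Metric.closedBall (z p) ρ := by
      ext u; constructor
      · rintro ⟨b, hb, rfl⟩
        simpa [B, dist_eq_norm] using hb
      · intro hu
        refine ⟨z p - u, ?_, by simp⟩
        rw [Metric.mem_closedBall, dist_eq_norm] at hu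
        rw [Metric.mem_closedBall, dist_zero_right, norm_sub_rev]; exact hu
    have hsub : Metric.closedBall (z p) ρ ⊆ Metric.ball 0 (3*ρ) := by
      intro u hu
      rw [Metric.mem_closedBall, dist_eq_norm] at hu
      rw [mem_ball_zero_iff]
      have := norm_add_le (u - z p) (z p)
      rw [sub_add_cancel] at this
      linarith [hzρ p]
    have hmp := Measure.measurePreserving_sub_left (volume : Measure ℂ) (z p)
    have hme := (MeasurableEquiv.subLeft (z p)).measurableEmbedding
    have i3 : IntegrableOn (fun b => k (z p - b)) B := by
      have := (hmp.integrableOn_comp_preimage hme (f := k) (s := Metric.closedBall (z p) ρ)).2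
        (hk.mono_set hsub)
      rw [← himg, hpre] at this
      exact this
    have e3 : ∫ b in B, k (z p - b) = ∫ u in Metric.closedBall (z p) ρ, k u := by
      have := hmp.setIntegral_preimage_emb hme k (Metric.closedBall (z p) ρ)
      rw [← himg, hpre] at this
      rw [this, himg]
    calc _ ≤ ∫ b in B, k (z p - b) := by
          apply norm_integral_le_of_norm_le i3
          filter_upwards [ae_restrict_mem measurableSet_closedBall] with b hb
          by_cases hd : z p - b = 0
          · have : z p = b := sub_eq_zero.1 hd
            simp [φ, k, this]
          have hn := hne ε hε _ (hzB p) b hb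
          have e : φ ε (z p) b - (z p - b)⁻¹ =
              -(ε:ℂ) / ((z p - b) * ((z p - b) * (G (z p) - G b) + (ε:ℂ))) := by
            simp only [φ]
            generalize G (z p) - G b = D at hn ⊢
            generalize z p - b = d at hn hd ⊢
            rw [div_sub' hn, div_eq_div_iff hn (mul_ne_zero hd hn)]
            field_simp; ring
          rw [e, norm_div, norm_neg, norm_mul, Complex.norm_real, Real.norm_eq_abs, abs_of_pos hε]
          have h1 : c * ‖z p - b‖^2 + ε ≤ ‖(z p - b) * (G (z p) - G b) + (ε:ℂ)‖ :=
            (hre ε hε _ (hzB p) b hb).trans (Complex.re_le_norm _)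
          have hpos : 0 < ‖z p - b‖ := norm_pos_iff.2 hd
          simp only [k]
          rw [← div_eq_inv_mul, div_div, mul_comm (_ + _) ‖z p - b‖]
          gcongr
      _ = ∫ u in Metric.closedBall (z p) ρ, k u := e3
      _ ≤ _ := by
          apply setIntegral_mono_set hk
          · exact Filter.Eventually.of_forall fun u => by positivity
          · exact hsub.eventuallyLE
  choose u huA hu using key
  have hlim : Filter.Tendsto (fun n : ℕ => u (1/((n:ℝ)+1)) (by positivity)) Filter.atTop
      (nhds ((Real.pi : ℂ) • zbar)) := by
    rw [tendsto_iff_norm_sub_tendsto_zero]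
    refine squeeze_zero (fun _ => norm_nonneg _) (fun n => ?_) (s10_kern c (3*ρ) hc).2
    have hn : (0:ℝ) < 1/((n:ℝ)+1) := by positivity
    rw [ContinuousMap.norm_le _ (setIntegral_nonneg measurableSet_ball fun u _ => by positivity)]
    intro p
    rw [ContinuousMap.sub_apply, hu, ContinuousMap.smul_apply, smul_eq_mul, hzb]
    exact hest _ hn p
  have h1 : (Real.pi : ℂ) • zbar ∈ A :=
    hA.mem_of_tendsto hlim (Filter.Eventually.of_forall fun n => huA _ _)
  have h2 : zbar = (Real.pi : ℂ)⁻¹ • ((Real.pi : ℂ) • zbar) := by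
    rw [smul_smul, inv_mul_cancel₀ (by exact_mod_cast Real.pi_ne_zero), one_smul]
  rw [h2]; exact A.smul_mem h1 _


/-- first coordinate on `K` -/
noncomputable def s10z (K : Set (ℂ × ℂ)) : C(K, ℂ) := ⟨fun p => p.1.1, by fun_prop⟩
/-- second coordinate on `K` -/
noncomputable def s10w (K : Set (ℂ × ℂ)) : C(K, ℂ) := ⟨fun p => p.1.2, by fun_prop⟩
/-- closure of the polynomials on `K` -/
noncomputable def s10A (K : Set (ℂ × ℂ)) [CompactSpace K] : Subalgebra ℂ C(K, ℂ) :=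
  (MvPolynomial.aeval (fun i : Fin 2 => if i = 0 then s10z K else s10w K) :
    MvPolynomial (Fin 2) ℂ →ₐ[ℂ] C(K, ℂ)).range.topologicalClosure

lemma s10A_closed (K : Set (ℂ × ℂ)) [CompactSpace K] : IsClosed (s10A K : Set C(K, ℂ)) :=
  Subalgebra.isClosed_topologicalClosure _

lemma s10z_mem (K : Set (ℂ × ℂ)) [CompactSpace K] : s10z K ∈ s10A K := by
  apply Subalgebra.le_topologicalClosure
  exact ⟨MvPolynomial.X 0, by simp⟩

lemma s10w_mem (K : Set (ℂ × ℂ)) [CompactSpace K] : s10w K ∈ s10A K := by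
  apply Subalgebra.le_topologicalClosure
  exact ⟨MvPolynomial.X 1, by simp⟩

lemma s10_aeval (K : Set (ℂ × ℂ)) (p : MvPolynomial (Fin 2) ℂ) (k : K) :
    (MvPolynomial.aeval (fun i : Fin 2 => if i = 0 then s10z K else s10w K) p : C(K, ℂ)) k =
      MvPolynomial.eval (fun i => if i = 0 then k.1.1 else k.1.2) p := by
  induction p using MvPolynomial.induction_on with
  | C a => simp
  | add p q hp hq => simp [hp, hq]
  | mul_X p i hp =>
    rw [map_mul, ContinuousMap.mul_apply, hp, map_mul, MvPolynomial.aeval_X, MvPolynomial.eval_X]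
    split_ifs <;> rfl

lemma s10_final (K : Set (ℂ × ℂ)) (hK : IsCompact K) [CompactSpace K]
    (hinj : ∀ p ∈ K, ∀ q ∈ K, p.1 = q.1 → p = q) (hz : star (s10z K) ∈ s10A K) :
    PolyConvex2 K := by
  have htop : ∀ f : C(K, ℂ), f ∈ s10A K := by
    have h1 : StarAlgebra.adjoin ℂ {s10z K} ≤ StarAlgebra.adjoin ℂ {s10z K} := le_rfl
    have hsub : ((StarAlgebra.adjoin ℂ {s10z K} : StarSubalgebra ℂ C(K, ℂ)) : Set C(K, ℂ)) ⊆ s10A K := by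
      have : (StarAlgebra.adjoin ℂ {s10z K}).toSubalgebra ≤ s10A K := by
        rw [StarAlgebra.adjoin_toSubalgebra]
        apply Algebra.adjoin_le
        rintro f (hf | hf)
        · rw [Set.mem_singleton_iff.1 hf]; exact s10z_mem K
        · rw [Set.star_singleton] at hf
          rw [Set.mem_singleton_iff.1 hf]; exact hz
      exact this
    have hsep : (StarAlgebra.adjoin ℂ {s10z K} : StarSubalgebra ℂ C(K, ℂ)).SeparatesPoints := by
      intro p q hpq
      refine ⟨s10z K, ⟨s10z K, StarAlgebra.subset_adjoin ℂ _ rfl, rfl⟩, ?_⟩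
      intro h
      exact hpq (Subtype.ext (hinj p p.2 q q.2 h))
    have htop := ContinuousMap.starSubalgebra_topologicalClosure_eq_top_of_separatesPoints _ hsep
    intro f
    have hf : f ∈ (StarAlgebra.adjoin ℂ {s10z K} : StarSubalgebra ℂ C(K, ℂ)).topologicalClosure := by
      rw [htop]; trivial
    exact closure_minimal hsub (s10A_closed K) hf
  have happ : ∀ (f : C(K, ℂ)) (δ : ℝ), 0 < δ → ∃ p : MvPolynomial (Fin 2) ℂ, ∀ k : K,
      ‖f k - MvPolynomial.eval (fun i => if i = 0 then k.1.1 else k.1.2) p‖ ≤ δ := by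
    intro f δ hδ
    have := htop f
    obtain ⟨g, ⟨p, rfl⟩, hg⟩ := Metric.mem_closure_iff.1 this δ hδ
    refine ⟨p, fun k => ?_⟩
    rw [← s10_aeval, ← dist_eq_norm]
    exact (ContinuousMap.dist_apply_le_dist k).trans hg.le
  apply Set.Subset.antisymm
  · intro a ha
    by_contra haK
    let D : C(K, ℂ) := ⟨fun p => (p.1.1 - a.1) * conj (p.1.1 - a.1) + (p.1.2 - a.2) * conj (p.1.2 - a.2),
      by fun_prop⟩
    have hD : ∀ p, D p ≠ 0 := by
      intro p h0
      have e : D p = ((‖p.1.1 - a.1‖^2 + ‖p.1.2 - a.2‖^2 : ℝ) : ℂ) := by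
        change (p.1.1 - a.1) * conj (p.1.1 - a.1) + (p.1.2 - a.2) * conj (p.1.2 - a.2) = _
        rw [Complex.mul_conj, Complex.mul_conj, Complex.normSq_eq_norm_sq, Complex.normSq_eq_norm_sq]
        push_cast; rfl
      rw [e] at h0
      have h1 : ‖p.1.1 - a.1‖^2 + ‖p.1.2 - a.2‖^2 = 0 := by exact_mod_cast h0
      have h2 : ‖p.1.1 - a.1‖ = 0 := by nlinarith [sq_nonneg ‖p.1.1 - a.1‖, sq_nonneg ‖p.1.2 - a.2‖]
      have h3 : ‖p.1.2 - a.2‖ = 0 := by nlinarith [sq_nonneg ‖p.1.1 - a.1‖, sq_nonneg ‖p.1.2 - a.2‖]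
      have : p.1 = a := Prod.ext (sub_eq_zero.1 (norm_eq_zero.1 h2)) (sub_eq_zero.1 (norm_eq_zero.1 h3))
      exact haK (this ▸ p.2)
    let H1 : C(K, ℂ) := ⟨fun p => conj (p.1.1 - a.1) / D p, by
      apply Continuous.div _ D.continuous hD; fun_prop⟩
    let H2 : C(K, ℂ) := ⟨fun p => conj (p.1.2 - a.2) / D p, by
      apply Continuous.div _ D.continuous hD; fun_prop⟩
    let u : C(K, ℂ) := s10z K - algebraMap ℂ _ a.1
    let v : C(K, ℂ) := s10w K - algebraMap ℂ _ a.2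
    have hδ : 0 < 1 / (2 * (‖u‖ + ‖v‖ + 1)) := by positivity
    obtain ⟨p1, hp1⟩ := happ H1 _ hδ
    obtain ⟨p2, hp2⟩ := happ H2 _ hδ
    have h := ha (1 - (MvPolynomial.X 0 - MvPolynomial.C a.1) * p1 - (MvPolynomial.X 1 - MvPolynomial.C a.2) * p2)
    have e1 : MvPolynomial.eval (fun i => if i = 0 then a.1 else a.2)
      (1 - (MvPolynomial.X 0 - MvPolynomial.C a.1) * p1 - (MvPolynomial.X 1 - MvPolynomial.C a.2) * p2 :
        MvPolynomial (Fin 2) ℂ) = 1 := by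
      simp
    rw [e1, norm_one] at h
    have h2 : sSup ((fun w : ℂ × ℂ => ‖MvPolynomial.eval (fun i => if i = 0 then w.1 else w.2)
      (1 - (MvPolynomial.X 0 - MvPolynomial.C a.1) * p1 - (MvPolynomial.X 1 - MvPolynomial.C a.2) * p2 :
        MvPolynomial (Fin 2) ℂ)‖) '' K) ≤ 1/2 := by
      apply Real.sSup_le _ (by norm_num)
      rintro _ ⟨k, hk, rfl⟩
      have q1 := hp1 ⟨k, hk⟩
      have q2 := hp2 ⟨k, hk⟩
      have n1 := u.norm_coe_le_norm ⟨k, hk⟩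
      have n2 := v.norm_coe_le_norm ⟨k, hk⟩
      have eu : u ⟨k, hk⟩ = k.1 - a.1 := rfl
      have ev : v ⟨k, hk⟩ = k.2 - a.2 := rfl
      have hid : (k.1 - a.1) * H1 ⟨k, hk⟩ + (k.2 - a.2) * H2 ⟨k, hk⟩ = 1 := by
        have := hD ⟨k, hk⟩
        change (k.1 - a.1) * (conj (k.1 - a.1) / D ⟨k, hk⟩) + (k.2 - a.2) * (conj (k.2 - a.2) / D ⟨k, hk⟩) = 1
        rw [mul_div_assoc', mul_div_assoc', ← add_div]
        exact div_self this
      simp only [map_sub, map_mul, map_one, MvPolynomial.eval_X, MvPolynomial.eval_C, if_true,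
        one_ne_zero, if_false]
      simp only at q1 q2
      generalize MvPolynomial.eval (fun i => if i = 0 then k.1 else k.2) p1 = P1 at *
      generalize MvPolynomial.eval (fun i => if i = 0 then k.1 else k.2) p2 = P2 at *
      have e : 1 - (k.1 - a.1) * P1 - (k.2 - a.2) * P2 =
        u ⟨k, hk⟩ * (H1 ⟨k, hk⟩ - P1) + v ⟨k, hk⟩ * (H2 ⟨k, hk⟩ - P2) := by
        rw [eu, ev]; linear_combination -hid
      rw [e]
      calc _ ≤ ‖u ⟨k, hk⟩‖ * ‖H1 ⟨k, hk⟩ - P1‖ + ‖v ⟨k, hk⟩‖ * ‖H2 ⟨k, hk⟩ - P2‖ := by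
            rw [← norm_mul, ← norm_mul]; exact norm_add_le _ _
        _ ≤ ‖u‖ * (1 / (2 * (‖u‖ + ‖v‖ + 1))) + ‖v‖ * (1 / (2 * (‖u‖ + ‖v‖ + 1))) := by gcongr
        _ ≤ 1/2 := by
            rw [← add_mul, mul_one_div, div_le_div_iff₀ (by positivity) (by norm_num)]
            nlinarith [norm_nonneg u, norm_nonneg v]
    linarith
  · intro a ha p
    apply le_csSup
    · apply (hK.image _).bddAbove
      apply Continuous.norm
      have : Continuous fun w : ℂ × ℂ => fun i : Fin 2 => if i = 0 then w.1 else w.2 := by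
        apply continuous_pi
        intro i
        split_ifs <;> fun_prop
      exact (MvPolynomial.continuous_eval p).comp this
    · exact ⟨a, ha, rfl⟩


lemma s10_core {K : Set (ℂ × ℂ)} [CompactSpace K] (t : ℝ) (ζ : C(K, ℂ))
    (hζ : ∀ p : K, ζ p ^ 3 = 3 * t * p.1.2 + p.1.1 ^ 3) (ω : ℂ) (hω : 1 + ω + ω ^ 2 = 0)
    (α β : ℂ) (h : ℂ) (hh : ‖h‖ = 1) (hre : 0 < h.re) (him : 0 < h.im) (hg1 : 0 < (h^2).re)
    (C : ℝ) (hC : 0 ≤ C)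
    (h0 : ∀ p : K, (p.1.1 * ζ p + α * p.1.1 ^ 2 + β * ζ p ^ 2 = 0) ∨
      ((conj (h^2) * (p.1.1 * ζ p + α * p.1.1 ^ 2 + β * ζ p ^ 2)).im < 0 ∧
        0 < (h^2 * (p.1.1 * ζ p + α * p.1.1 ^ 2 + β * ζ p ^ 2)).im))
    (h0n : ∀ p : K, ‖ζ p‖ ^ 2 ≤ C ^ 2 * ‖p.1.1 * ζ p + α * p.1.1 ^ 2 + β * ζ p ^ 2‖)
    (h1 : ∀ p : K, (p.1.1 * (ω * ζ p) + α * p.1.1 ^ 2 + β * (ω * ζ p) ^ 2 = 0) ∨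
      0 < (conj (h^2) * (p.1.1 * (ω * ζ p) + α * p.1.1 ^ 2 + β * (ω * ζ p) ^ 2)).im)
    (h2 : ∀ p : K, (p.1.1 * (ω ^ 2 * ζ p) + α * p.1.1 ^ 2 + β * (ω ^ 2 * ζ p) ^ 2 = 0) ∨
      (h^2 * (p.1.1 * (ω ^ 2 * ζ p) + α * p.1.1 ^ 2 + β * (ω ^ 2 * ζ p) ^ 2)).im < 0) :
    ζ ∈ s10A K := by
  let zX : C(K × Fin 3, ℂ) := ⟨fun q => q.1.1.1, by fun_prop⟩
  let W : C(K × Fin 3, ℂ) := ⟨fun q => ω ^ (q.2 : ℕ) * ζ q.1, by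
    apply Continuous.mul _ (ζ.continuous.comp continuous_fst)
    exact (continuous_of_discreteTopology (f := fun k : Fin 3 => ω ^ (k : ℕ))).comp continuous_snd⟩
  let V : C(K × Fin 3, ℂ) := ⟨fun q => (if q.2 = 0 then 1 else 0) * ζ q.1, by
    apply Continuous.mul _ (ζ.continuous.comp continuous_fst)
    exact (continuous_of_discreteTopology (f := fun k : Fin 3 => if k = 0 then (1:ℂ) else 0)).comp
      continuous_snd⟩
  let A' := (Algebra.adjoin ℂ {zX, W}).topologicalClosure
  have hA' : IsClosed (A' : Set C(K × Fin 3, ℂ)) := Subalgebra.isClosed_topologicalClosure _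
  have hzA : zX ∈ A' := Subalgebra.le_topologicalClosure _ (Algebra.subset_adjoin (by simp))
  have hWA : W ∈ A' := Subalgebra.le_topologicalClosure _ (Algebra.subset_adjoin (by simp))
  have hV : V ∈ A' := by
    refine s10_sep A' hA' (zX * W + α • zX ^ 2 + β • W ^ 2) W V ?_ hWA h hh hre him hg1
      {q | q.2 = 0} C ?_ ?_ ?_ hC ?_ ?_
    · exact A'.add_mem (A'.add_mem (A'.mul_mem hzA hWA) (A'.smul_mem (A'.pow_mem hzA 2) α))
        (A'.smul_mem (A'.pow_mem hWA 2) β)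
    · rintro ⟨p, k⟩ hk
      obtain rfl : k = 0 := hk
      have := h0 p
      simpa [zX, W] using this
    · rintro ⟨p, k⟩ hk
      have hk' : k = 1 ∨ k = 2 := by
        have : k ≠ 0 := hk
        omega
      rcases hk' with rfl | rfl
      · rcases h1 p with h' | h'
        · left; simpa [zX, W] using h'
        · right; left; simpa [zX, W] using h'
      · rcases h2 p with h' | h'
        · left; simpa [zX, W] using h'
        · right; right; simpa [zX, W] using h'
    · rintro ⟨p, k⟩ hk
      obtain rfl : k = 0 := hk
      have := h0n p
      simpa [zX, W] using this
    · rintro ⟨p, k⟩ hk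
      obtain rfl : k = 0 := hk
      simp [V, W]
    · rintro ⟨p, k⟩ hk
      have : k ≠ 0 := hk
      simp [V, this]
  refine s10_trace (s10A K) (s10A_closed K) (s10z K) ((3 * t : ℂ) • s10w K + s10z K ^ 3) ζ
    (s10z_mem K) ?_ ?_ ω hω zX W V (fun _ _ => rfl) (fun _ _ => rfl) ?_ ?_ ?_ hV
  · exact (s10A K).add_mem ((s10A K).smul_mem (s10w_mem K) _) ((s10A K).pow_mem (s10z_mem K) 3)
  · ext p; exact hζ p
  · intro p; simp [V]
  · intro p; simp [V]
  · intro p; simp [V]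


lemma s10_taylor_step (F : ℂ → ℂ) (k n : ℕ) (ρ η : ℝ) (hη : 0 ≤ η)
    (hd : ∀ x ∈ Metric.closedBall (0:ℂ) ρ, DifferentiableAt ℝ (iteratedFDeriv ℝ k F) x)
    (h0 : iteratedFDeriv ℝ k F 0 = 0)
    (hb : ∀ x ∈ Metric.closedBall (0:ℂ) ρ, ‖iteratedFDeriv ℝ (k+1) F x‖ ≤ η * ‖x‖ ^ n) :
    ∀ x ∈ Metric.closedBall (0:ℂ) ρ, ‖iteratedFDeriv ℝ k F x‖ ≤ η * ‖x‖ ^ (n+1) := by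
  intro x hx
  have hsub : Metric.closedBall (0:ℂ) ‖x‖ ⊆ Metric.closedBall (0:ℂ) ρ :=
    Metric.closedBall_subset_closedBall (by simpa using hx)
  have := Convex.norm_image_sub_le_of_norm_fderiv_le (𝕜 := ℝ) (f := iteratedFDeriv ℝ k F)
    (C := η * ‖x‖ ^ n) (s := Metric.closedBall (0:ℂ) ‖x‖) (x := 0) (y := x)
    (fun y hy => hd y (hsub hy))
    (fun y hy => by
      rw [norm_fderiv_iteratedFDeriv]
      refine (hb y (hsub hy)).trans ?_
      have : ‖y‖ ≤ ‖x‖ := by simpa using hy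
      gcongr)
    (convex_closedBall _ _) (by simp) (by simp)
  rw [h0, sub_zero, sub_zero] at this
  calc _ ≤ _ := this
    _ = _ := by ring

lemma s10_F_est (U : Set ℂ) (hU : IsOpen U) (h0U : (0 : ℂ) ∈ U) (F : ℂ → ℂ)
    (hF : ContDiffOn ℝ (⊤ : ℕ∞) F U)
    (hders : ∀ k : ℕ, k ≤ 3 → iteratedFDerivWithin ℝ k F U 0 = 0) (η : ℝ) (hη : 0 < η) :
    ∃ ρ > (0:ℝ), Metric.closedBall (0:ℂ) ρ ⊆ U ∧ ∀ s ≤ ρ, ∀ z ∈ Metric.closedBall (0:ℂ) s,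
      ∀ b ∈ Metric.closedBall (0:ℂ) s, ‖F z - F b‖ ≤ η * s ^ 2 * ‖z - b‖ := by
  have hz : ∀ k : ℕ, k ≤ 3 → iteratedFDeriv ℝ k F 0 = 0 := fun k hk => by
    rw [← iteratedFDerivWithin_of_isOpen k hU h0U]; exact hders k hk
  have hcd : ∀ x ∈ U, ContDiffAt ℝ (⊤ : ℕ∞) F x := fun x hx => hF.contDiffAt (hU.mem_nhds hx)
  have hc3 : ContinuousAt (iteratedFDeriv ℝ 3 F) 0 :=
    (hcd 0 h0U).continuousAt_iteratedFDeriv (WithTop.coe_le_coe.2 (le_top : ((3:ℕ):ℕ∞) ≤ ⊤))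
  have hev : ∀ᶠ x in nhds (0:ℂ), ‖iteratedFDeriv ℝ 3 F x‖ < η ∧ x ∈ U := by
    refine Filter.Eventually.and ?_ (hU.mem_nhds h0U)
    have : Filter.Tendsto (fun x => ‖iteratedFDeriv ℝ 3 F x‖) (nhds 0) (nhds 0) := by
      have := hc3.norm
      rw [ContinuousAt, hz 3 le_rfl, norm_zero] at this
      exact this
    exact this.eventually (gt_mem_nhds hη)
  obtain ⟨ρ, hρ, hball⟩ := Metric.nhds_basis_closedBall.eventually_iff.1 hev
  have hd : ∀ k : ℕ, ∀ x ∈ Metric.closedBall (0:ℂ) ρ,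
      DifferentiableAt ℝ (iteratedFDeriv ℝ k F) x := fun k x hx =>
    (hcd x (hball hx).2).differentiableAt_iteratedFDeriv (by exact_mod_cast WithTop.coe_lt_top k)
  have b2 := s10_taylor_step F 2 0 ρ η hη.le (hd 2) (hz 2 (by norm_num))
    (fun x hx => by simpa using (hball hx).1.le)
  have b1 := s10_taylor_step F 1 1 ρ η hη.le (hd 1) (hz 1 (by norm_num)) b2
  refine ⟨ρ, hρ, fun x hx => (hball hx).2, fun s hs z hzs b hbs => ?_⟩
  have hsub := Metric.closedBall_subset_closedBall (x := (0:ℂ)) hs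
  refine Convex.norm_image_sub_le_of_norm_fderiv_le (𝕜 := ℝ) (f := F)
    (s := Metric.closedBall (0:ℂ) s)
    (fun y hy => (hcd y (hball (hsub hy)).2).differentiableAt (by simp)) (fun y hy => ?_)
    (convex_closedBall _ _) hbs hzs
  rw [← norm_iteratedFDeriv_one]
  refine (b1 y (hsub hy)).trans ?_
  have : ‖y‖ ≤ s := by simpa using hy
  gcongr

lemma s10_F_zero (U : Set ℂ) (F : ℂ → ℂ)
    (hders : ∀ k : ℕ, k ≤ 3 → iteratedFDerivWithin ℝ k F U 0 = 0) : F 0 = 0 := by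
  have h := hders 0 (by norm_num)
  rw [iteratedFDerivWithin_zero_eq] at h
  have := norm_iteratedFDeriv_zero (𝕜 := ℝ) (f := F) (x := 0)
  rw [h, norm_zero] at this
  exact norm_eq_zero.1 this.symm


lemma s10_R : ∃ (R : ℂ → ℂ) (σ : ℝ), 0 < σ ∧ R 0 = 0 ∧ (∀ x, (1 + R x) ^ 3 = 1 + x) ∧
    ∀ x y : ℂ, ‖x‖ ≤ σ → ‖y‖ ≤ σ → ‖R x - R y‖ ≤ ‖x - y‖ := by
  have hd : HasStrictDerivAt (fun x : ℂ => (1 + x) ^ ((3:ℂ)⁻¹) - 1)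
      ((3:ℂ)⁻¹ * (1 + 0) ^ ((3:ℂ)⁻¹ - 1) * 1) 0 := by
    have h1 : HasStrictDerivAt (fun x : ℂ => 1 + x) 1 0 := (hasStrictDerivAt_id (0:ℂ)).const_add 1
    exact (h1.cpow_const (by simp [Complex.mem_slitPlane_iff])).sub_const 1
  obtain ⟨s, hs, hL⟩ := hd.hasStrictFDerivAt.exists_lipschitzOnWith_of_nnnorm_lt 1 (by
    rw [← NNReal.coe_lt_coe]
    simp
    try norm_num)
  obtain ⟨σ, hσ, hball⟩ := Metric.nhds_basis_closedBall.mem_iff.1 hs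
  refine ⟨fun x : ℂ => (1 + x) ^ ((3:ℂ)⁻¹) - 1, σ, hσ, by simp, fun x => ?_, fun x y hx hy => ?_⟩
  · have := Complex.cpow_nat_inv_pow (1 + x) (n := 3) (by norm_num)
    push_cast at this
    simpa using this
  · have := hL.dist_le_mul x (hball (by simpa using hx)) y (hball (by simpa using hy))
    simpa [dist_eq_norm] using this

lemma s10_E_aux (l H R : ℂ → ℂ) (σ m L η ρ : ℝ) (hm : 0 < m) (hL : 0 ≤ L) (hη : 0 ≤ η)
    (hησ : η / m ^ 3 ≤ σ) (hR0 : R 0 = 0)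
    (hRL : ∀ x y : ℂ, ‖x‖ ≤ σ → ‖y‖ ≤ σ → ‖R x - R y‖ ≤ ‖x - y‖)
    (hlm : ∀ z, m * ‖z‖ ≤ ‖l z‖) (hlL : ∀ z, ‖l z‖ ≤ L * ‖z‖)
    (hll : ∀ z b, ‖l z - l b‖ ≤ L * ‖z - b‖) (hH0 : H 0 = 0)
    (hH : ∀ s ≤ ρ, ∀ z b : ℂ, ‖z‖ ≤ s → ‖b‖ ≤ s → ‖H z - H b‖ ≤ η * s ^ 2 * ‖z - b‖)
    (z b : ℂ) (hz : ‖z‖ ≤ ρ) (hbz : ‖b‖ ≤ ‖z‖) :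
    ‖l z * R (H z / l z ^ 3) - l b * R (H b / l b ^ 3)‖ ≤
      (2 * L / m ^ 3 + 3 * L ^ 4 / m ^ 6) * η * ‖z - b‖ := by
  have hx : ∀ a : ℂ, ‖a‖ ≤ ρ → ‖H a / l a ^ 3‖ ≤ η / m ^ 3 := by
    intro a ha
    rcases eq_or_ne a 0 with rfl | h0
    · rw [hH0]; simp; positivity
    have hp : 0 < ‖a‖ := norm_pos_iff.2 h0
    have h1 : ‖H a‖ ≤ η * ‖a‖ ^ 3 := by
      have := hH ‖a‖ ha a 0 le_rfl (by simp)
      rw [hH0, sub_zero, sub_zero] at this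
      linarith [this]
    rw [norm_div, norm_pow, div_le_div_iff₀ (by have := hlm a; have : 0 < ‖l a‖ := by nlinarith
                                                positivity) (by positivity)]
    calc ‖H a‖ * m ^ 3 ≤ η * ‖a‖ ^ 3 * m ^ 3 := by gcongr
      _ = η * (m * ‖a‖) ^ 3 := by ring
      _ ≤ _ := by gcongr; exact hlm a
  have hR : ∀ a : ℂ, ‖a‖ ≤ ρ → ‖R (H a / l a ^ 3)‖ ≤ η / m ^ 3 := by
    intro a ha
    have := hRL (H a / l a ^ 3) 0 ((hx a ha).trans hησ)
      (by simp; exact le_trans (by positivity) hησ)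
    rw [hR0, sub_zero, sub_zero] at this
    exact this.trans (hx a ha)
  have hb := hbz.trans hz
  rcases eq_or_ne z 0 with rfl | hz0
  · have : b = 0 := by simpa using hbz
    subst this; simp
  have hzp : 0 < ‖z‖ := norm_pos_iff.2 hz0
  have hlz : 0 < ‖l z‖ := lt_of_lt_of_le (by positivity) (hlm z)
  have hlz0 : l z ≠ 0 := norm_pos_iff.1 hlz
  have key : L * ‖b‖ * ‖R (H z / l z ^ 3) - R (H b / l b ^ 3)‖ ≤
      (L / m ^ 3 + 3 * L ^ 4 / m ^ 6) * η * ‖z - b‖ := by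
    rcases eq_or_ne b 0 with rfl | hb0
    · simp; positivity
    have hbp : 0 < ‖b‖ := norm_pos_iff.2 hb0
    have hlb : 0 < ‖l b‖ := lt_of_lt_of_le (by positivity) (hlm b)
    have hlb0 : l b ≠ 0 := norm_pos_iff.1 hlb
    have e : H z / l z ^ 3 - H b / l b ^ 3 = ((H z - H b)
        + (H b / l b ^ 3) * ((l b - l z) * (l b ^ 2 + l b * l z + l z ^ 2))) / l z ^ 3 := by
      field_simp
      ring
    have h1 : ‖H z / l z ^ 3 - H b / l b ^ 3‖ ≤ (η * ‖z‖ ^ 2 * ‖z - b‖ +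
        (η / m ^ 3) * ((L * ‖z - b‖) * (3 * (L * ‖z‖) ^ 2))) / (m * ‖z‖) ^ 3 := by
      rw [e, norm_div, norm_pow]
      have hlz' := hlL z
      have hlb' : ‖l b‖ ≤ L * ‖z‖ := (hlL b).trans (by gcongr)
      have hlm' := hlm z
      gcongr
      refine (norm_add_le _ _).trans ?_
      gcongr
      · exact hH _ hz z b le_rfl hbz
      · rw [norm_mul, norm_mul]
        have hll' : ‖l b - l z‖ ≤ L * ‖z - b‖ := by rw [norm_sub_rev z b]; exact hll b z
        gcongr
        · exact hx b hb
        · calc _ ≤ ‖l b‖ ^ 2 + ‖l b‖ * ‖l z‖ + ‖l z‖ ^ 2 := by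
                refine (norm_add_le _ _).trans ?_
                rw [norm_pow]
                gcongr
                refine (norm_add_le _ _).trans ?_
                rw [norm_pow, norm_mul]
            _ ≤ (L * ‖z‖) ^ 2 + (L * ‖z‖) * (L * ‖z‖) + (L * ‖z‖) ^ 2 := by gcongr
            _ = _ := by ring
    calc _ ≤ L * ‖z‖ * ((η * ‖z‖ ^ 2 * ‖z - b‖ +
        (η / m ^ 3) * ((L * ‖z - b‖) * (3 * (L * ‖z‖) ^ 2))) / (m * ‖z‖) ^ 3) := by
          gcongr
          exact (hRL _ _ ((hx z hz).trans hησ) ((hx b hb).trans hησ)).trans h1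
      _ = _ := by field_simp
  calc _ = ‖(l z - l b) * R (H z / l z ^ 3) + l b * (R (H z / l z ^ 3) - R (H b / l b ^ 3))‖ := by
        congr 1; ring
    _ ≤ L * ‖z - b‖ * (η / m ^ 3) + L * ‖b‖ * ‖R (H z / l z ^ 3) - R (H b / l b ^ 3)‖ := by
        refine (norm_add_le _ _).trans ?_
        rw [norm_mul, norm_mul]
        have := hR z hz
        have h2 := hll z b
        have h3 := hlL b
        gcongr
    _ ≤ L * ‖z - b‖ * (η / m ^ 3) + (L / m ^ 3 + 3 * L ^ 4 / m ^ 6) * η * ‖z - b‖ := by gcongr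
    _ = _ := by ring

lemma s10_E (t : ℝ) (ht : 1 < t) (U : Set ℂ) (hU : IsOpen U) (h0U : (0 : ℂ) ∈ U) (F : ℂ → ℂ)
    (hF : ContDiffOn ℝ (⊤ : ℕ∞) F U)
    (hders : ∀ k : ℕ, k ≤ 3 → iteratedFDerivWithin ℝ k F U 0 = 0) (δ : ℝ) (hδ : 0 < δ) :
    ∃ ρ > (0:ℝ), Metric.closedBall (0:ℂ) ρ ⊆ U ∧ ∃ E : ℂ → ℂ, E 0 = 0 ∧
      (∀ z ∈ Metric.closedBall (0:ℂ) ρ, ∀ b ∈ Metric.closedBall (0:ℂ) ρ,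
        ‖E z - E b‖ ≤ δ * ‖z - b‖) ∧
      ∀ z ∈ Metric.closedBall (0:ℂ) ρ,
        ((z + t * conj z) + E z) ^ 3 = (z + t * conj z) ^ 3 + 3 * t * F z := by
  obtain ⟨R, σ, hσ, hR0, hR3, hRL⟩ := s10_R
  set m := t - 1 with hm
  set L := 1 + t with hLd
  have hm0 : 0 < m := by linarith
  have hL0 : 0 < L := by linarith
  set C := 2 * L / m ^ 3 + 3 * L ^ 4 / m ^ 6 with hC
  have hC0 : 0 < C := by positivity
  set η := min (σ * m ^ 3) (δ / C) with hηd
  have hη : 0 < η := lt_min (by positivity) (by positivity)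
  have ht0 : 0 < t := by linarith
  have hF0 := s10_F_zero U F hders
  obtain ⟨ρ, hρ, hρU, hFe⟩ := s10_F_est U hU h0U F hF hders (η / (3 * t)) (by positivity)
  have hlm : ∀ z : ℂ, m * ‖z‖ ≤ ‖z + t * conj z‖ := fun z => by
    have := norm_sub_le (z + t * conj z) z
    rw [add_sub_cancel_left, norm_mul, Complex.norm_conj, Complex.norm_real,
      Real.norm_of_nonneg ht0.le] at this
    rw [hm]; linarith
  have hlL : ∀ z : ℂ, ‖z + t * conj z‖ ≤ L * ‖z‖ := fun z => by
    refine (norm_add_le _ _).trans ?_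
    rw [norm_mul, Complex.norm_conj, Complex.norm_real, Real.norm_of_nonneg ht0.le, hLd]
    linarith
  have aux := s10_E_aux (fun z => z + t * conj z) (fun z => 3 * t * F z) R σ m L η ρ hm0 hL0.le
    hη.le (by rw [div_le_iff₀ (by positivity)]; exact min_le_left _ _) hR0 hRL hlm hlL
    (fun z b => by
      have := hlL (z - b)
      rw [map_sub] at this
      convert this using 2
      ring) (by simp [hF0])
    (fun s hs z b hz hb => by
      have := hFe s hs z (by simpa using hz) b (by simpa using hb)
      rw [← mul_sub, norm_mul, norm_mul, Complex.norm_real, Real.norm_of_nonneg ht0.le]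
      calc _ ≤ ‖(3:ℂ)‖ * t * (η / (3 * t) * s ^ 2 * ‖z - b‖) := by gcongr
        _ = _ := by simp; field_simp)
  have hCη : C * η ≤ δ := by
    have : η ≤ δ / C := min_le_right _ _
    rw [le_div_iff₀ hC0] at this
    linarith
  refine ⟨ρ, hρ, hρU, fun z => (z + t * conj z) * R (3 * t * F z / (z + t * conj z) ^ 3),
    by simp, fun z hz b hb => ?_, fun z hz => ?_⟩
  · have hz' : ‖z‖ ≤ ρ := by simpa using hz
    have hb' : ‖b‖ ≤ ρ := by simpa using hb
    rcases le_total ‖b‖ ‖z‖ with h | h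
    · refine (aux z b hz' h).trans ?_
      gcongr
    · rw [norm_sub_rev, norm_sub_rev z b]
      refine (aux b z hb' h).trans ?_
      gcongr
  · rcases eq_or_ne z 0 with rfl | hz0
    · simp [hF0]
    have hp : 0 < ‖z‖ := norm_pos_iff.2 hz0
    have h0 : z + t * conj z ≠ 0 := norm_pos_iff.1 (lt_of_lt_of_le (by positivity) (hlm z))
    have := hR3 (3 * t * F z / (z + t * conj z) ^ 3)
    calc _ = (z + t * conj z) ^ 3 * (1 + R (3 * t * F z / (z + t * conj z) ^ 3)) ^ 3 := by ring
      _ = _ := by rw [this]; field_simp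


/-- The primitive cube root of unity. -/
noncomputable def s10om : ℂ := ⟨-1/2, Real.sqrt 3 / 2⟩

lemma s10_sq3 : Real.sqrt 3 * Real.sqrt 3 = 3 := Real.mul_self_sqrt (by norm_num)

lemma s10om_rel : 1 + s10om + s10om ^ 2 = 0 := by
  have := s10_sq3
  apply Complex.ext <;> simp [s10om, pow_two] <;> linarith

lemma s10om_conj : conj s10om = s10om ^ 2 := by
  have := s10_sq3
  apply Complex.ext <;> simp [s10om, pow_two] <;> linarith

lemma s10om_norm : ‖s10om‖ = 1 := by
  have h3 := s10_sq3
  have h : ‖s10om‖ ^ 2 = 1 := by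
    rw [← Complex.normSq_eq_norm_sq, Complex.normSq_apply]
    simp [s10om]; linarith
  nlinarith [norm_nonneg s10om]

/-- The quadratic polynomial. -/
noncomputable def s10Q (α β z ζ : ℂ) : ℂ := z * ζ + α * z ^ 2 + β * ζ ^ 2

lemma s10_form (A B D : ℝ) (hA : 0 < A) (hD : 0 < D) (h : B ^ 2 < 4 * A * D) :
    ∃ c > 0, ∀ a b : ℝ, c * (a ^ 2 + b ^ 2) ≤ A * a ^ 2 + B * (a * b) + D * b ^ 2 := by
  have hAD : 0 < A + D := by linarith
  set c := (4 * A * D - B ^ 2) / (4 * (A + D)) with hc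
  have hc0 : 0 < c := div_pos (by linarith) (by linarith)
  have e : c * (4 * (A + D)) = 4 * A * D - B ^ 2 := by rw [hc]; field_simp
  have hcA : c < A := by
    by_contra hh
    push Not at hh
    nlinarith [sq_nonneg B, mul_pos hA hA]
  refine ⟨c, hc0, fun a b => ?_⟩
  have h1 : 0 ≤ (A - c) * (A * a ^ 2 + B * (a * b) + D * b ^ 2 - c * (a ^ 2 + b ^ 2)) := by
    have : (A - c) * (A * a ^ 2 + B * (a * b) + D * b ^ 2 - c * (a ^ 2 + b ^ 2)) =
      ((A - c) * a + B / 2 * b) ^ 2 + c ^ 2 * b ^ 2 := by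
      linear_combination (-b^2/4) * e
    rw [this]; positivity
  have := nonneg_of_mul_nonneg_right h1 (by linarith)
  linarith

lemma s10_Q_sym (t : ℝ) (α β : ℝ) (h : ℂ) (c : ℝ)
    (i1 : ∀ z : ℂ, (conj (h^2) * s10Q α β z (z + t * conj z)).im ≤ - c * ‖z‖ ^ 2)
    (i3 : ∀ z : ℂ, c * ‖z‖ ^ 2 ≤ (conj (h^2) * s10Q α β z (s10om * (z + t * conj z))).im) :
    ∀ z : ℂ, (conj (h^2) * s10Q α β z (z + t * conj z)).im ≤ - c * ‖z‖ ^ 2 ∧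
      c * ‖z‖ ^ 2 ≤ (h^2 * s10Q α β z (z + t * conj z)).im ∧
      c * ‖z‖ ^ 2 ≤ (conj (h^2) * s10Q α β z (s10om * (z + t * conj z))).im ∧
      (h^2 * s10Q α β z (s10om ^ 2 * (z + t * conj z))).im ≤ - c * ‖z‖ ^ 2 := by
  intro z
  have e1 : conj (h^2 * s10Q α β z (z + t * conj z)) =
      conj (h^2) * s10Q α β (conj z) (conj z + t * conj (conj z)) := by
    simp [s10Q]
  have e2 : conj (h^2 * s10Q α β z (s10om ^ 2 * (z + t * conj z))) =
      conj (h^2) * s10Q α β (conj z) (s10om * (conj z + t * conj (conj z))) := by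
    rw [← s10om_conj]
    simp [s10Q]
  have j1 := i1 (conj z)
  have j3 := i3 (conj z)
  rw [← e1, Complex.conj_im, Complex.norm_conj] at j1
  rw [← e2, Complex.conj_im, Complex.norm_conj] at j3
  exact ⟨i1 z, by linarith, i3 z, by linarith⟩

lemma s10_Q1 (t : ℝ) (ht0 : 0 < t) (ht : 4 / 3 < t ^ 2) : ∃ (α β : ℝ) (h : ℂ) (c : ℝ), 0 < c ∧
    ‖h‖ = 1 ∧ 0 < h.re ∧ 0 < h.im ∧ 0 < (h^2).re ∧ ∀ z : ℂ,
      (conj (h^2) * s10Q α β z (z + t * conj z)).im ≤ - c * ‖z‖ ^ 2 ∧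
      c * ‖z‖ ^ 2 ≤ (h^2 * s10Q α β z (z + t * conj z)).im ∧
      c * ‖z‖ ^ 2 ≤ (conj (h^2) * s10Q α β z (s10om * (z + t * conj z))).im ∧
      (h^2 * s10Q α β z (s10om ^ 2 * (z + t * conj z))).im ≤ - c * ‖z‖ ^ 2 := by
  have h3 := s10_sq3
  have hs : 0 < Real.sqrt 3 := by positivity
  set s := Real.sqrt 3 with hsd
  have hc : 0 < s / 2 * t - 1 := by
    by_contra hh
    push Not at hh
    have : (s * t) ^ 2 ≤ 4 := by nlinarith [mul_pos hs ht0]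
    nlinarith
  have hh2 : (⟨s/2, 1/2⟩ : ℂ) ^ 2 = ⟨1/2, s/2⟩ := by
    apply Complex.ext <;> simp [pow_two] <;> linarith
  have hn : ‖(⟨s/2, 1/2⟩ : ℂ)‖ = 1 := by
    have h : ‖(⟨s/2, 1/2⟩ : ℂ)‖ ^ 2 = 1 := by
      rw [← Complex.normSq_eq_norm_sq, Complex.normSq_apply]
      simp; linarith
    nlinarith [norm_nonneg (⟨s/2, 1/2⟩ : ℂ)]
  refine ⟨0, 0, ⟨s/2, 1/2⟩, s / 2 * t - 1, hc, hn, by simpa using hs, by norm_num,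
    by rw [hh2]; norm_num, ?_⟩
  have hng : ‖(⟨1/2, s/2⟩ : ℂ)‖ = 1 := by rw [← hh2, norm_pow, hn, one_pow]
  apply s10_Q_sym
  · intro z
    rw [hh2]
    have h1 : (conj (⟨1/2, s/2⟩ : ℂ) * z ^ 2).im ≤ ‖z‖ ^ 2 := by
      refine (Complex.im_le_norm _).trans ?_
      rw [norm_mul, Complex.norm_conj, hng, norm_pow, one_mul]
    have e : (conj (⟨1/2, s/2⟩ : ℂ) * s10Q (0:ℝ) (0:ℝ) z (z + t * conj z)).im =
        - (s / 2 * t) * ‖z‖ ^ 2 + (conj (⟨1/2, s/2⟩ : ℂ) * z ^ 2).im := by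
      rw [← Complex.normSq_eq_norm_sq, Complex.normSq_apply]
      simp [s10Q, pow_two]; ring
    rw [e]; linarith
  · intro z
    rw [hh2]
    have h1 : -((⟨1/2, s/2⟩ : ℂ) * z ^ 2).im ≤ ‖z‖ ^ 2 := by
      refine (neg_le_abs _).trans ((Complex.abs_im_le_norm _).trans ?_)
      rw [norm_mul, hng, norm_pow, one_mul]
    have e : (conj (⟨1/2, s/2⟩ : ℂ) * s10Q (0:ℝ) (0:ℝ) z (s10om * (z + t * conj z))).im =
        (s / 2 * t) * ‖z‖ ^ 2 + ((⟨1/2, s/2⟩ : ℂ) * z ^ 2).im := by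
      have e0 : conj (⟨1/2, s/2⟩ : ℂ) * s10om = ⟨1/2, s/2⟩ := by
        apply Complex.ext <;> simp [s10om, ← hsd] <;> linarith
      have e1 : conj (⟨1/2, s/2⟩ : ℂ) * s10Q (0:ℝ) (0:ℝ) z (s10om * (z + t * conj z)) =
          (conj (⟨1/2, s/2⟩ : ℂ) * s10om) * (z * (z + t * conj z)) := by
        simp [s10Q]; ring
      rw [e1, e0, ← Complex.normSq_eq_norm_sq, Complex.normSq_apply]
      simp [pow_two]; ring
    rw [e]; linarith

lemma s10_Q2 (t : ℝ) (ht1 : 1 < t) (ht : 4 * t ^ 4 - 15 * t ^ 2 + 12 < 0) :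
    ∃ (α β : ℝ) (h : ℂ) (c : ℝ), 0 < c ∧
    ‖h‖ = 1 ∧ 0 < h.re ∧ 0 < h.im ∧ 0 < (h^2).re ∧ ∀ z : ℂ,
      (conj (h^2) * s10Q α β z (z + t * conj z)).im ≤ - c * ‖z‖ ^ 2 ∧
      c * ‖z‖ ^ 2 ≤ (h^2 * s10Q α β z (z + t * conj z)).im ∧
      c * ‖z‖ ^ 2 ≤ (conj (h^2) * s10Q α β z (s10om * (z + t * conj z))).im ∧
      (h^2 * s10Q α β z (s10om ^ 2 * (z + t * conj z))).im ≤ - c * ‖z‖ ^ 2 := by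
  have h3 := s10_sq3
  have hs : 0 < Real.sqrt 3 := by positivity
  set s := Real.sqrt 3 with hsd
  have hs2 : s < 2 := by nlinarith
  have h32 : s ^ 2 = 3 := by rw [pow_two]; exact h3
  obtain ⟨c0, hc0, hform⟩ := s10_form (3 * (t + 1) / 2) (-(s * (3 - 2 * t ^ 2)))
    (3 * (t - 1) / 2) (by linarith) (by linarith) (by
      have : (-(s * (3 - 2 * t ^ 2))) ^ 2 = 3 * (3 - 2 * t ^ 2) ^ 2 := by
        rw [neg_sq, mul_pow, h32]
      rw [this]; nlinarith)
  set P := t ^ 2 + (1 + t) ^ 2 with hP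
  have hP0 : 0 < P := by positivity
  set ε := c0 / (2 * P) with hε
  have hε0 : 0 < ε := by positivity
  have hεP : ε * P = c0 / 2 := by rw [hε]; field_simp
  set u := Real.sqrt ((2 + s) / 4) with hu
  set v := Real.sqrt ((2 - s) / 4) with hv
  have hu2 : u * u = (2 + s) / 4 := Real.mul_self_sqrt (by linarith)
  have hv2 : v * v = (2 - s) / 4 := Real.mul_self_sqrt (by linarith)
  have hu0 : 0 < u := Real.sqrt_pos.2 (by linarith)
  have hv0 : 0 < v := Real.sqrt_pos.2 (by linarith)
  have huv : u * v = 1 / 4 := by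
    have : (u * v) ^ 2 = (1/4) ^ 2 := by
      calc (u * v) ^ 2 = (u * u) * (v * v) := by ring
        _ = _ := by rw [hu2, hv2]; nlinarith
    exact (pow_left_inj₀ (by positivity) (by norm_num) (by norm_num)).1 this
  have hh2 : (⟨u, v⟩ : ℂ) ^ 2 = ⟨s/2, 1/2⟩ := by
    apply Complex.ext <;> simp [pow_two] <;> linarith
  have hn : ‖(⟨u, v⟩ : ℂ)‖ = 1 := by
    have h : ‖(⟨u, v⟩ : ℂ)‖ ^ 2 = 1 := by
      rw [← Complex.normSq_eq_norm_sq, Complex.normSq_apply]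
      simp; linarith
    nlinarith [norm_nonneg (⟨u, v⟩ : ℂ)]
  have hng : ‖(⟨s/2, 1/2⟩ : ℂ)‖ = 1 := by rw [← hh2, norm_pow, hn, one_pow]
  have hts : 0 < t - s / 2 := by linarith
  refine ⟨1 - t ^ 2 + ε * (t ^ 2 - 1 / 2), 1 - ε, ⟨u, v⟩, min (c0 / 2) (ε * (t - s / 2)),
    lt_min (by positivity) (by positivity), hn, hu0, hv0,
    by rw [hh2]; simpa using hs, ?_⟩
  apply s10_Q_sym
  · intro z
    rw [hh2]
    set A := (conj (⟨s/2, 1/2⟩ : ℂ) * s10Q ((1 - t ^ 2 : ℝ) : ℂ) ((1:ℝ):ℂ) z (z + t * conj z)).im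
      with hA
    set B := (conj (⟨s/2, 1/2⟩ : ℂ) *
      (((t ^ 2 - 1 / 2 : ℝ) : ℂ) * z ^ 2 - (z + t * conj z) ^ 2)).im with hB
    have e : (conj (⟨s/2, 1/2⟩ : ℂ) * s10Q ((1 - t ^ 2 + ε * (t ^ 2 - 1 / 2) : ℝ) : ℂ)
        ((1 - ε : ℝ) : ℂ) z (z + t * conj z)).im = A + ε * B := by
      rw [hA, hB, ← Complex.im_ofReal_mul, ← Complex.add_im]
      congr 1
      simp only [s10Q]
      push_cast
      ring
    have e2 : A = - (3 * (t + 1) / 2 * z.re ^ 2 + -(s * (3 - 2 * t ^ 2)) * (z.re * z.im)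
        + 3 * (t - 1) / 2 * z.im ^ 2) := by
      rw [hA]
      simp [s10Q, pow_two]; ring
    have hB' : B ≤ P * ‖z‖ ^ 2 := by
      refine (Complex.im_le_norm _).trans ?_
      rw [norm_mul, Complex.norm_conj, hng, one_mul]
      refine (norm_sub_le _ _).trans ?_
      have h1 : ‖z + t * conj z‖ ≤ (1 + t) * ‖z‖ := by
        refine (norm_add_le _ _).trans ?_
        rw [norm_mul, Complex.norm_conj, Complex.norm_real, Real.norm_of_nonneg (by linarith)]
        linarith
      rw [norm_mul, norm_pow, norm_pow, Complex.norm_real,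
        Real.norm_of_nonneg (by nlinarith)]
      calc _ ≤ t ^ 2 * ‖z‖ ^ 2 + ((1 + t) * ‖z‖) ^ 2 := by gcongr; linarith
        _ = _ := by rw [hP]; ring
    have hf := hform z.re z.im
    have hnz : ‖z‖ ^ 2 = z.re ^ 2 + z.im ^ 2 := by
      rw [← Complex.normSq_eq_norm_sq, Complex.normSq_apply]; ring
    rw [← hnz] at hf
    have hεB : ε * B ≤ c0 / 2 * ‖z‖ ^ 2 := by
      rw [← hεP, mul_assoc]; gcongr
    have hm : min (c0 / 2) (ε * (t - s / 2)) * ‖z‖ ^ 2 ≤ c0 / 2 * ‖z‖ ^ 2 := by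
      gcongr; exact min_le_left _ _
    rw [e]
    linarith
  · intro z
    rw [hh2]
    have h1 : (s10om ^ 2 * z ^ 2).im ≤ ‖z‖ ^ 2 := by
      refine (Complex.im_le_norm _).trans ?_
      rw [norm_mul, norm_pow, norm_pow, s10om_norm, one_pow, one_mul]
    have e : (conj (⟨s/2, 1/2⟩ : ℂ) * s10Q ((1 - t ^ 2 + ε * (t ^ 2 - 1 / 2) : ℝ) : ℂ)
        ((1 - ε : ℝ) : ℂ) z (s10om * (z + t * conj z))).im =
        ε * (t * ‖z‖ ^ 2 - s / 2 * (s10om ^ 2 * z ^ 2).im) := by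
      rw [← Complex.normSq_eq_norm_sq, Complex.normSq_apply, ← s10om_conj]
      simp [s10Q, pow_two, s10om, ← hsd]
      have hs3 : s ^ 3 = 3 * s := by rw [pow_succ, h32]
      have hs4 : s ^ 4 = 9 := by
        calc s ^ 4 = (s ^ 2) ^ 2 := by ring
          _ = 9 := by rw [h32]; norm_num
      ring_nf
      simp only [h32, hs3, hs4]
      ring
    have hm : min (c0 / 2) (ε * (t - s / 2)) * ‖z‖ ^ 2 ≤ ε * (t - s / 2) * ‖z‖ ^ 2 := by
      gcongr; exact min_le_right _ _
    rw [e]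
    have : ε * (t - s / 2) * ‖z‖ ^ 2 ≤ ε * (t * ‖z‖ ^ 2 - s / 2 * (s10om ^ 2 * z ^ 2).im) := by
      rw [mul_assoc]
      gcongr
      nlinarith
    linarith


lemma s10_pert (t β' α' δ c : ℝ) (ht : 1 < t) (hδ0 : 0 < δ) (hδ1 : δ ≤ 1)
    (hδ : δ * (1 + |β'| * (2 * (1 + t) + 1)) ≤ c / 2)
    (g κ z e : ℂ) (hg : ‖g‖ = 1) (hκ : ‖κ‖ = 1) (he : ‖e‖ ≤ δ * ‖z‖) :
    |(g * s10Q α' β' z (κ * (z + t * conj z + e))).im -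
      (g * s10Q α' β' z (κ * (z + t * conj z))).im| ≤ c / 2 * ‖z‖ ^ 2 := by
  rw [← Complex.sub_im]
  refine (Complex.abs_im_le_norm _).trans ?_
  rw [← mul_sub, norm_mul, hg, one_mul]
  have h1 : ‖z + t * conj z‖ ≤ (1 + t) * ‖z‖ := by
    refine (norm_add_le _ _).trans ?_
    rw [norm_mul, Complex.norm_conj, Complex.norm_real, Real.norm_of_nonneg (by linarith)]
    linarith
  have e1 : s10Q α' β' z (κ * (z + t * conj z + e)) - s10Q α' β' z (κ * (z + t * conj z)) =
      z * κ * e + β' * κ ^ 2 * (e * (2 * (z + t * conj z) + e)) := by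
    simp only [s10Q]; ring
  have he1 : ‖e‖ ≤ ‖z‖ := he.trans (by nlinarith [norm_nonneg z])
  have h2 : ‖2 * (z + t * conj z) + e‖ ≤ (2 * (1 + t) + 1) * ‖z‖ := by
    refine (norm_add_le _ _).trans ?_
    rw [norm_mul, Complex.norm_two]
    linarith
  rw [e1]
  calc _ ≤ ‖z‖ * (δ * ‖z‖) + |β'| * (δ * ‖z‖ * ((2 * (1 + t) + 1) * ‖z‖)) := by
        refine (norm_add_le _ _).trans ?_
        rw [norm_mul, norm_mul, norm_mul, norm_mul, norm_mul, norm_pow, hκ, mul_one, one_pow,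
          mul_one, Complex.norm_real, Real.norm_eq_abs]
        gcongr
    _ = δ * (1 + |β'| * (2 * (1 + t) + 1)) * ‖z‖ ^ 2 := by ring
    _ ≤ _ := by gcongr

lemma s10_t (t : ℝ) (ht : Real.sqrt (15 - Real.sqrt 33) / (2 * Real.sqrt 2) < t) :
    1 < t ∧ (4 / 3 < t ^ 2 ∨ 4 * t ^ 4 - 15 * t ^ 2 + 12 < 0) := by
  have h33 : Real.sqrt 33 * Real.sqrt 33 = 33 := Real.mul_self_sqrt (by norm_num)
  have h33p : 0 ≤ Real.sqrt 33 := Real.sqrt_nonneg _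
  set r := Real.sqrt 33 with hr
  have hr7 : r < 7 := by nlinarith
  have h2 : Real.sqrt 2 * Real.sqrt 2 = 2 := Real.mul_self_sqrt (by norm_num)
  have hq : Real.sqrt (15 - r) * Real.sqrt (15 - r) = 15 - r :=
    Real.mul_self_sqrt (by linarith)
  have hx0 : 0 ≤ Real.sqrt (15 - r) / (2 * Real.sqrt 2) := by positivity
  have hx2 : (Real.sqrt (15 - r) / (2 * Real.sqrt 2)) ^ 2 = (15 - r) / 8 := by
    rw [div_pow, mul_pow, pow_two, hq, pow_two (Real.sqrt 2), h2]; norm_num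
  have ht0 : 0 < t := lt_of_le_of_lt hx0 ht
  have htt : (15 - r) / 8 < t ^ 2 := by rw [← hx2]; gcongr
  have ht1 : 1 < t := by nlinarith
  refine ⟨ht1, ?_⟩
  by_cases h : 4 / 3 < t ^ 2
  · exact Or.inl h
  right
  push Not at h
  have : 0 < (8 * t ^ 2 - 15 + r) * (15 + r - 8 * t ^ 2) :=
    mul_pos (by linarith) (by nlinarith)
  nlinarith

lemma s10_main (t : ℝ) (ht : Real.sqrt (15 - Real.sqrt 33) / (2 * Real.sqrt 2) < t)
    (U : Set ℂ) (hU : IsOpen U) (h0U : (0 : ℂ) ∈ U) (F : ℂ → ℂ)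
    (hF : ContDiffOn ℝ (⊤ : ℕ∞) F U)
    (hders : ∀ k : ℕ, k ≤ 3 → iteratedFDerivWithin ℝ k F U 0 = 0) :
    ∃ r > (0 : ℝ), PolyConvex2 (Mset t U F ∩ eClosedBall r) := by
  obtain ⟨ht1, hcase⟩ := s10_t t ht
  have ht0 : 0 < t := by linarith
  obtain ⟨α, β, h, c, hc, hn, hre, him, hre2, hQ⟩ : ∃ (α β : ℝ) (h : ℂ) (c : ℝ), 0 < c ∧
    ‖h‖ = 1 ∧ 0 < h.re ∧ 0 < h.im ∧ 0 < (h^2).re ∧ ∀ z : ℂ,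
      (conj (h^2) * s10Q α β z (z + t * conj z)).im ≤ - c * ‖z‖ ^ 2 ∧
      c * ‖z‖ ^ 2 ≤ (h^2 * s10Q α β z (z + t * conj z)).im ∧
      c * ‖z‖ ^ 2 ≤ (conj (h^2) * s10Q α β z (s10om * (z + t * conj z))).im ∧
      (h^2 * s10Q α β z (s10om ^ 2 * (z + t * conj z))).im ≤ - c * ‖z‖ ^ 2 := by
    rcases hcase with h | h
    · exact s10_Q1 t ht0 h
    · exact s10_Q2 t ht1 h
  set Dd := 1 + |β| * (2 * (1 + t) + 1) with hDd
  have hDd0 : 0 < Dd := by positivity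
  set δ := min 1 (c / (2 * Dd)) with hδd
  have hδ0 : 0 < δ := lt_min one_pos (by positivity)
  have hδ1 : δ ≤ 1 := min_le_left _ _
  have hδc : δ * Dd ≤ c / 2 := by
    have : δ ≤ c / (2 * Dd) := min_le_right _ _
    rw [le_div_iff₀ (by positivity)] at this
    linarith
  obtain ⟨ρ, hρ, hρU, E, hE0, hEL, hE3⟩ := s10_E t ht1 U hU h0U F hF hders δ hδ0
  have hgn : ‖h ^ 2‖ = 1 := by rw [norm_pow, hn, one_pow]
  have hgcn : ‖conj (h ^ 2)‖ = 1 := by rw [Complex.norm_conj, hgn]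
  have hEn : ∀ z ∈ Metric.closedBall (0:ℂ) ρ, ‖E z‖ ≤ δ * ‖z‖ := fun z hz => by
    have := hEL z hz 0 (by simp [hρ.le])
    simpa [hE0] using this
  have hEc : ContinuousOn E (Metric.closedBall 0 ρ) := by
    have : LipschitzOnWith δ.toNNReal E (Metric.closedBall 0 ρ) := by
      refine LipschitzOnWith.of_dist_le_mul fun z hz b hb => ?_
      rw [dist_eq_norm, dist_eq_norm, Real.coe_toNNReal _ hδ0.le]
      exact hEL z hz b hb
    exact this.continuousOn
  have hconj : Continuous (fun z : ℂ => conj z) := Complex.continuous_conj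
  -- values of Q
  have hQ' : ∀ z ∈ Metric.closedBall (0:ℂ) ρ,
      (conj (h^2) * s10Q α β z (z + t * conj z + E z)).im ≤ - (c / 2) * ‖z‖ ^ 2 ∧
      (c / 2) * ‖z‖ ^ 2 ≤ (h^2 * s10Q α β z (z + t * conj z + E z)).im ∧
      (c / 2) * ‖z‖ ^ 2 ≤ (conj (h^2) * s10Q α β z (s10om * (z + t * conj z + E z))).im ∧
      (h^2 * s10Q α β z (s10om ^ 2 * (z + t * conj z + E z))).im ≤ - (c / 2) * ‖z‖ ^ 2 := by
    intro z hz
    obtain ⟨q1, q2, q3, q4⟩ := hQ z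
    have p1 := s10_pert t β α δ c ht1 hδ0 hδ1 hδc (conj (h^2)) 1 z (E z) hgcn norm_one (hEn z hz)
    have p2 := s10_pert t β α δ c ht1 hδ0 hδ1 hδc (h^2) 1 z (E z) hgn norm_one (hEn z hz)
    have p3 := s10_pert t β α δ c ht1 hδ0 hδ1 hδc (conj (h^2)) s10om z (E z) hgcn s10om_norm
      (hEn z hz)
    have p4 := s10_pert t β α δ c ht1 hδ0 hδ1 hδc (h^2) (s10om ^ 2) z (E z) hgn
      (by rw [norm_pow, s10om_norm, one_pow]) (hEn z hz)
    rw [one_mul, one_mul] at p1 p2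
    rw [abs_le] at p1 p2 p3 p4
    refine ⟨?_, ?_, ?_, ?_⟩ <;> linarith [p1.1, p1.2, p2.1, p2.2, p3.1, p3.2, p4.1, p4.2]
  refine ⟨ρ / 2, by positivity, ?_⟩
  set K := Mset t U F ∩ eClosedBall (ρ / 2) with hK
  set f : ℂ → ℂ := fun z => z ^ 2 * conj z + (t : ℂ) * z * (conj z) ^ 2
      + ((t : ℂ) ^ 2 / 3) * (conj z) ^ 3 + F z with hf
  have hKz : ∀ p ∈ K, ‖p.1‖ ≤ ρ / 2 := by
    rintro p ⟨-, hp⟩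
    have hp' : ‖p.1‖ ^ 2 + ‖p.2‖ ^ 2 ≤ (ρ / 2) ^ 2 := hp
    exact le_of_sq_le_sq (by nlinarith [sq_nonneg ‖p.2‖]) (by positivity)
  have hKρ : ∀ p ∈ K, p.1 ∈ Metric.closedBall (0:ℂ) ρ := fun p hp => by
    have := hKz p hp
    simp; linarith
  have hKw : ∀ p ∈ K, p.2 = f p.1 := by
    rintro p ⟨⟨z, -, rfl⟩, -⟩
    rfl
  have hfc : ContinuousOn f (Metric.closedBall 0 ρ) := by
    refine ContinuousOn.add (Continuous.continuousOn (by fun_prop)) (hF.continuousOn.mono hρU)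
  have hKeq : K = (fun z => (z, f z)) '' (Metric.closedBall (0:ℂ) ρ ∩
      (fun z => ‖z‖ ^ 2 + ‖f z‖ ^ 2) ⁻¹' Set.Iic ((ρ / 2) ^ 2)) := by
    ext p
    constructor
    · intro hp
      refine ⟨p.1, ⟨hKρ p hp, ?_⟩, ?_⟩
      · have h2 : ‖p.1‖ ^ 2 + ‖p.2‖ ^ 2 ≤ (ρ / 2) ^ 2 := hp.2
        rw [hKw p hp] at h2
        exact h2
      · exact Prod.ext rfl (hKw p hp).symm
    · rintro ⟨z, ⟨hz, hz2⟩, rfl⟩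
      exact ⟨⟨z, hρU hz, rfl⟩, hz2⟩
  have hKc : IsCompact K := by
    rw [hKeq]
    have hcl : IsClosed (Metric.closedBall (0:ℂ) ρ ∩
      (fun z => ‖z‖ ^ 2 + ‖f z‖ ^ 2) ⁻¹' Set.Iic ((ρ / 2) ^ 2)) :=
      ContinuousOn.preimage_isClosed_of_isClosed
        ((continuous_norm.pow 2).continuousOn.add (hfc.norm.pow 2)) Metric.isClosed_closedBall
        isClosed_Iic
    have hcp := (isCompact_closedBall (0:ℂ) ρ).of_isClosed_subset hcl Set.inter_subset_left
    exact hcp.image_of_continuousOn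
      (continuousOn_id.prodMk (hfc.mono Set.inter_subset_left))
  haveI : CompactSpace K := isCompact_iff_compactSpace.1 hKc
  have hζc : ContinuousOn (fun z : ℂ => z + t * conj z + E z) (Metric.closedBall 0 ρ) :=
    (Continuous.continuousOn (by fun_prop)).add hEc
  let ζ : C(K, ℂ) := ⟨fun p => p.1.1 + t * conj p.1.1 + E p.1.1,
    hζc.comp_continuous (f := fun p : K => p.1.1) (by fun_prop) (fun p => hKρ p.1 p.2)⟩
  have hζa : ∀ p : K, ζ p = p.1.1 + t * conj p.1.1 + E p.1.1 := fun p => rfl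
  have hζz : ∀ p : K, p.1.1 = 0 → ζ p = 0 := fun p hp => by
    rw [hζa, hp]; simp [hE0]
  have hζA : ζ ∈ s10A K := by
    have hpos : ∀ p : K, p.1.1 ≠ 0 → 0 < c / 2 * ‖p.1.1‖ ^ 2 := fun p hp => by
      have := norm_pos_iff.2 hp
      positivity
    refine s10_core t ζ ?_ s10om s10om_rel α β h hn hre him hre2
      (Real.sqrt ((2 + t) ^ 2 / (c / 2))) (Real.sqrt_nonneg _) ?_ ?_ ?_ ?_
    · intro p
      rw [hζa, hE3 _ (hKρ p.1 p.2), hKw p.1 p.2]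
      simp only [hf]
      ring
    · intro p
      by_cases hp : p.1.1 = 0
      · left; rw [hζz p hp, hp]; ring
      · right
        have := hQ' _ (hKρ p.1 p.2)
        have h1 := hpos p hp
        exact ⟨lt_of_le_of_lt this.1 (by linarith), lt_of_lt_of_le h1 this.2.1⟩
    · intro p
      have hq := hQ' _ (hKρ p.1 p.2)
      have h1 : ‖ζ p‖ ≤ (2 + t) * ‖p.1.1‖ := by
        rw [hζa]
        have h2 := hEn _ (hKρ p.1 p.2)
        have h3 := norm_add_le (p.1.1 + t * conj p.1.1) (E p.1.1)
        have h4 := norm_add_le (p.1.1) (t * conj p.1.1)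
        rw [norm_mul, Complex.norm_conj, Complex.norm_real, Real.norm_of_nonneg ht0.le] at h4
        nlinarith [norm_nonneg p.1.1]
      have h5 : c / 2 * ‖p.1.1‖ ^ 2 ≤ ‖p.1.1 * ζ p + α * p.1.1 ^ 2 + β * ζ p ^ 2‖ := by
        refine hq.2.1.trans ((Complex.im_le_norm _).trans ?_)
        rw [norm_mul, hgn, one_mul]
        exact le_rfl
      rw [Real.sq_sqrt (by positivity)]
      calc ‖ζ p‖ ^ 2 ≤ ((2 + t) * ‖p.1.1‖) ^ 2 := by gcongr
        _ = (2 + t) ^ 2 / (c / 2) * (c / 2 * ‖p.1.1‖ ^ 2) := by field_simp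
        _ ≤ _ := by gcongr
    · intro p
      by_cases hp : p.1.1 = 0
      · left; rw [hζz p hp, hp]; ring
      · right
        exact lt_of_lt_of_le (hpos p hp) (hQ' _ (hKρ p.1 p.2)).2.2.1
    · intro p
      by_cases hp : p.1.1 = 0
      · left; rw [hζz p hp, hp]; ring
      · right
        have h1 := hpos p hp
        exact lt_of_le_of_lt (hQ' _ (hKρ p.1 p.2)).2.2.2 (by linarith)
  apply s10_final K hKc
  · intro p hp q hq hpq
    exact Prod.ext hpq (by rw [hKw p hp, hKw q hq, hpq])
  refine s10_wermer (s10A K) (s10A_closed K) (s10z K) (ζ - s10z K) (star (s10z K)) (s10z_mem K)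
    (sub_mem hζA (s10z_mem K)) ρ (t - δ) (by linarith) ?_ (fun z => t * conj z + E z) ?_ ?_ ?_ ?_
  · intro p
    have := hKz p.1 p.2
    change ‖p.1.1‖ < ρ
    linarith
  · exact (Continuous.continuousOn (by fun_prop)).add hEc
  · intro p
    change p.1.1 + t * conj p.1.1 + E p.1.1 - p.1.1 = t * conj p.1.1 + E p.1.1
    ring
  · intro a ha b hb
    have e : (a - b) * ((t * conj a + E a) - (t * conj b + E b)) =
        ((t * ‖a - b‖ ^ 2 : ℝ) : ℂ) + (a - b) * (E a - E b) := by
      have : (a - b) * conj (a - b) = ((‖a - b‖ ^ 2 : ℝ) : ℂ) := by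
        rw [Complex.mul_conj, Complex.normSq_eq_norm_sq]
      rw [map_sub] at this
      push_cast at this ⊢
      linear_combination (t : ℂ) * this
    simp only [e, Complex.add_re, Complex.ofReal_re]
    have h1 : -((a - b) * (E a - E b)).re ≤ ‖a - b‖ * (δ * ‖a - b‖) := by
      refine (neg_le_abs _).trans ((Complex.abs_re_le_norm _).trans ?_)
      rw [norm_mul]
      have := hEL a ha b hb
      gcongr
    nlinarith
  · intro p
    rfl


/-- for `t > √(15 − √33)/(2√2)` and any `C^∞`-smooth `F` on a neighbourhood
`U` of `0` whose derivatives of all orders `≤ 3` vanish at `0` (so `F(z) = o(|z|³)`),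
the surface `M_t` is locally polynomially convex at the origin. -/
theorem stmt_10 (t : ℝ) (ht : Real.sqrt (15 - Real.sqrt 33) / (2 * Real.sqrt 2) < t)
    (U : Set ℂ) (hU : IsOpen U) (h0U : (0 : ℂ) ∈ U) (F : ℂ → ℂ)
    (hF : ContDiffOn ℝ (⊤ : ℕ∞) F U)
    (hders : ∀ k : ℕ, k ≤ 3 → iteratedFDerivWithin ℝ k F U 0 = 0) :
    ∃ r > (0 : ℝ), PolyConvex2 (Mset t U F ∩ eClosedBall r) := by
  exact s10_main t ht U hU h0U F hF hders
end
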